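/- arXiv:1708.05322 — 11 statements merged into one kernel-verified Lean document; each statement's English description precedes it below -/
import Mathlib

section
/- An ideal I on ℕ is F_σ (as a subset of the Cantor space 2^ℕ, identifying subsets of ℕ with their characteristic functions) if and only if there exists a lower-semicontinuous submeasure φ on P(ℕ) such that I = Fin(φ) = {A ⊆ ℕ : φ(A) < ∞}. -/
/-- `x` is a subset of `y`, for subsets of `α` coded as characteristic functions. -/
def subB {α : Type} (x y : α → Bool) : Prop := ∀ a, x a = true → y a = true

/-- Union of two subsets of `α` coded as characteristic functions. -/
def unionB {α : Type} (x y : α → Bool) : α → Bool := fun a => x a || y a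

/-- The set coded by a characteristic function. -/
def suppB {α : Type} (x : α → Bool) : Set α := {a | x a = true}

/-- The coded set is infinite. -/
def InfiniteB {α : Type} (x : α → Bool) : Prop := (suppB x).Infinite

/-- `I` is an ideal: closed under subsets and (finite) unions. -/
def IsIdealB {α : Type} (I : Set (α → Bool)) : Prop :=
  (∀ x ∈ I, ∀ y, subB y x → y ∈ I) ∧ ∀ x ∈ I, ∀ y ∈ I, unionB x y ∈ I

/-- `I` is tall: every infinite set has an infinite subset in `I`. -/
def IsTallB {α : Type} (I : Set (α → Bool)) : Prop :=
  ∀ x, InfiniteB x → ∃ y ∈ I, InfiniteB y ∧ subB y x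

/-- `I` contains all finite sets. -/
def ContainsFinB {α : Type} (I : Set (α → Bool)) : Prop :=
  ∀ x : α → Bool, (suppB x).Finite → x ∈ I

/-- `I` is an `F_σ` subset of the Cantor space `α → Bool`. -/
def IsFsigmaB {α : Type} (I : Set (α → Bool)) : Prop :=
  ∃ F : ℕ → Set (α → Bool), (∀ n, IsClosed (F n)) ∧ I = ⋃ n, F n

/-- Katětov order: `I ≤_K J` via some `f` with `f⁻¹[A] ∈ J` for all `A ∈ I`. -/
def KatLE {α β : Type} (I : Set (α → Bool)) (J : Set (β → Bool)) : Prop :=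
  ∃ f : β → α, ∀ x ∈ I, (fun b => x (f b)) ∈ J


/-- `x` restricted to `{0, …, n-1}`. -/
def restrB (x : ℕ → Bool) (n : ℕ) : ℕ → Bool := fun k => x k && decide (k < n)

/-- `φ` is a lower-semicontinuous submeasure on `P(ℕ)`. -/
def IsLSCSubmeasure (φ : (ℕ → Bool) → ENNReal) : Prop :=
  φ (fun _ => false) = 0 ∧
  (∀ x y, subB x y → φ x ≤ φ y) ∧
  (∀ x y, φ (unionB x y) ≤ φ x + φ y) ∧
  ∀ x, Filter.Tendsto (fun n => φ (restrB x n)) Filter.atTop (nhds (φ x))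

/-- One step of the Mazur construction: all subsets of unions of two members of `D`. -/
def mazurStep (D : Set (ℕ → Bool)) : Set (ℕ → Bool) :=
  (fun p : (ℕ → Bool) × (ℕ → Bool) × (ℕ → Bool) => fun k => (p.1 k || p.2.1 k) && p.2.2 k) ''
    (D ×ˢ D ×ˢ Set.univ)

theorem mem_mazurStep {D : Set (ℕ → Bool)} {z : ℕ → Bool} :
    z ∈ mazurStep D ↔ ∃ x ∈ D, ∃ y ∈ D, subB z (unionB x y) := by
  constructor
  · rintro ⟨⟨x, y, w⟩, ⟨hx, hy, -⟩, rfl⟩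
    refine ⟨x, hx, y, hy, ?_⟩
    intro k hk
    simp only [Bool.and_eq_true] at hk
    exact hk.1
  · rintro ⟨x, hx, y, hy, h⟩
    refine ⟨(x, y, z), ⟨hx, hy, trivial⟩, ?_⟩
    funext k
    have := h k
    simp only [unionB] at this
    cases hz : z k <;> simp_all

theorem mazurStep_compact {D : Set (ℕ → Bool)} (hD : IsCompact D) : IsCompact (mazurStep D) := by
  apply (hD.prod (hD.prod isCompact_univ)).image
  refine continuous_pi fun k => ?_
  have h : Continuous (fun q : Bool × Bool × Bool => (q.1 || q.2.1) && q.2.2) :=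
    continuous_of_discreteTopology
  exact h.comp (f := fun p : (ℕ → Bool) × (ℕ → Bool) × (ℕ → Bool) => (p.1 k, p.2.1 k, p.2.2 k))
    (by fun_prop)

/-- The increasing sequence of closed hereditary sets. -/
def mazurC (F : ℕ → Set (ℕ → Bool)) : ℕ → Set (ℕ → Bool)
  | 0 => {fun _ => false}
  | n + 1 => mazurStep (mazurC F n ∪ F n)

theorem mazurC_compact {F : ℕ → Set (ℕ → Bool)} (hF : ∀ n, IsClosed (F n)) (n : ℕ) :
    IsCompact (mazurC F n) := by
  induction n with
  | zero => exact isCompact_singleton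
  | succ n ih => exact mazurStep_compact (ih.union (hF n).isCompact)

theorem mazurC_hered {F : ℕ → Set (ℕ → Bool)} (n : ℕ) {x y : ℕ → Bool} (hy : y ∈ mazurC F n)
    (h : subB x y) : x ∈ mazurC F n := by
  cases n with
  | zero =>
    have hy' : y = fun _ => false := hy
    subst hy'
    change x = fun _ => false
    funext k
    have := h k
    simpa using this
  | succ n =>
    obtain ⟨a, ha, b, hb, hab⟩ := mem_mazurStep.1 hy
    exact mem_mazurStep.2 ⟨a, ha, b, hb, fun k hk => hab k (h k hk)⟩

theorem mazurC_union {F : ℕ → Set (ℕ → Bool)} (n : ℕ) {x y : ℕ → Bool} (hx : x ∈ mazurC F n)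
    (hy : y ∈ mazurC F n) : unionB x y ∈ mazurC F (n + 1) :=
  mem_mazurStep.2 ⟨x, Or.inl hx, y, Or.inl hy, fun _ h => h⟩

theorem mazurC_mono (F : ℕ → Set (ℕ → Bool)) : Monotone (mazurC F) := by
  refine monotone_nat_of_le_succ fun n x hx => ?_
  exact mem_mazurStep.2 ⟨x, Or.inl hx, x, Or.inl hx, fun k h => by simp [unionB, h]⟩

theorem mazurC_F {F : ℕ → Set (ℕ → Bool)} (n : ℕ) : F n ⊆ mazurC F (n + 1) := fun x hx =>
  mem_mazurStep.2 ⟨x, Or.inr hx, x, Or.inr hx, fun k h => by simp [unionB, h]⟩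

theorem mazurC_sub {F : ℕ → Set (ℕ → Bool)} {I : Set (ℕ → Bool)} (hI : IsIdealB I)
    (h0 : (fun _ => false) ∈ I) (hF : ∀ n, F n ⊆ I) (n : ℕ) : mazurC F n ⊆ I := by
  induction n with
  | zero =>
    intro x hx
    have hx' : x = fun _ => false := hx
    rw [hx']; exact h0
  | succ n ih =>
    intro x hx
    obtain ⟨a, ha, b, hb, hab⟩ := mem_mazurStep.1 hx
    have hD := Set.union_subset ih (hF n)
    exact hI.1 _ (hI.2 a (hD ha) b (hD hb)) x hab

open Classical in
/-- The submeasure. -/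
noncomputable def mazurPhi (F : ℕ → Set (ℕ → Bool)) (x : ℕ → Bool) : ENNReal :=
  if h : ∃ n, x ∈ mazurC F n then (Nat.find h : ENNReal) else ⊤

theorem mazurPhi_le {F : ℕ → Set (ℕ → Bool)} {x : ℕ → Bool} {n : ℕ} (h : x ∈ mazurC F n) :
    mazurPhi F x ≤ n := by
  classical
  have h' : ∃ n, x ∈ mazurC F n := ⟨n, h⟩
  rw [mazurPhi, dif_pos h']
  exact_mod_cast Nat.find_min' h' h

theorem mazurPhi_exists {F : ℕ → Set (ℕ → Bool)} {x : ℕ → Bool} (h : mazurPhi F x < ⊤) :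
    ∃ n : ℕ, x ∈ mazurC F n ∧ mazurPhi F x = n := by
  classical
  by_cases h' : ∃ n, x ∈ mazurC F n
  · exact ⟨Nat.find h', Nat.find_spec h', by rw [mazurPhi, dif_pos h']⟩
  · rw [mazurPhi, dif_neg h'] at h
    exact absurd h (lt_irrefl _)

theorem mazurPhi_mono (F : ℕ → Set (ℕ → Bool)) {x y : ℕ → Bool} (h : subB x y) :
    mazurPhi F x ≤ mazurPhi F y := by
  rcases eq_or_lt_of_le (le_top (a := mazurPhi F y)) with hy | hy
  · rw [hy]; exact le_top
  · obtain ⟨n, hn, e⟩ := mazurPhi_exists hy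
    rw [e]; exact mazurPhi_le (mazurC_hered n hn h)

theorem mazurPhi_union (F : ℕ → Set (ℕ → Bool)) (x y : ℕ → Bool) :
    mazurPhi F (unionB x y) ≤ mazurPhi F x + mazurPhi F y := by
  rcases eq_or_lt_of_le (le_top (a := mazurPhi F x)) with hx | hx
  · simp [hx]
  rcases eq_or_lt_of_le (le_top (a := mazurPhi F y)) with hy | hy
  · simp [hy]
  obtain ⟨n, hn, en⟩ := mazurPhi_exists hx
  obtain ⟨m, hm, em⟩ := mazurPhi_exists hy
  rcases Nat.eq_zero_or_pos n with h | hn0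
  · subst h
    have hx' : x = fun _ => false := hn
    have : unionB x y = y := by funext k; simp [unionB, hx']
    rw [this]; exact le_add_self
  rcases Nat.eq_zero_or_pos m with h | hm0
  · subst h
    have hy' : y = fun _ => false := hm
    have : unionB x y = x := by funext k; simp [unionB, hy']
    rw [this]; exact le_self_add
  have h1 := mazurC_union (max n m) (mazurC_mono F (le_max_left n m) hn)
    (mazurC_mono F (le_max_right n m) hm)
  have h2 : max n m + 1 ≤ n + m := by omega
  rw [en, em, ← Nat.cast_add]
  exact mazurPhi_le (mazurC_mono F h2 h1)

theorem restrB_sub (x : ℕ → Bool) (n : ℕ) : subB (restrB x n) x := by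
  intro k hk
  simp only [restrB, Bool.and_eq_true] at hk
  exact hk.1

theorem restrB_mono (x : ℕ → Bool) {n m : ℕ} (h : n ≤ m) : subB (restrB x n) (restrB x m) := by
  intro k hk
  simp only [restrB, Bool.and_eq_true, decide_eq_true_eq] at hk ⊢
  exact ⟨hk.1, by omega⟩

theorem restrB_tendsto (x : ℕ → Bool) :
    Filter.Tendsto (fun n => restrB x n) Filter.atTop (nhds x) := by
  rw [tendsto_pi_nhds]
  intro k
  apply tendsto_const_nhds.congr'
  filter_upwards [Filter.eventually_gt_atTop k] with n hn
  simp [restrB, hn]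

theorem mazurPhi_tendsto {F : ℕ → Set (ℕ → Bool)} (hF : ∀ n, IsClosed (F n)) (x : ℕ → Bool) :
    Filter.Tendsto (fun n => mazurPhi F (restrB x n)) Filter.atTop (nhds (mazurPhi F x)) := by
  rw [tendsto_order]
  constructor
  · intro a ha
    by_contra hcon
    have hle : ∀ n, mazurPhi F (restrB x n) ≤ a := by
      intro n
      by_contra hn
      apply hcon
      filter_upwards [Filter.eventually_ge_atTop n] with m hm
      exact (not_le.1 hn).trans_le (mazurPhi_mono F (restrB_mono x hm))
    have hat : a ≠ ⊤ := (ha.trans_le le_top).ne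
    lift a to NNReal using hat
    have hmem : ∀ n, restrB x n ∈ mazurC F ⌊a⌋₊ := by
      intro n
      obtain ⟨k, hk, e⟩ := mazurPhi_exists ((hle n).trans_lt ENNReal.coe_lt_top)
      have h1 := hle n
      rw [e] at h1
      have h2 : (k : NNReal) ≤ a := by exact_mod_cast h1
      exact mazurC_mono F (Nat.le_floor h2) hk
    have hx : x ∈ mazurC F ⌊a⌋₊ :=
      (mazurC_compact hF _).isClosed.mem_of_tendsto (restrB_tendsto x)
        (Filter.Eventually.of_forall hmem)
    have h3 : ((⌊a⌋₊ : NNReal) : ENNReal) ≤ a := ENNReal.coe_le_coe.2 (Nat.floor_le (zero_le))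
    have h4 := mazurPhi_le hx
    exact absurd (ha.trans_le (h4.trans (by exact_mod_cast h3))) (lt_irrefl _)
  · intro a ha
    exact Filter.Eventually.of_forall fun n => (mazurPhi_mono F (restrB_sub x n)).trans_lt ha

theorem lsc_isClosed {φ : (ℕ → Bool) → ENNReal} (hφ : IsLSCSubmeasure φ) (c : ENNReal) :
    IsClosed {x | φ x ≤ c} := by
  obtain ⟨-, hmono, -, hlim⟩ := hφ
  have : {x | φ x ≤ c} = ⋂ m : ℕ, {x | φ (restrB x m) ≤ c} := by
    ext x
    simp only [Set.mem_iInter, Set.mem_setOf_eq]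
    exact ⟨fun h m => (hmono _ _ (restrB_sub x m)).trans h, fun h => le_of_tendsto' (hlim x) h⟩
  rw [this]
  refine isClosed_iInter fun m => ?_
  have hcont : IsLocallyConstant fun x : ℕ → Bool => restrB x m := by
    rw [IsLocallyConstant.iff_eventually_eq]
    intro x
    have : ∀ᶠ y in nhds x, ∀ k ∈ Finset.range m, y k = x k := by
      rw [Filter.eventually_all_finset]
      intro k _
      exact (continuous_apply k).continuousAt.eventually
        (show ∀ᶠ b in nhds (x k), b = x k by simp)
    filter_upwards [this] with y hy
    funext k
    by_cases hk : k < m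
    · simp [restrB, hy k (Finset.mem_range.2 hk)]
    · simp [restrB, hk]
  exact ⟨hcont {z | φ z ≤ c}ᶜ⟩

/-- Mazur's theorem: an ideal `I` on `ℕ` is `F_σ` iff `I = Fin(φ)` for some
lower-semicontinuous submeasure `φ`. -/
theorem fSigma_iff_finOfSubmeasure (I : Set (ℕ → Bool)) (hI : IsIdealB I)
    (h0 : (fun _ => false) ∈ I) :
    IsFsigmaB I ↔ ∃ φ : (ℕ → Bool) → ENNReal, IsLSCSubmeasure φ ∧ I = {x | φ x < ⊤} := by
  constructor
  · rintro ⟨F, hF, rfl⟩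
    have hsub := mazurC_sub hI h0 (fun n => Set.subset_iUnion F n)
    refine ⟨mazurPhi F, ⟨?_, fun x y h => mazurPhi_mono F h, mazurPhi_union F,
      mazurPhi_tendsto hF⟩, ?_⟩
    · have h : (fun _ => false) ∈ mazurC F 0 := rfl
      simpa using mazurPhi_le h
    · ext x
      constructor
      · intro hx
        obtain ⟨n, hn⟩ := Set.mem_iUnion.1 hx
        exact (mazurPhi_le (mazurC_F n hn)).trans_lt (ENNReal.natCast_lt_top _)
      · intro hx
        obtain ⟨n, hn, -⟩ := mazurPhi_exists hx
        exact hsub n hn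
  · rintro ⟨φ, hφ, rfl⟩
    refine ⟨fun n => {x | φ x ≤ n}, fun n => lsc_isClosed hφ n, ?_⟩
    ext x
    simp only [Set.mem_iUnion, Set.mem_setOf_eq]
    constructor
    · intro h
      obtain ⟨n, hn⟩ := ENNReal.exists_nat_gt h.ne
      exact ⟨n, hn.le⟩
    · rintro ⟨n, hn⟩
      exact hn.trans_lt (ENNReal.natCast_lt_top _)
end

section
/- For every F_σ ideal I on ℕ there exists a compact set K ⊆ 2^ℕ such that I = I_K and moreover for every infinite A ∈ I there is x ∈ K whose symmetric difference with A is finite. -/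
/-- `⟨K⟩ⁿ`: unions of `n+1` elements of `K`. -/
def angleB (K : Set (ℕ → Bool)) (n : ℕ) : Set (ℕ → Bool) :=
  {x | ∃ f : Fin (n + 1) → (ℕ → Bool), (∀ i, f i ∈ K) ∧ ∀ m, x m = true ↔ ∃ i, f i m = true}

/-- `↓M`: downward closure of `M`. -/
def downB (M : Set (ℕ → Bool)) : Set (ℕ → Bool) := {x | ∃ y ∈ M, subB x y}

/-- `I_K = ⋃ₙ ↓⟨K⟩ⁿ`. -/
def IdealOfCode (K : Set (ℕ → Bool)) : Set (ℕ → Bool) := ⋃ n, downB (angleB K n)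


theorem closed_aux (H : ℕ → Set (ℕ → Bool)) (hc : ∀ n, IsClosed (H n))
    (hz : ∀ n, ∀ y ∈ H n, ∀ m, m < n → y m = false) :
    IsClosed ({fun _ => false} ∪ ⋃ n, H n : Set (ℕ → Bool)) := by
  rw [← isOpen_compl_iff, isOpen_iff_forall_mem_open]
  intro y hy
  simp only [Set.mem_compl_iff, Set.mem_union, Set.mem_singleton_iff, Set.mem_iUnion,
    not_or, not_exists] at hy
  obtain ⟨hy0, hyH⟩ := hy
  obtain ⟨m, hm⟩ : ∃ m, y m = true := by
    by_contra h
    push Not at h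
    exact hy0 (funext fun m => by simpa using h m)
  refine ⟨{z | z m = true} ∩ ⋂ n ∈ Finset.range (m + 1), (H n)ᶜ, ?_, ?_, ?_⟩
  · rintro z ⟨hz1, hz2⟩ hzK
    simp only [Set.mem_ofPred_eq, Set.mem_iInter, Finset.mem_range, Set.mem_compl_iff] at hz1 hz2
    rcases hzK with h | h
    · rw [Set.mem_singleton_iff] at h
      simp [h] at hz1
    · obtain ⟨n, hn⟩ := Set.mem_iUnion.1 h
      by_cases hnm : n < m + 1
      · exact hz2 n hnm hn
      · have := hz n z hn m (by omega)
        simp [this] at hz1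
  · refine IsOpen.inter ?_ (isOpen_biInter_finset fun n _ => (hc n).isOpen_compl)
    exact (isOpen_discrete ({true} : Set Bool)).preimage
      (continuous_apply m : Continuous fun z : ℕ → Bool => z m)
  · refine ⟨hm, ?_⟩
    simp only [Set.mem_iInter]
    exact fun n _ => hyH n

/-- Every `F_σ` ideal `I` on `ℕ` is of the form `I_K` for some compact `K ⊆ 2^ℕ`, which can
moreover be chosen so that every infinite `A ∈ I` is almost equal to some element of `K`. -/
theorem exists_compact_code (I : Set (ℕ → Bool)) (hI : IsIdealB I) (hF : IsFsigmaB I) :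
    ∃ K : Set (ℕ → Bool), IsCompact K ∧ I = IdealOfCode K ∧
      ∀ x ∈ I, InfiniteB x → ∃ y ∈ K, {n | x n ≠ y n}.Finite := by
  obtain ⟨hdown, hun⟩ := hI
  obtain ⟨F, hFc, hIF⟩ := hF
  by_cases hne : I.Nonempty
  swap
  · rw [Set.not_nonempty_iff_eq_empty] at hne
    refine ⟨∅, isCompact_empty, ?_, ?_⟩
    · rw [hne]
      symm
      rw [Set.eq_empty_iff_forall_notMem]
      intro x hx
      obtain ⟨n, y, ⟨f, hf, -⟩, -⟩ := Set.mem_iUnion.1 hx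
      exact hf 0
    · rw [hne]
      intro x hx
      exact hx.elim
  obtain ⟨w, hw⟩ := hne
  have h0 : (fun _ => false : ℕ → Bool) ∈ I := hdown w hw _ (by intro a h; simp at h)
  let T : ℕ → (ℕ → Bool) → (ℕ → Bool) := fun n x m => if m < n then false else x m
  have hTc : ∀ n, Continuous (T n) := by
    intro n
    refine continuous_pi fun m => ?_
    by_cases h : m < n
    · simp only [T, h, if_true]; exact continuous_const
    · simp only [T, h, if_false]; exact continuous_apply m
  let H : ℕ → Set (ℕ → Bool) := fun n =>
    T n '' F n ∪ {y | y ∈ I ∧ ∀ m, m ≠ n → y m = false}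
  have hHI : ∀ n, H n ⊆ I := by
    rintro n y (⟨x, hx, rfl⟩ | hy)
    · refine hdown x (hIF ▸ Set.mem_iUnion.2 ⟨n, hx⟩) _ ?_
      intro a ha
      by_cases h : a < n
      · simp [T, h] at ha
      · simpa [T, h] using ha
    · exact hy.1
  refine ⟨{fun _ => false} ∪ ⋃ n, H n, (closed_aux H ?_ ?_).isCompact, ?_, ?_⟩
  · intro n
    refine ((hFc n).isCompact.image (hTc n)).isClosed.union (Set.Finite.isClosed ?_)
    refine Set.Finite.of_injOn (f := fun y : ℕ → Bool => y n) (t := Set.univ)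
      (fun _ _ => Set.mem_univ _) ?_ Set.finite_univ
    rintro y hy z hz hyz
    funext m
    by_cases h : m = n
    · subst h; exact hyz
    · rw [hy.2 m h, hz.2 m h]
  · rintro n y (⟨x, hx, rfl⟩ | hy) m hm
    · simp [T, hm]
    · exact hy.2 m (by omega)
  · apply Set.Subset.antisymm
    · intro x hx
      obtain ⟨n, hn⟩ := Set.mem_iUnion.1 (hIF ▸ hx)
      refine Set.mem_iUnion.2 ⟨n, x, ⟨fun i => if (i : ℕ) < n then
        (fun m => decide (m = (i : ℕ)) && x m) else T n x, ?_, ?_⟩, fun _ h => h⟩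
      · intro i
        right
        by_cases h : (i : ℕ) < n
        · simp only [h, if_true]
          refine Set.mem_iUnion.2 ⟨i, Or.inr ⟨hdown x hx _ ?_, ?_⟩⟩
          · intro a ha
            simp at ha
            exact ha.2
          · intro m hm
            simp [hm]
        · simp only [h, if_false]
          exact Set.mem_iUnion.2 ⟨n, Or.inl ⟨x, hn, rfl⟩⟩
      · intro m
        constructor
        · intro hm
          by_cases h : m < n
          · exact ⟨⟨m, by omega⟩, by simp [h, hm]⟩
          · exact ⟨Fin.last n, by simp [T, h, hm]⟩
        · rintro ⟨i, hi⟩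
          by_cases h : (i : ℕ) < n
          · simp [h] at hi
            exact hi.2
          · simp [h, T] at hi
            exact hi.2
    · intro x hx
      obtain ⟨n, y, ⟨f, hf, hy⟩, hxy⟩ := Set.mem_iUnion.1 hx
      have hfI : ∀ i, f i ∈ I := by
        intro i
        rcases hf i with h | h
        · rw [Set.mem_singleton_iff] at h
          rw [h]; exact h0
        · obtain ⟨k, hk⟩ := Set.mem_iUnion.1 h
          exact hHI k hk
      have key : ∀ s : Finset (Fin (n + 1)), (fun m => decide (∃ i ∈ s, f i m = true)) ∈ I := by
        intro s
        induction s using Finset.induction_on with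
        | empty => simpa using h0
        | insert a s _ ih =>
          refine hdown _ (hun _ (hfI a) _ ih) _ ?_
          intro m hm
          simpa [unionB] using hm
      refine hdown _ (key Finset.univ) x ?_
      intro m hm
      simpa using (hy m).1 (hxy m hm)
  · intro x hx _
    obtain ⟨n, hn⟩ := Set.mem_iUnion.1 (hIF ▸ hx)
    refine ⟨T n x, Or.inr (Set.mem_iUnion.2 ⟨n, Or.inl ⟨x, hn, rfl⟩⟩), ?_⟩
    refine (Set.finite_lt_nat n).subset ?_
    intro m hm
    by_contra h
    apply hm
    have h' : ¬ m < n := h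
    simp [T, h']
end

section
/- For every n ∈ ℕ, every coloring d : [ℕ]ⁿ → 2, and every m ≥ n, there is a coloring d̄ : [ℕ]^m → 2 such that an infinite set A ⊆ ℕ is monochromatic for d if and only if A is monochromatic for d̄. -/
/-- `A` is monochromatic for a coloring `c` of the `n`-element subsets of `ℕ`:
`c` takes at most one value on `[A]ⁿ`. -/
def MonoB {β : Type} (n : ℕ) (A : Set ℕ) (c : Finset ℕ → β) : Prop :=
  ∀ s t : Finset ℕ, s.card = n → t.card = n → ↑s ⊆ A → ↑t ⊆ A → c s = c t

theorem mono_step (n : ℕ) (d : Finset ℕ → Bool) :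
    ∃ db : Finset ℕ → Bool,
      ∀ A : Set ℕ, A.Infinite → (MonoB n A d ↔ MonoB (n + 1) A db) := by
  refine ⟨fun s => d (s.erase (s.sup id)), fun A hA => ⟨fun h => ?_, fun h => ?_⟩⟩
  · have key : ∀ s : Finset ℕ, s.card = n + 1 → (s.erase (s.sup id)).card = n := by
      intro s hs
      have hne : s.Nonempty := by
        rw [← Finset.card_pos]; omega
      obtain ⟨x, hx, hxs⟩ := Finset.exists_mem_eq_sup s hne id
      have hmem : s.sup id ∈ s := by rw [hxs]; exact hx
      rw [Finset.card_erase_of_mem hmem]; omega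
    intro s t hs ht hsA htA
    exact h _ _ (key s hs) (key t ht)
      (fun x hx => hsA (Finset.mem_of_mem_erase hx))
      (fun x hx => htA (Finset.mem_of_mem_erase hx))
  · have key : ∀ s : Finset ℕ, s.card = n → ↑s ⊆ A → ∃ u : Finset ℕ,
        u.card = n + 1 ∧ ↑u ⊆ A ∧ u.erase (u.sup id) = s := by
      intro s hs hsA
      obtain ⟨a, haA, ha⟩ := hA.exists_gt (s.sup id)
      have hns : a ∉ s := fun hmem => by
        have : id a ≤ s.sup id := Finset.le_sup hmem
        simp only [id] at this ha
        omega
      refine ⟨insert a s, by rw [Finset.card_insert_of_notMem hns, hs], ?_, ?_⟩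
      · rw [Finset.coe_insert]
        exact Set.insert_subset haA hsA
      · have : (insert a s).sup id = a := by
          rw [Finset.sup_insert]
          exact sup_eq_left.mpr ha.le
        rw [this, Finset.erase_insert hns]
    intro s t hs ht hsA htA
    obtain ⟨u, hu, huA, rfl⟩ := key s hs hsA
    obtain ⟨v, hv, hvA, rfl⟩ := key t ht htA
    exact h u v hu hv huA hvA

/-- For every two-valued coloring `d` of `[ℕ]ⁿ` and every `m ≥ n` there is a two-valued coloring
`d̄` of `[ℕ]^m` with the same infinite monochromatic sets. -/
theorem coloring_arity_up (n m : ℕ) (hnm : n ≤ m) (d : Finset ℕ → Bool) :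
    ∃ db : Finset ℕ → Bool,
      ∀ A : Set ℕ, A.Infinite → (MonoB n A d ↔ MonoB m A db) := by
  induction m, hnm using Nat.le_induction with
  | base => exact ⟨d, fun _ _ => Iff.rfl⟩
  | succ k _ ih =>
    obtain ⟨e, he⟩ := ih
    obtain ⟨f, hf⟩ := mono_step k e
    exact ⟨f, fun A hA => (he A hA).trans (hf A hA)⟩
end

section
/- Let f, g ∈ ℕ^ℕ with g(n) ≥ 1 for all n, and let {dₙ}ₙ be a sequence of colorings with dₙ : [ℕ]^{f(n)} → g(n). Then there is a sequence of colorings {cₙ}ₙ with cₙ : [ℕ]ⁿ → 2 such that an infinite set A ⊆ ℕ is simultaneously monochromatic for {dₙ} if and only if A is simultaneously monochromatic for {cₙ}. -/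
/-- `x` is an initial segment of `s` of size `f`. -/
def IniSeg (f : ℕ) (s x : Finset ℕ) : Prop :=
  x ⊆ s ∧ x.card = f ∧ ∀ a ∈ x, ∀ b ∈ s, b ∉ x → a < b

/-- `x` is a final segment of `s` of size `f`. -/
def FinSeg (f : ℕ) (s x : Finset ℕ) : Prop :=
  x ⊆ s ∧ x.card = f ∧ ∀ a ∈ x, ∀ b ∈ s, b ∉ x → b < a

lemma IniSeg.uniq {f : ℕ} {s x y : Finset ℕ} (hx : IniSeg f s x) (hy : IniSeg f s y) : x = y := by
  obtain ⟨h1, h2, h3⟩ := hx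
  obtain ⟨k1, k2, k3⟩ := hy
  by_cases h : x ⊆ y
  · exact Finset.eq_of_subset_of_card_le h (by omega)
  · obtain ⟨a, ha, ha'⟩ := Finset.not_subset.1 h
    refine (Finset.eq_of_subset_of_card_le (fun b hb => ?_) (by omega)).symm
    by_contra hb'
    have := h3 a ha b (k1 hb) hb'
    have := k3 b hb a (h1 ha) ha'
    omega

lemma FinSeg.uniq {f : ℕ} {s x y : Finset ℕ} (hx : FinSeg f s x) (hy : FinSeg f s y) : x = y := by
  obtain ⟨h1, h2, h3⟩ := hx
  obtain ⟨k1, k2, k3⟩ := hy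
  by_cases h : x ⊆ y
  · exact Finset.eq_of_subset_of_card_le h (by omega)
  · obtain ⟨a, ha, ha'⟩ := Finset.not_subset.1 h
    refine (Finset.eq_of_subset_of_card_le (fun b hb => ?_) (by omega)).symm
    by_contra hb'
    have := h3 a ha b (k1 hb) hb'
    have := k3 b hb a (h1 ha) ha'
    omega

/-- The first `f` and last `f` elements of `s` get the same color. -/
def EndsAgree {β : Type} (f : ℕ) (d : Finset ℕ → β) (s : Finset ℕ) : Prop :=
  ∀ x y, IniSeg f s x → FinSeg f s y → d x = d y

/-- Join an `f`-set `x` with the `k - f` elements `a N, …` above it. -/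
lemma join_facts {f k N : ℕ} (hk : 2 * f ≤ k) {a : ℕ → ℕ} (ha : StrictMono a) {x : Finset ℕ}
    (hx : x.card = f) (hN : ∀ u ∈ x, u < a N) :
    (x ∪ (Finset.Ico N (N + (k - f))).image a).card = k ∧
    IniSeg f (x ∪ (Finset.Ico N (N + (k - f))).image a) x ∧
    FinSeg f (x ∪ (Finset.Ico N (N + (k - f))).image a)
      ((Finset.Ico (N + (k - f) - f) (N + (k - f))).image a) := by
  have hi := ha.injective
  have hd : Disjoint x ((Finset.Ico N (N + (k - f))).image a) := by
    rw [Finset.disjoint_left]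
    intro u hu hu'
    obtain ⟨i, hi, rfl⟩ := Finset.mem_image.1 hu'
    have h1 := hN _ hu
    have := ha.le_iff_le.2 (Finset.mem_Ico.1 hi).1
    omega
  refine ⟨?_, ⟨Finset.subset_union_left, hx, ?_⟩, ?_, ?_, ?_⟩
  · rw [Finset.card_union_of_disjoint hd, Finset.card_image_of_injective _ hi, Nat.card_Ico]
    omega
  · intro u hu b hb hb'
    rcases Finset.mem_union.1 hb with h | h
    · exact absurd h hb'
    · obtain ⟨i, hi, rfl⟩ := Finset.mem_image.1 h
      exact (hN u hu).trans_le (ha.le_iff_le.2 (Finset.mem_Ico.1 hi).1)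
  · refine (Finset.image_subset_image ?_).trans Finset.subset_union_right
    apply Finset.Ico_subset_Ico <;> omega
  · rw [Finset.card_image_of_injective _ hi, Nat.card_Ico]
    omega
  · intro u hu b hb hb'
    obtain ⟨j, hj, rfl⟩ := Finset.mem_image.1 hu
    rw [Finset.mem_Ico] at hj
    rcases Finset.mem_union.1 hb with h | h
    · exact (hN b h).trans_le (ha.le_iff_le.2 (by omega))
    · obtain ⟨i, hi, rfl⟩ := Finset.mem_image.1 h
      rw [Finset.mem_Ico] at hi
      apply ha
      by_contra hlt
      exact hb' (Finset.mem_image_of_mem _ (Finset.mem_Ico.2 (by omega)))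

lemma mono_of_ends {g f k : ℕ} (hk : 2 * f ≤ k) (d : Finset ℕ → Fin g) (A : Set ℕ)
    (hA : A.Infinite)
    (h : ∀ s t : Finset ℕ, s.card = k → t.card = k → ↑s ⊆ A → ↑t ⊆ A →
      (EndsAgree f d s ↔ EndsAgree f d t)) : MonoB f A d := by
  obtain ⟨a, ha, haA⟩ : ∃ a : ℕ → ℕ, StrictMono a ∧ ∀ i, a i ∈ A :=
    ⟨Nat.nth (· ∈ A), Nat.nth_strictMono hA, Nat.nth_mem_of_infinite hA⟩
  have hsub : ∀ (x : Finset ℕ) (I : Finset ℕ), ↑x ⊆ A → ↑(x ∪ I.image a) ⊆ A := by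
    intro x I hx u hu
    rcases Finset.mem_union.1 (Finset.mem_coe.1 hu) with h | h
    · exact hx h
    · obtain ⟨i, _, rfl⟩ := Finset.mem_image.1 h
      exact haA i
  -- a set whose ends agree, by the pigeonhole principle
  obtain ⟨s0, hs0, hs0A, hE⟩ : ∃ s : Finset ℕ, s.card = k ∧ ↑s ⊆ A ∧ EndsAgree f d s := by
    obtain ⟨i, j, hij, hd⟩ := Finite.exists_ne_map_eq_of_infinite
      (fun i : ℕ => d ((Finset.Ico (k * i) (k * i + f)).image a))
    wlog hlt : i < j generalizing i j
    · exact this j i hij.symm hd.symm (by omega)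
    have hkm : k * i + k ≤ k * j := by
      calc k * i + k = k * (i + 1) := by ring
        _ ≤ k * j := Nat.mul_le_mul_left k hlt
    obtain ⟨h1, h2, h3⟩ := join_facts (f := f) (k := k) (N := k * j + f - (k - f)) hk ha
      (x := (Finset.Ico (k * i) (k * i + f)).image a)
      (by rw [Finset.card_image_of_injective _ ha.injective, Nat.card_Ico]; omega)
      (by
        intro u hu
        obtain ⟨l, hl, rfl⟩ := Finset.mem_image.1 hu
        rw [Finset.mem_Ico] at hl
        apply ha
        omega)
    refine ⟨_, h1, hsub _ _ ?_, ?_⟩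
    · intro u hu
      obtain ⟨l, _, rfl⟩ := Finset.mem_image.1 (Finset.mem_coe.1 hu)
      exact haA l
    · intro x y hx hy
      rw [hx.uniq h2, hy.uniq h3]
      have e1 : k * j + f - (k - f) + (k - f) = k * j + f := by omega
      rw [e1, Nat.add_sub_cancel]
      exact hd
  intro x y hx hy hxA hyA
  let N := (x ∪ y).sup id + 1
  have hN : ∀ u ∈ x ∪ y, u < a N := fun u hu =>
    (Nat.lt_succ_of_le (Finset.le_sup (f := id) hu)).trans_le (ha.id_le N)
  obtain ⟨p1, p2, p3⟩ := join_facts hk ha hx (fun u hu => hN u (Finset.mem_union_left _ hu))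
  obtain ⟨q1, q2, q3⟩ := join_facts hk ha hy (fun u hu => hN u (Finset.mem_union_right _ hu))
  exact ((h _ _ hs0 p1 hs0A (hsub _ _ hxA)).1 hE _ _ p2 p3).trans
    ((h _ _ hs0 q1 hs0A (hsub _ _ hyA)).1 hE _ _ q2 q3).symm

/-- Any sequence of colorings `dₙ : [ℕ]^{f(n)} → g(n)` can be replaced by a sequence of colorings
`cₙ : [ℕ]ⁿ → 2` with the same infinite simultaneously monochromatic sets. -/
theorem colorings_normal_form (f g : ℕ → ℕ) (hg : ∀ n, 1 ≤ g n)
    (d : (n : ℕ) → Finset ℕ → Fin (g n)) :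
    ∃ c : ℕ → Finset ℕ → Bool,
      ∀ A : Set ℕ, A.Infinite →
        ((∀ n, MonoB (f n) A (d n)) ↔ ∀ n, MonoB n A (c n)) := by
  classical
  let h : ℕ → ℕ := fun n => n + 2 * ∑ i ∈ Finset.range (n + 1), f i
  have hh : StrictMono h := by
    refine strictMono_nat_of_lt_succ fun n => ?_
    simp only [h]
    rw [Finset.sum_range_succ _ (n + 1)]
    omega
  have hf : ∀ n, 2 * f n ≤ h n := by
    intro n
    simp only [h]
    rw [Finset.sum_range_succ]
    omega
  refine ⟨fun m s => decide (∀ n, h n = m → EndsAgree (f n) (d n) s), fun A hA => ⟨?_, ?_⟩⟩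
  · intro H m s t _ _ hsA htA
    have key : ∀ s : Finset ℕ, ↑s ⊆ A → ∀ n, h n = m → EndsAgree (f n) (d n) s := by
      intro s hs n _ x y hx hy
      exact H n x y hx.2.1 hy.2.1 (fun u hu => hs (hx.1 hu)) (fun u hu => hs (hy.1 hu))
    exact (decide_eq_true (key s hsA)).trans (decide_eq_true (key t htA)).symm
  · intro H n
    refine mono_of_ends (hf n) (d n) A hA fun s t hs ht hsA htA => ?_
    have h1 := H (h n) s t hs ht hsA htA
    have h2 := decide_eq_decide.1 h1
    have key : ∀ s : Finset ℕ, (∀ m, h m = h n → EndsAgree (f m) (d m) s) ↔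
        EndsAgree (f n) (d n) s := by
      intro s
      refine ⟨fun H => H n rfl, fun H m hm => ?_⟩
      obtain rfl := hh.injective hm
      exact H
    rw [← key s, ← key t]
    exact h2
end

section
/- For every F_σ ideal I on ℕ containing all finite subsets of ℕ, there is a sequence of colorings {cₙ}ₙ (cₙ : [ℕ]ⁿ → 2) such that I = I_{S({cₙ})}. -/
/-- `S({cₙ})`: the sets simultaneously monochromatic for the sequence of colorings `cₙ`. -/
def SimMonoB (cs : ℕ → Finset ℕ → Bool) : Set (ℕ → Bool) :=
  {x | ∀ n, MonoB n (suppB x) (cs n)}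

theorem downB_isClosed (F : Set (ℕ → Bool)) (hF : IsClosed F) : IsClosed (downB F) := by
  have h1 : IsClosed {p : (ℕ → Bool) × (ℕ → Bool) | p.2 ∈ F ∧ ∀ a, p.1 a ≤ p.2 a} := by
    refine IsClosed.inter (hF.preimage continuous_snd) ?_
    have e : {p : (ℕ → Bool) × (ℕ → Bool) | ∀ a, p.1 a ≤ p.2 a}
        = ⋂ a, {p : (ℕ → Bool) × (ℕ → Bool) | p.1 a ≤ p.2 a} := by
      ext p; simp
    change IsClosed {p : (ℕ → Bool) × (ℕ → Bool) | ∀ a, p.1 a ≤ p.2 a}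
    rw [e]
    refine isClosed_iInter fun a => ?_
    have hc : Continuous fun p : (ℕ → Bool) × (ℕ → Bool) => (p.1 a, p.2 a) := by fun_prop
    exact (isClosed_discrete {q : Bool × Bool | q.1 ≤ q.2}).preimage hc
  have h2 := (h1.isCompact.image continuous_fst).isClosed
  convert h2 using 1
  ext x
  simp only [downB, subB, Set.mem_ofPred_eq, Set.mem_image, Prod.exists, exists_and_right,
    exists_eq_right]
  constructor
  · rintro ⟨y, hy, h⟩
    exact ⟨y, hy, fun a => by have := h a; revert this; cases x a <;> cases y a <;> decide⟩
  · rintro ⟨y, hy, h⟩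
    exact ⟨y, hy, fun a => by have := h a; revert this; cases x a <;> cases y a <;> decide⟩

theorem ideal_fin_union (I : Set (ℕ → Bool)) (hI : IsIdealB I) (hfin : ContainsFinB I) :
    ∀ (n : ℕ) (f : Fin n → (ℕ → Bool)), (∀ i, f i ∈ I) →
      ∀ x : ℕ → Bool, (∀ m, x m = true → ∃ i, f i m = true) → x ∈ I := by
  intro n
  induction n with
  | zero =>
    intro f _ x hx
    apply hfin
    have : suppB x = ∅ := by
      ext m
      simp only [suppB, Set.mem_ofPred_eq, Set.mem_empty_iff_false, iff_false]
      intro h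
      obtain ⟨i, _⟩ := hx m h
      exact i.elim0
    rw [this]
    exact Set.finite_empty
  | succ n ih =>
    intro f hf x hx
    classical
    have h1 : (fun m => decide (∃ i : Fin n, f i.succ m = true)) ∈ I :=
      ih (fun i => f i.succ) (fun i => hf _) _ (fun m hm => by simpa using hm)
    refine hI.1 _ (hI.2 _ (hf 0) _ h1) x ?_
    intro m hm
    obtain ⟨i, hi⟩ := hx m hm
    simp only [unionB, Bool.or_eq_true, decide_eq_true_eq]
    refine Fin.cases (motive := fun i => f i m = true → _) (fun h => Or.inl h)
      (fun j h => Or.inr ⟨j, h⟩) i hi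

theorem fSigma_ideal_eq_simMono (I : Set (ℕ → Bool)) (hI : IsIdealB I)
    (hfin : ContainsFinB I) (hF : IsFsigmaB I) :
    ∃ cs : ℕ → Finset ℕ → Bool, I = IdealOfCode (SimMonoB cs) := by
  classical
  obtain ⟨F, hFc, rfl⟩ := hF
  set I := ⋃ n, F n with hIdef
  let G : ℕ → Set (ℕ → Bool) := fun m => ⋃ i ∈ Set.Iic m, downB (F i)
  have hGc : ∀ m, IsClosed (G m) := fun m =>
    (Set.finite_Iic m).isClosed_biUnion fun i _ => downB_isClosed _ (hFc i)
  have hGI : ∀ m, G m ⊆ I := by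
    intro m x hx
    simp only [G, Set.mem_iUnion] at hx
    obtain ⟨i, _, y, hy, hxy⟩ := hx
    exact hI.1 y (Set.mem_iUnion.2 ⟨i, hy⟩) x hxy
  let cs : ℕ → Finset ℕ → Bool := fun n s =>
    decide (∀ m ∈ s, n ≤ m ∨ (fun a => decide (a ∈ s)) ∈ G m)
  refine ⟨cs, Set.Subset.antisymm ?_ ?_⟩
  · intro x hx
    obtain ⟨n, hn⟩ := Set.mem_iUnion.1 hx
    refine Set.mem_iUnion.2 ⟨n, x, ?_, fun a h => h⟩
    let z : ℕ → Bool := fun a => x a && decide (n ≤ a)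
    have hz : z ∈ SimMonoB cs := by
      intro k
      have key : ∀ s : Finset ℕ, ↑s ⊆ suppB z → cs k s = true := by
        intro s hs
        simp only [cs, decide_eq_true_eq]
        intro m hm
        right
        have hs' : ∀ a ∈ s, x a = true ∧ n ≤ a := by
          intro a ha
          have := hs (Finset.mem_coe.2 ha)
          simpa [suppB, z] using this
        simp only [G, Set.mem_iUnion]
        refine ⟨n, (hs' m hm).2, x, hn, ?_⟩
        intro a ha
        exact (hs' a (by simpa using ha)).1
      intro s t _ _ hs ht
      rw [key s hs, key t ht]
    have hsing : ∀ i : ℕ, (fun a => x a && decide (a = i)) ∈ SimMonoB cs := by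
      intro i k s t hs ht hsA htA
      have h1 : ∀ u : Finset ℕ, ↑u ⊆ suppB (fun a => x a && decide (a = i)) → u ⊆ {i} := by
        intro u hu a ha
        have := hu (Finset.mem_coe.2 ha)
        simp only [suppB, Set.mem_ofPred_eq, Bool.and_eq_true, decide_eq_true_eq] at this
        simpa using this.2
      have hst : s = t := by
        rcases Finset.subset_singleton_iff.1 (h1 s hsA) with h | h <;>
        rcases Finset.subset_singleton_iff.1 (h1 t htA) with h' | h' <;>
        subst h <;> subst h' <;> simp_all <;> omega
      rw [hst]
    refine ⟨fun i => if i.1 < n then (fun a => x a && decide (a = i.1)) else z, ?_, ?_⟩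
    · intro i
      dsimp only
      split_ifs
      · exact hsing _
      · exact hz
    · intro m
      constructor
      · intro hm
        by_cases h : m < n
        · exact ⟨⟨m, by omega⟩, by simp [h, hm]⟩
        · exact ⟨⟨n, by omega⟩, by simp [z, hm]; omega⟩
      · rintro ⟨i, hi⟩
        dsimp only at hi
        split_ifs at hi
        · simp only [Bool.and_eq_true] at hi
          exact hi.1
        · simp only [z, Bool.and_eq_true] at hi
          exact hi.1
  · intro x hx
    obtain ⟨n, y, ⟨f, hf, hy⟩, hxy⟩ := Set.mem_iUnion.1 hx
    refine ideal_fin_union I hI hfin (n + 1) f ?_ x (fun m hm => (hy m).1 (hxy m hm))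
    intro i
    have hA := hf i
    generalize f i = A at hA
    by_cases hfinA : (suppB A).Finite
    · exact hfin A hfinA
    have hinf : (suppB A).Infinite := hfinA
    have htrue : ∀ s : Finset ℕ, ↑s ⊆ suppB A → cs s.card s = true := by
      intro s hs
      have hinf2 : (suppB A \ Set.Iio s.card).Infinite := hinf.sdiff (Set.finite_Iio _)
      obtain ⟨t, ht, htc⟩ := hinf2.exists_subset_card_eq s.card
      rw [hA s.card s t rfl htc hs (fun a ha => (ht ha).1)]
      simp only [cs, decide_eq_true_eq]
      intro m hm
      left
      have := (ht (Finset.mem_coe.2 hm)).2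
      simpa using this
    obtain ⟨m, hm⟩ := hinf.nonempty
    obtain ⟨t, ht, htc⟩ := hinf.exists_subset_card_eq (m + 1)
    apply hGI m
    let S : ℕ → Finset ℕ := fun k => (Finset.range k).filter (fun a => A a = true)
    have hlim : Filter.Tendsto (fun k => (fun a => decide (a ∈ S k))) Filter.atTop (nhds A) := by
      rw [tendsto_pi_nhds]
      intro a
      apply tendsto_const_nhds.congr'
      filter_upwards [Filter.eventually_gt_atTop a] with k hk
      simp [S, hk]
    refine (hGc m).mem_of_tendsto hlim ?_
    filter_upwards [Filter.eventually_gt_atTop m, Filter.eventually_gt_atTop (t.sup id)]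
      with k hk hk2
    have hsub : t ⊆ S k := by
      intro a ha
      have h1 : a ≤ t.sup id := Finset.le_sup (f := id) ha
      simp only [S, Finset.mem_filter, Finset.mem_range]
      exact ⟨by omega, ht ha⟩
    have hcard := Finset.card_le_card hsub
    have h2 := htrue (S k) (fun a ha => by
      have := Finset.mem_coe.1 ha
      simp only [S, Finset.mem_filter] at this
      exact this.2)
    simp only [cs, decide_eq_true_eq] at h2
    have hmS : m ∈ S k := by
      simp only [S, Finset.mem_filter, Finset.mem_range]
      exact ⟨hk, hm⟩
    rcases h2 m hmS with h | h
    · omega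
    · exact h
end

section
/- For every Σ¹₂ set X ⊆ 2^ℕ there is a continuous function σ : 2^ℕ → K(2^ℕ) such that for every x ∈ 2^ℕ: x ∈ X if and only if the ideal I_{σ(x)} is not tall. (In particular the set {K ∈ K(2^ℕ) : I_K is tall} is Π¹₂-hard.) -/
/-- A compatible metric on the Cantor space, so that the hyperspace `K(2^ℕ)` of (nonempty)
compact subsets carries the Hausdorff metric (inducing the Vietoris topology). -/
noncomputable instance : MetricSpace (ℕ → Bool) := TopologicalSpace.metrizableSpaceMetric _

/-- `Y` is `Σ¹₂`: the projection along `ℕ^ℕ` of a set whose complement is analytic. -/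
def IsSigma12 {X : Type} [TopologicalSpace X] (Y : Set X) : Prop :=
  ∃ C : Set (X × (ℕ → ℕ)), MeasureTheory.AnalyticSet Cᶜ ∧ Y = {z | ∃ g : ℕ → ℕ, (z, g) ∈ C}


open Filter Topology

/-- Truncation of a coded set to `{0, …, n-1}`. -/
def truncB (n : ℕ) (y : ℕ → Bool) : ℕ → Bool := fun i => decide (i < n) && y i

theorem truncB_sub (n : ℕ) (y : ℕ → Bool) : subB (truncB n y) y := by
  intro a h
  simp [truncB] at h
  exact h.2

theorem truncB_lt {n : ℕ} {y : ℕ → Bool} {i : ℕ} (h : truncB n y i = true) : i < n := by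
  simp [truncB] at h
  exact h.1

theorem truncB_tendsto (y : ℕ → Bool) : Tendsto (fun n => truncB n y) atTop (𝓝 y) := by
  rw [tendsto_pi_nhds]
  intro i
  apply tendsto_const_nhds.congr'
  filter_upwards [eventually_gt_atTop i] with n hn
  simp [truncB, hn]

theorem eventually_agree (x : ℕ → Bool) (n : ℕ) : ∀ᶠ x' in 𝓝 x, ∀ i < n, x i = x' i := by
  have : ∀ i : ℕ, ∀ᶠ x' in 𝓝 x, x i = x' i := by
    intro i
    have h := (continuous_apply (A := fun _ : ℕ => Bool) i).tendsto x
    have h2 : ({x i} : Set Bool) ∈ 𝓝 (x i) := by simp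
    filter_upwards [h h2] with x' hx'
    exact (Set.mem_singleton_iff.1 hx').symm
  exact (eventually_all_finite (Set.finite_lt_nat n)).2 fun i _ => this i

/-- Abstract continuity criterion for hereditary families depending locally on the parameter. -/
theorem continuous_of_local (K : (ℕ → Bool) → Set (ℕ → Bool))
    (hcl : ∀ x, IsClosed (K x)) (hher : ∀ x, ∀ y ∈ K x, ∀ z, subB z y → z ∈ K x)
    (hloc : ∀ n x x' y, (∀ i < n, x i = x' i) → (∀ i, y i = true → i < n) → y ∈ K x → y ∈ K x')
    (σ : (ℕ → Bool) → TopologicalSpace.NonemptyCompacts (ℕ → Bool))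
    (hσ : ∀ x, (σ x : Set (ℕ → Bool)) = K x) : Continuous σ := by
  letI : TopologicalSpace (Set (ℕ → Bool)) := TopologicalSpace.vietoris (ℕ → Bool)
  rw [TopologicalSpace.NonemptyCompacts.isEmbedding_coe.continuous_iff]
  have hcomp : ((↑) : TopologicalSpace.NonemptyCompacts (ℕ → Bool) → Set (ℕ → Bool)) ∘ σ = K := by
    funext x
    exact hσ x
  rw [hcomp]
  rw [TopologicalSpace.vietoris.continuous_iff]
  constructor
  · intro U hU
    have hG : IsClosed {p : (ℕ → Bool) × (ℕ → Bool) | p.2 ∈ K p.1 ∧ p.2 ∈ Uᶜ} := by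
      have h1 : IsClosed {p : (ℕ → Bool) × (ℕ → Bool) | p.2 ∈ K p.1} := by
        rw [← isOpen_compl_iff, isOpen_iff_mem_nhds]
        rintro ⟨x, y⟩ hxy
        have hxy' : y ∉ K x := hxy
        have : ∃ n, truncB n y ∉ K x := by
          by_contra! hcon
          exact hxy' ((hcl x).mem_of_tendsto (truncB_tendsto y) (Eventually.of_forall hcon))
        obtain ⟨n, hn⟩ := this
        rw [nhds_prod_eq]
        filter_upwards [(eventually_agree x n).prod_mk (eventually_agree y n)]
        rintro ⟨x', y'⟩ ⟨hx, hy⟩ hmem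
        have hmem' : y' ∈ K x' := hmem
        apply hn
        have e : truncB n y = truncB n y' := by
          funext i
          by_cases hi : i < n
          · simp only [truncB, hi, hy i hi]
          · simp [truncB, hi]
        rw [e]
        exact hloc n x' x _ (fun i hi => (hx i hi).symm) (fun i hi => truncB_lt hi)
          (hher x' y' hmem' _ (truncB_sub n y'))
      exact h1.inter (hU.isClosed_compl.preimage continuous_snd)
    have h2 := isClosedMap_fst_of_compactSpace _ hG
    rw [← isClosed_compl_iff]
    convert h2 using 1
    ext x
    simp [Set.subset_def]
  · intro F hF
    rw [← isOpen_compl_iff, isOpen_iff_mem_nhds]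
    intro x hx
    have hx' : ¬ K x ⊆ F := hx
    rw [Set.not_subset] at hx'
    obtain ⟨y, hy, hyF⟩ := hx'
    obtain ⟨n, hn⟩ := ((truncB_tendsto y).eventually (hF.isOpen_compl.mem_nhds hyF)).exists
    filter_upwards [eventually_agree x n] with x' hx' hsub
    have hsub' : K x' ⊆ F := hsub
    exact hn (hsub' (hloc n x x' _ hx' (fun i hi => truncB_lt hi)
      (hher x y hy _ (truncB_sub n y))))

/-- Tallness of `I_K` for hereditary `K`. -/
theorem tall_iff (K : Set (ℕ → Bool)) (hher : ∀ y ∈ K, ∀ z, subB z y → z ∈ K) :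
    IsTallB (IdealOfCode K) ↔ ∀ x, InfiniteB x → ∃ y ∈ K, InfiniteB y ∧ subB y x := by
  constructor
  · intro h x hx
    obtain ⟨B, hB, hBi, hBx⟩ := h x hx
    simp only [IdealOfCode, Set.mem_iUnion] at hB
    obtain ⟨n, y, ⟨f, hf, hfy⟩, hBy⟩ := hB
    have hun : suppB B ⊆ ⋃ i, (suppB (fun a => f i a && B a)) := by
      intro a ha
      obtain ⟨i, hi⟩ := (hfy a).1 (hBy a ha)
      refine Set.mem_iUnion.2 ⟨i, ?_⟩
      have ha' : B a = true := ha
      change (f i a && B a) = true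
      simp [hi, ha']
    have : ∃ i, (suppB (fun a => f i a && B a)).Infinite := by
      by_contra! hcon
      exact hBi ((Set.finite_iUnion (fun i => by simpa using hcon i)).subset hun)
    obtain ⟨i, hi⟩ := this
    refine ⟨_, hher _ (hf i) _ ?_, hi, ?_⟩
    · intro a ha
      simp at ha
      exact ha.1
    · intro a ha
      simp at ha
      exact hBx a ha.2
  · intro h x hx
    obtain ⟨y, hy, hyi, hyx⟩ := h x hx
    refine ⟨y, ?_, hyi, hyx⟩
    simp only [IdealOfCode, Set.mem_iUnion]
    exact ⟨0, y, ⟨fun _ => y, fun _ => hy, fun m => by simp⟩, fun a h => h⟩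

/-- The finite sequence coded by a number. -/
noncomputable def node (a : ℕ) : List ℕ := (Denumerable.eqv (List ℕ)).symm a

/-- The code of the restriction of `g` to length `n`. -/
noncomputable def res (g : ℕ → ℕ) (n : ℕ) : ℕ :=
  Denumerable.eqv (List ℕ) ((List.range n).map g)

theorem node_res (g : ℕ → ℕ) (n : ℕ) : node (res g n) = (List.range n).map g := by
  simp [node, res]

theorem node_inj {a b : ℕ} (h : node a = node b) : a = b :=
  (Denumerable.eqv (List ℕ)).symm.injective h

/-- Strict prefix relation on codes. -/
def ltN (a b : ℕ) : Prop := node a <+: node b ∧ (node a).length < (node b).length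

theorem ltN_trans {a b c : ℕ} (h : ltN a b) (h' : ltN b c) : ltN a c :=
  ⟨h.1.trans h'.1, h.2.trans h'.2⟩

theorem ltN_res (g : ℕ → ℕ) {m n : ℕ} (h : m < n) : ltN (res g m) (res g n) := by
  refine ⟨?_, ?_⟩
  · rw [node_res, node_res]
    apply List.IsPrefix.map
    rw [List.prefix_iff_eq_take]
    simp [List.take_range, h.le]
  · simpa [node_res] using h

theorem res_inj (g : ℕ → ℕ) : Function.Injective (res g) := by
  intro m n h
  have := congrArg (fun a => (node a).length) h
  simpa [node_res] using this

/-- The compact family attached to `x`. -/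
def KK (f : (ℕ → ℕ) → (ℕ → Bool) × (ℕ → ℕ)) (x : ℕ → Bool) : Set (ℕ → Bool) :=
  {y | ∀ (k : ℕ) (s : ℕ → ℕ), (∀ i ≤ k, y (s i) = true) → (∀ i < k, ltN (s i) (s (i + 1))) →
    ∃ h : ℕ → ℕ, ∀ i < k, h i ≤ (node (s i)).length ∧ (f h).1 i = x i ∧
      ∀ j < k, ∀ v, (node (s j))[i]? = some v → (f h).2 i = v}

theorem KK_closed (f x) : IsClosed (KK f x) := by
  simp only [KK, Set.ofPred_forall]
  refine isClosed_iInter fun k => isClosed_iInter fun s => ?_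
  rw [← isOpen_compl_iff, isOpen_iff_mem_nhds]
  intro y hy
  simp only [Set.mem_compl_iff, Set.mem_ofPred_eq] at hy
  push Not at hy
  obtain ⟨h1, h2⟩ := hy
  have : ∀ᶠ y' in 𝓝 y, ∀ i ≤ k, y (s i) = y' (s i) := by
    refine (eventually_all_finite (Set.finite_le_nat k)).2 fun i _ => ?_
    filter_upwards [eventually_agree y (s i + 1)] with y' hy'
    exact hy' _ (Nat.lt_succ_self _)
  filter_upwards [this] with y' hy'
  simp only [Set.mem_compl_iff, Set.mem_ofPred_eq]
  push Not
  exact ⟨fun i hi => (hy' i hi) ▸ h1 i hi, h2⟩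

theorem KK_her (f x) : ∀ y ∈ KK f x, ∀ z, subB z y → z ∈ KK f x := by
  intro y hy z hz k s hs hs'
  exact hy k s (fun i hi => hz _ (hs i hi)) hs'

theorem ltN_chain {k : ℕ} {s : ℕ → ℕ} (h : ∀ i < k, ltN (s i) (s (i + 1))) :
    ∀ j ≤ k, ∀ i < j, ltN (s i) (s j) := by
  intro j
  induction j with
  | zero => intro _ i hi; omega
  | succ j ih =>
    intro hj i hi
    rcases Nat.lt_succ_iff_lt_or_eq.1 hi with h1 | rfl
    · exact ltN_trans (ih (by omega) i h1) (h j (by omega))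
    · exact h i (by omega)

theorem KK_loc (f) : ∀ n x x' y, (∀ i < n, x i = x' i) → (∀ i, y i = true → i < n) →
    y ∈ KK f x → y ∈ KK f x' := by
  intro n x x' y hxx hyn hy k s hs hs'
  obtain ⟨h, hh⟩ := hy k s hs hs'
  have hk : k + 1 ≤ n := by
    have hinj : Set.InjOn s (Finset.range (k + 1)) := by
      intro i hi j hj hij
      simp at hi hj
      by_contra hne
      rcases lt_or_gt_of_ne hne with h1 | h1
      · have := (ltN_chain hs' j (by omega) i h1).2
        rw [hij] at this
        omega
      · have := (ltN_chain hs' i (by omega) j h1).2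
        rw [hij] at this
        omega
    have := Finset.card_le_card_of_injOn (t := Finset.range n) s (by
      intro i hi
      simp at hi ⊢
      exact hyn _ (hs i (by omega))) hinj
    simpa using this
  refine ⟨h, fun i hi => ?_⟩
  rw [← hxx i (by omega)]
  exact hh i hi

/-- Compactness: bounded approximate solutions give a solution. -/
theorem compact_limit (f : (ℕ → ℕ) → (ℕ → Bool) × (ℕ → ℕ)) (hf : Continuous f)
    (x : ℕ → Bool) (g : ℕ → ℕ) (b : ℕ → ℕ) (H : ℕ → ℕ → ℕ)
    (hb : ∀ k, ∀ i < k, H k i ≤ b i) (h1 : ∀ k, ∀ i < k, (f (H k)).1 i = x i)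
    (h2 : ∀ i, ∀ᶠ k in atTop, (f (H k)).2 i = g i) : ∃ h, f h = (x, g) := by
  let U : Ultrafilter ℕ := hyperfilter ℕ
  have hU : (U : Filter ℕ) ≤ atTop := by
    rw [← Nat.cofinite_eq_atTop]; exact hyperfilter_le_cofinite
  have hc : IsCompact (Set.univ.pi fun i => Set.Iic (b i) : Set (ℕ → ℕ)) :=
    isCompact_univ_pi fun i => (Set.finite_Iic (b i)).isCompact
  let H' : ℕ → ℕ → ℕ := fun k i => min (H k i) (b i)
  obtain ⟨h, -, hh⟩ := hc.ultrafilter_le_nhds (U.map H') (by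
    rw [le_principal_iff]
    refine Ultrafilter.mem_map.2 (Filter.univ_mem' fun k => ?_)
    intro i _
    exact Set.mem_Iic.2 (min_le_right (H k i) (b i)))
  have ht' : Tendsto H' U (𝓝 h) := hh
  have ht : Tendsto H U (𝓝 h) := by
    rw [tendsto_pi_nhds] at ht' ⊢
    intro i
    refine (ht' i).congr' ?_
    filter_upwards [hU (eventually_gt_atTop i)] with k hk
    exact min_eq_left (hb k i hk)
  have hft : Tendsto (fun k => f (H k)) U (𝓝 (f h)) := (hf.tendsto h).comp ht
  have hxt : Tendsto (fun k => f (H k)) U (𝓝 (x, g)) := by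
    rw [nhds_prod_eq]
    refine Tendsto.prodMk (f := (U : Filter ℕ)) (m₁ := fun k => (f (H k)).1)
      (m₂ := fun k => (f (H k)).2) ?_ ?_
    · rw [tendsto_pi_nhds]
      intro i
      refine tendsto_const_nhds.congr' ?_
      filter_upwards [hU (eventually_gt_atTop i)] with k hk
      exact (h1 k i hk).symm
    · rw [tendsto_pi_nhds]
      intro i
      refine tendsto_const_nhds.congr' ?_
      filter_upwards [hU (h2 i)] with k hk
      exact hk.symm
  exact ⟨h, tendsto_nhds_unique hft hxt⟩

/-- If no `h` solves `f h = (x, g)`, the branch of `g` is orthogonal to the family. -/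
theorem branch_orth (f : (ℕ → ℕ) → (ℕ → Bool) × (ℕ → ℕ)) (hf : Continuous f)
    (x : ℕ → Bool) (g : ℕ → ℕ) (y : ℕ → Bool) (hy : y ∈ KK f x) (hyi : InfiniteB y)
    (hyg : ∀ a, y a = true → ∃ n, a = res g n) : ∃ h, f h = (x, g) := by
  have hD : {n | y (res g n) = true}.Infinite := by
    intro hfin
    refine hyi ((hfin.image (res g)).subset ?_)
    intro a ha
    obtain ⟨n, rfl⟩ := hyg a ha
    exact ⟨n, ha, rfl⟩
  let p : ℕ → ℕ := Nat.nth (fun n => y (res g n) = true)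
  have hp : StrictMono p := Nat.nth_strictMono hD
  have hpy : ∀ n, y (res g (p n)) = true := fun n => Nat.nth_mem_of_infinite hD n
  have key := fun k => hy k (fun i => res g (p i)) (fun i _ => hpy i)
    (fun i _ => ltN_res g (hp (Nat.lt_succ_self i)))
  choose H hH using key
  refine compact_limit f hf x g p H ?_ ?_ ?_
  · intro k i hi
    have := (hH k i hi).1
    simpa [node_res] using this
  · intro k i hi
    exact (hH k i hi).2.1
  · intro i
    filter_upwards [eventually_gt_atTop (i + 1)] with k hk
    apply (hH k i (by omega)).2.2 (i + 1) hk
    have : i < p (i + 1) := hp.id_le (i + 1)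
    simp [node_res, this]

/-- An increasing chain determines a branch. -/
theorem chain_branch (s : ℕ → ℕ) (hs : ∀ m n, m < n → ltN (s m) (s n)) :
    ∃ g, ∀ n, s n = res g (node (s n)).length := by
  have hlen : ∀ n, n ≤ (node (s n)).length := by
    intro n
    induction n with
    | zero => omega
    | succ n ih => have := (hs n (n + 1) (by omega)).2; omega
  refine ⟨fun i => (node (s (i + 1)))[i]?.getD 0, fun n => node_inj ?_⟩
  rw [node_res]
  apply List.ext_getElem
  · simp
  · intro i h1 h2
    have h3 : i < (node (s (i + 1))).length := hlen (i + 1)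
    simp only [List.getElem_map, List.getElem_range]
    rw [List.getElem?_eq_getElem h3, Option.getD_some]
    rcases lt_trichotomy n (i + 1) with h | h | h
    · exact (hs _ _ h).1.getElem h1
    · subst h; rfl
    · exact ((hs _ _ h).1.getElem h3).symm

theorem exists_infinite (f : (ℕ → ℕ) → (ℕ → Bool) × (ℕ → ℕ)) (x : ℕ → Bool)
    (hx : ∀ g, ∃ h, f h = (x, g)) (A : ℕ → Bool) (hA : InfiniteB A) :
    ∃ y ∈ KK f x, InfiniteB y ∧ subB y A := by
  classical
  have hrange : ∀ q : ℕ → ℕ, Function.Injective q → (∀ n, A (q n) = true) →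
      InfiniteB (fun a => decide (a ∈ Set.range q)) ∧
      subB (fun a => decide (a ∈ Set.range q)) A := by
    intro q hq hqA
    constructor
    · have : suppB (fun a => decide (a ∈ Set.range q)) = Set.range q := by
        ext a; simp [suppB]
      rw [InfiniteB, this]
      exact Set.infinite_range_of_injective hq
    · intro a ha
      simp at ha
      obtain ⟨n, rfl⟩ := ha
      exact hqA n
  have hA' : {n | A n = true}.Infinite := hA
  let e : ℕ → ℕ := Nat.nth (fun n => A n = true)
  have he : Function.Injective e := Nat.nth_injective hA'
  have heA : ∀ n, A (e n) = true := fun n => Nat.nth_mem_of_infinite hA' n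
  have : IsTrans ℕ ltN := ⟨fun _ _ _ => ltN_trans⟩
  have : IsTrans ℕ (fun a b => ltN b a) := ⟨fun _ _ _ h h' => ltN_trans h' h⟩
  obtain ⟨φ, hφ | hφ⟩ := exists_increasing_or_nonincreasing_subseq ltN e
  · obtain ⟨g, hg⟩ := chain_branch (fun n => e (φ n)) hφ
    obtain ⟨h, hh⟩ := hx g
    have hmono : StrictMono fun n => (node (e (φ n))).length := fun m n hmn => (hφ m n hmn).2
    -- choose a sparse subsequence
    obtain ⟨ψ, hψ, hψh⟩ : ∃ ψ : ℕ → ℕ, StrictMono ψ ∧ ∀ i, h i ≤ ψ i := by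
      refine ⟨fun n => ∑ i ∈ Finset.range (n + 1), (h i + 1), ?_, ?_⟩
      · apply strictMono_nat_of_lt_succ
        intro n
        rw [Finset.sum_range_succ _ (n + 1)]
        omega
      · intro i
        change h i ≤ ∑ i ∈ Finset.range (i + 1), (h i + 1)
        rw [Finset.sum_range_succ]
        omega
    let q : ℕ → ℕ := fun i => e (φ (ψ i))
    have hqlt : ∀ m n, m < n → ltN (q m) (q n) := fun m n hmn => hφ _ _ (hψ hmn)
    have hq : Function.Injective q := he.comp (φ.injective.comp hψ.injective)
    refine ⟨fun a => decide (a ∈ Set.range q), ?_, hrange q hq fun n => heA _⟩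
    intro k s hs hs'
    have hs2 : ∀ i ≤ k, ∃ j, q j = s i := by
      intro i hi
      simpa using hs i hi
    have hs3 : ∀ i ≤ k, ∃ j, i ≤ j ∧ q j = s i := by
      intro i
      induction i with
      | zero => intro hi; obtain ⟨j, hj⟩ := hs2 0 hi; exact ⟨j, by omega, hj⟩
      | succ i ih =>
        intro hi
        obtain ⟨j, hij, hj⟩ := ih (by omega)
        obtain ⟨j', hj'⟩ := hs2 (i + 1) hi
        refine ⟨j', ?_, hj'⟩
        have hl := hs' i (by omega)
        rw [← hj, ← hj'] at hl
        by_contra hcon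
        have hle : j' ≤ j := by omega
        rcases hle.lt_or_eq with h1 | h1
        · have := (hqlt _ _ h1).2
          have := hl.2
          omega
        · subst h1
          exact lt_irrefl _ hl.2
    refine ⟨h, fun i hi => ⟨?_, ?_, ?_⟩⟩
    · obtain ⟨j, hij, hj⟩ := hs3 i hi.le
      rw [← hj]
      calc h i ≤ ψ i := hψh i
        _ ≤ ψ j := hψ.monotone hij
        _ ≤ _ := hmono.id_le (ψ j)
    · rw [hh]
    · intro j hj v hv
      obtain ⟨j', -, hj'⟩ := hs3 j hj.le
      rw [← hj', show q j' = _ from hg (ψ j'), node_res] at hv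
      rw [hh]
      simp at hv
      grind
  · obtain ⟨χ, hχ | hχ⟩ :=
      exists_increasing_or_nonincreasing_subseq (fun a b => ltN b a) (fun n => e (φ n))
    · exfalso
      have hd : ∀ n, (node (e (φ (χ n)))).length + n ≤ (node (e (φ (χ 0)))).length := by
        intro n
        induction n with
        | zero => simp
        | succ n ih =>
          have := (hχ n (n + 1) (by omega)).2
          omega
      have := hd ((node (e (φ (χ 0)))).length + 1)
      omega
    · let q : ℕ → ℕ := fun i => e (φ (χ i))
      have hq : Function.Injective q := he.comp (φ.injective.comp χ.injective)
      refine ⟨fun a => decide (a ∈ Set.range q), ?_, hrange q hq fun n => heA _⟩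
      intro k s hs hs'
      rcases Nat.eq_zero_or_pos k with rfl | hk
      · exact ⟨fun _ => 0, fun i hi => by omega⟩
      · exfalso
        have h0 : ∃ i, q i = s 0 := by simpa using hs 0 (by omega)
        have h1 : ∃ i, q i = s 1 := by simpa using hs 1 hk
        obtain ⟨i, hi⟩ := h0
        obtain ⟨j, hj⟩ := h1
        have hl := hs' 0 hk
        rw [zero_add, ← hi, ← hj] at hl
        rcases lt_trichotomy i j with h | h | h
        · exact hφ _ _ (χ.strictMono h) hl
        · subst h; exact lt_irrefl _ hl.2
        · exact hχ _ _ h hl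

/-- For every `Σ¹₂` set `X ⊆ 2^ℕ` there is a continuous map `σ` from `2^ℕ` to the hyperspace of
compact subsets of `2^ℕ` such that `x ∈ X` iff the ideal `I_{σ(x)}` is not tall.  (In particular,
the set of codes of tall ideals is `Π¹₂`-hard.) -/
theorem sigma12_reduces_to_non_tall_codes (X : Set (ℕ → Bool)) (hX : IsSigma12 X) :
    ∃ σ : (ℕ → Bool) → TopologicalSpace.NonemptyCompacts (ℕ → Bool),
      Continuous σ ∧
      ∀ x : ℕ → Bool, x ∈ X ↔ ¬ IsTallB (IdealOfCode (σ x : Set (ℕ → Bool))) := by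
  obtain ⟨C, hC, rfl⟩ := hX
  rw [MeasureTheory.AnalyticSet] at hC
  rcases hC with hC | ⟨f, hf, hfr⟩
  · have hC' : C = Set.univ := by simpa using hC
    subst hC'
    refine ⟨fun _ => ⟨⟨{fun _ => false}, isCompact_singleton⟩, Set.singleton_nonempty _⟩,
      continuous_const, fun x => ?_⟩
    have hher : ∀ y ∈ ({fun _ => false} : Set (ℕ → Bool)), ∀ z, subB z y →
        z ∈ ({fun _ => false} : Set (ℕ → Bool)) := by
      rintro y rfl z hz
      funext a
      by_contra hne
      have := hz a (by simpa using hne)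
      simp at this
    refine ⟨fun _ => ?_, fun _ => ⟨fun _ => 0, trivial⟩⟩
    change ¬ IsTallB (IdealOfCode {fun _ => false})
    rw [tall_iff _ hher]
    intro hcon
    obtain ⟨y, rfl, hy, -⟩ := hcon (fun _ => true) (by simpa [InfiniteB, suppB] using Set.infinite_univ)
    simp [InfiniteB, suppB] at hy
  · have hmem : ∀ x g, (x, g) ∈ C ↔ ¬ ∃ h, f h = (x, g) := by
      intro x g
      have : (x, g) ∈ Set.range f ↔ (x, g) ∈ Cᶜ := by rw [hfr]
      rw [Set.mem_range] at this
      rw [this]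
      simp
    let σ : (ℕ → Bool) → TopologicalSpace.NonemptyCompacts (ℕ → Bool) := fun x =>
      ⟨⟨KK f x, (KK_closed f x).isCompact⟩, ⟨fun _ => false, fun k s hs => by
        have := hs 0 (by omega)
        simp at this⟩⟩
    refine ⟨σ, continuous_of_local (KK f) (KK_closed f) (KK_her f) (KK_loc f) σ fun x => rfl,
      fun x => ?_⟩
    change _ ↔ ¬ IsTallB (IdealOfCode (KK f x))
    rw [tall_iff _ (KK_her f x)]
    constructor
    · rintro ⟨g, hg⟩ hcon
      classical
      obtain ⟨y, hy, hyi, hyg⟩ := hcon (fun a => decide (a ∈ Set.range (res g))) (by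
        have : suppB (fun a => decide (a ∈ Set.range (res g))) = Set.range (res g) := by
          ext a; simp [suppB]
        rw [InfiniteB, this]
        exact Set.infinite_range_of_injective (res_inj g))
      refine (hmem x g).1 hg (branch_orth f hf x g y hy hyi fun a ha => ?_)
      have := hyg a ha
      simp at this
      obtain ⟨n, hn⟩ := this
      exact ⟨n, hn.symm⟩
    · intro hcon
      by_contra hx
      apply hcon
      intro A hA
      refine exists_infinite f x (fun g => ?_) A hA
      by_contra hg
      exact hx ⟨g, (hmem x g).2 hg⟩
end

section
/- There is no minimal tall Borel ideal in the Katětov order: there is no tall Borel ideal J on ℕ such that J ≤_K I for every tall Borel ideal I on ℕ. -/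
namespace NoMin
open MeasureTheory Topology Set

/-- Initial segment of length `n`. -/
def pre {β : Type} (f : ℕ → β) : ℕ → List β
  | 0 => []
  | n + 1 => pre f n ++ [f n]

@[simp] lemma pre_length {β : Type} (f : ℕ → β) (n : ℕ) : (pre f n).length = n := by
  induction n with
  | zero => rfl
  | succ n ih => simp [pre, ih]

lemma pre_mono_seg {β : Type} (f : ℕ → β) {m n : ℕ} (h : m ≤ n) : pre f m <+: pre f n := by
  induction n, h using Nat.le_induction with
  | base => exact List.prefix_rfl
  | succ n _ ih => exact ih.trans (List.prefix_append _ _)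

lemma pre_take {β : Type} (f : ℕ → β) {m n : ℕ} (h : m ≤ n) : (pre f n).take m = pre f m := by
  have := List.prefix_iff_eq_take.1 (pre_mono_seg f h)
  rw [pre_length] at this
  exact this.symm

lemma pre_injective {β : Type} (f : ℕ → β) : Function.Injective (pre f) := by
  intro m n h
  have := congrArg List.length h
  simpa using this

lemma pre_eq_imp {β : Type} {f g : ℕ → β} {n : ℕ} (h : pre f n = pre g n) :
    ∀ i < n, f i = g i := by
  induction n with
  | zero => intro i hi; omega
  | succ n ih =>
    have h' := List.append_inj h (by simp)
    intro i hi
    rcases Nat.lt_succ_iff_lt_or_eq.1 hi with h1 | h1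
    · exact ih h'.1 i h1
    · subst h1; simpa using h'.2

lemma pre_congr {β : Type} {f g : ℕ → β} {n : ℕ} (h : ∀ i < n, f i = g i) :
    pre f n = pre g n := by
  induction n with
  | zero => rfl
  | succ n ih =>
    simp only [pre]
    rw [ih (fun i hi => h i (by omega)), h n (by omega)]

lemma pre_locConst {β : Type} [TopologicalSpace β] [DiscreteTopology β] (n : ℕ) :
    IsLocallyConstant (fun f : ℕ → β => pre f n) := by
  induction n with
  | zero => exact IsLocallyConstant.const _
  | succ n ih =>
    have h : IsLocallyConstant (fun f : ℕ → β => f n) :=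
      (IsLocallyConstant.iff_continuous _).2 (continuous_apply n)
    exact ih.comp₂ h (fun a b => a ++ [b])

/-- Code of a triple. -/
def code (a : List Bool) (b c : List ℕ) : ℕ := Encodable.encode (a, b, c)

lemma code_inj {a a' : List Bool} {b c b' c' : List ℕ} (h : code a b c = code a' b' c') :
    a = a' ∧ b = b' ∧ c = c' := by
  have := Encodable.encode_injective h
  simpa using this

/-- The tree condition. -/
def Tr (x : ℕ → Bool) (s : List ℕ) (z : ℕ → ℕ) (k : ℕ) : Prop :=
  ∀ j < k, x (code (pre x j) (s.take j) (pre z j)) = true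

/-- The compact hereditary family. -/
def KK (x : ℕ → Bool) : Set (List ℕ → Bool) :=
  {B | ∀ (k : ℕ) (t : ℕ → List ℕ), (∀ i ≤ k, B (t i) = true) →
    (∀ i < k, t i <+: t (i + 1) ∧ t i ≠ t (i + 1)) →
    ∃ z : ℕ → ℕ, (∀ i, z i ≤ (t i).length) ∧ Tr x (t k) z k}

/-- The ideal generated by the family. -/
def II (x : ℕ → Bool) : Set (List ℕ → Bool) :=
  {B | ∃ n : ℕ, ∃ b : ℕ → List ℕ → Bool, (∀ i, b i ∈ KK x) ∧
    ∀ a, B a = true → ∃ i < n, b i a = true}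

lemma anti_mem (x : ℕ → Bool) (B : List ℕ → Bool)
    (h : ∀ s t, B s = true → B t = true → s <+: t → s = t) : B ∈ KK x := by
  intro k t ht hc
  rcases Nat.eq_zero_or_pos k with rfl | hk
  · exact ⟨fun _ => 0, fun _ => Nat.zero_le _, fun j hj => by omega⟩
  · exact absurd (h _ _ (ht 0 (by omega)) (ht 1 (by omega)) (hc 0 hk).1) (hc 0 hk).2

lemma KK_sub_II {x : ℕ → Bool} {B : List ℕ → Bool} (h : B ∈ KK x) : B ∈ II x :=
  ⟨1, fun _ => B, fun _ => h, fun _ ha => ⟨0, by omega, ha⟩⟩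

lemma II_sub {x : ℕ → Bool} {B C : List ℕ → Bool} (h : B ∈ II x) (hs : subB C B) : C ∈ II x := by
  obtain ⟨n, b, hb, hc⟩ := h
  exact ⟨n, b, hb, fun a ha => hc a (hs a ha)⟩

lemma II_union {x : ℕ → Bool} {B C : List ℕ → Bool} (h : B ∈ II x) (h' : C ∈ II x) :
    unionB B C ∈ II x := by
  obtain ⟨n, b, hb, hc⟩ := h
  obtain ⟨n', b', hb', hc'⟩ := h'
  refine ⟨n + n', fun i => if i < n then b i else b' (i - n), ?_, ?_⟩
  · intro i
    dsimp only
    split_ifs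
    · exact hb i
    · exact hb' _
  · intro a ha
    simp only [unionB, Bool.or_eq_true] at ha
    rcases ha with ha | ha
    · obtain ⟨i, hi, h1⟩ := hc a ha
      exact ⟨i, by omega, by simpa [hi] using h1⟩
    · obtain ⟨i, hi, h1⟩ := hc' a ha
      exact ⟨n + i, by omega, by simpa using h1⟩

lemma II_ideal (x : ℕ → Bool) : IsIdealB (II x) :=
  ⟨fun _ hx _ hs => II_sub hx hs, fun _ hx _ hy => II_union hx hy⟩

lemma II_fin (x : ℕ → Bool) : ContainsFinB (II x) := by
  intro B hB
  suffices H : ∀ S : Set (List ℕ), S.Finite → ∀ B, suppB B = S → B ∈ II x from H _ hB _ rfl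
  intro S hS
  induction S, hS using Set.Finite.induction_on with
  | empty =>
    intro B hB
    refine ⟨0, fun _ => fun _ => false, fun _ => anti_mem _ _ (by simp), ?_⟩
    intro a ha
    have : a ∈ suppB B := ha
    simp [hB] at this
  | @insert a S _ _ ih =>
    intro B hB
    classical
    have h1 : (fun s => decide (s ∈ S)) ∈ II x := ih _ (by ext; simp [suppB])
    have h2 : (fun s => decide (s = a)) ∈ II x := by
      apply KK_sub_II
      apply anti_mem
      intro s t hs ht _
      simp at hs ht
      rw [hs, ht]
    refine II_sub (II_union h1 h2) ?_
    intro s hs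
    have : s ∈ suppB B := hs
    rw [hB] at this
    simp only [unionB, Bool.or_eq_true, decide_eq_true_eq]
    exact this.symm

lemma evalCont : Continuous (fun p : (ℕ → Bool) × ℕ => p.1 p.2) := by
  rw [continuous_prod_of_discrete_right]
  intro n
  exact continuous_apply n

lemma Tr_closed (s : List ℕ) (k : ℕ) :
    IsClosed {p : (ℕ → Bool) × (ℕ → ℕ) | Tr p.1 s p.2 k} := by
  simp only [Tr, ofPred_forall]
  refine isClosed_iInter fun j => isClosed_iInter fun _ => ?_
  have h1 : IsLocallyConstant (fun p : (ℕ → Bool) × (ℕ → ℕ) => pre p.1 j) :=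
    (pre_locConst j).comp_continuous continuous_fst
  have h2 : IsLocallyConstant (fun p : (ℕ → Bool) × (ℕ → ℕ) => pre p.2 j) :=
    (pre_locConst j).comp_continuous continuous_snd
  have h3 : Continuous (fun p : (ℕ → Bool) × (ℕ → ℕ) => code (pre p.1 j) (s.take j) (pre p.2 j)) :=
    (h1.comp₂ h2 (fun a b => code a (s.take j) b)).continuous
  have h4 := evalCont.comp (continuous_fst.prodMk h3)
  exact isClosed_eq h4 continuous_const

lemma bdd_compact (b : ℕ → ℕ) : IsCompact {z : ℕ → ℕ | ∀ i, z i ≤ b i} := by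
  have : {z : ℕ → ℕ | ∀ i, z i ≤ b i} = Set.pi univ (fun i => Set.Iic (b i)) := by
    ext z; simp [Pi.le_def]
  rw [this]
  exact isCompact_univ_pi fun i => (Set.finite_Iic _).isCompact

lemma KK_closed : IsClosed {p : (ℕ → Bool) × (List ℕ → Bool) | p.2 ∈ KK p.1} := by
  have e : {p : (ℕ → Bool) × (List ℕ → Bool) | p.2 ∈ KK p.1} =
      ⋂ (k : ℕ), ⋂ (t : ℕ → List ℕ), {p : (ℕ → Bool) × (List ℕ → Bool) |
        (∀ i ≤ k, p.2 (t i) = true) → (∀ i < k, t i <+: t (i + 1) ∧ t i ≠ t (i + 1)) →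
        ∃ z : ℕ → ℕ, (∀ i, z i ≤ (t i).length) ∧ Tr p.1 (t k) z k} := by
    ext p
    simp only [mem_iInter]
    exact Iff.rfl
  rw [e]
  refine isClosed_iInter fun k => isClosed_iInter fun t => ?_
  have hA : IsOpen {p : (ℕ → Bool) × (List ℕ → Bool) | ∀ i ≤ k, p.2 (t i) = true} := by
    have : {p : (ℕ → Bool) × (List ℕ → Bool) | ∀ i ≤ k, p.2 (t i) = true}
        = ⋂ i ∈ Set.Iic k, {p : (ℕ → Bool) × (List ℕ → Bool) | p.2 (t i) = true} := by
      ext; simp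
    rw [this]
    refine (Set.finite_Iic k).isOpen_biInter fun i _ => ?_
    have hc : Continuous (fun p : (ℕ → Bool) × (List ℕ → Bool) => p.2 (t i)) :=
      (continuous_apply (t i)).comp continuous_snd
    exact (isOpen_discrete {true}).preimage hc
  have hC : IsClosed {x : ℕ → Bool | ∃ z : ℕ → ℕ, (∀ i, z i ≤ (t i).length) ∧ Tr x (t k) z k} := by
    have := isCompact_iff_compactSpace.1 (bdd_compact (fun i => (t i).length))
    have h := isClosedMap_fst_of_compactSpace (X := ℕ → Bool)
      (Y := {z : ℕ → ℕ | ∀ i, z i ≤ (t i).length})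
    have hcl : IsClosed {p : (ℕ → Bool) × {z : ℕ → ℕ | ∀ i, z i ≤ (t i).length} |
        Tr p.1 (t k) p.2.1 k} :=
      (Tr_closed (t k) k).preimage
        (continuous_fst.prodMk (continuous_subtype_val.comp continuous_snd))
    convert h _ hcl using 1
    ext x
    simp only [mem_ofPred_eq, mem_image, Prod.exists, exists_and_right, exists_eq_right,
      Subtype.exists]
    constructor
    · rintro ⟨z, h1, h2⟩; exact ⟨z, h1, h2⟩
    · rintro ⟨z, h1, h2⟩; exact ⟨z, h1, h2⟩
  have hC' := hC.preimage (continuous_fst (X := ℕ → Bool) (Y := List ℕ → Bool))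
  have : IsClosed ({p : (ℕ → Bool) × (List ℕ → Bool) | ∀ i ≤ k, p.2 (t i) = true}ᶜ ∪
    ({p | ¬ (∀ i < k, t i <+: t (i + 1) ∧ t i ≠ t (i + 1))} ∪
      Prod.fst ⁻¹' {x : ℕ → Bool | ∃ z : ℕ → ℕ, (∀ i, z i ≤ (t i).length) ∧ Tr x (t k) z k})) :=
    hA.isClosed_compl.union (isClosed_const.union hC')
  convert this using 1
  ext p
  simp only [mem_ofPred_eq, mem_union, mem_compl_iff, mem_preimage]
  tauto

lemma II_meas : MeasurableSet {p : (ℕ → Bool) × (List ℕ → Bool) | p.2 ∈ II p.1} := by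
  have e : {p : (ℕ → Bool) × (List ℕ → Bool) | p.2 ∈ II p.1} =
      ⋃ (n : ℕ), {p : (ℕ → Bool) × (List ℕ → Bool) | ∃ b : ℕ → List ℕ → Bool,
        (∀ i, b i ∈ KK p.1) ∧ ∀ a, p.2 a = true → ∃ i < n, b i a = true} := by
    ext p
    simp only [mem_iUnion]
    exact Iff.rfl
  rw [e]
  refine MeasurableSet.iUnion fun n => IsClosed.measurableSet ?_
  have h := isClosedMap_fst_of_compactSpace (X := (ℕ → Bool) × (List ℕ → Bool))
      (Y := ℕ → List ℕ → Bool)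
  have hcl : IsClosed {q : ((ℕ → Bool) × (List ℕ → Bool)) × (ℕ → List ℕ → Bool) |
      (∀ i, q.2 i ∈ KK q.1.1) ∧ ∀ a, q.1.2 a = true → ∃ i < n, q.2 i a = true} := by
    refine IsClosed.and ?_ ?_
    · simp only [ofPred_forall]
      refine isClosed_iInter fun i => ?_
      exact KK_closed.preimage (f := fun q : ((ℕ → Bool) × (List ℕ → Bool)) ×
        (ℕ → List ℕ → Bool) => (q.1.1, q.2 i)) (by fun_prop)
    · simp only [ofPred_forall]
      refine isClosed_iInter fun a => ?_
      refine isClosed_imp ?_ ?_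
      · exact (isOpen_discrete {true}).preimage (f := fun q : ((ℕ → Bool) × (List ℕ → Bool)) ×
          (ℕ → List ℕ → Bool) => q.1.2 a) (by fun_prop)
      · have : {q : ((ℕ → Bool) × (List ℕ → Bool)) × (ℕ → List ℕ → Bool) |
            ∃ i < n, q.2 i a = true} = ⋃ i ∈ Set.Iio n,
            {q : ((ℕ → Bool) × (List ℕ → Bool)) × (ℕ → List ℕ → Bool) | q.2 i a = true} := by
          ext; simp
        rw [this]
        refine (Set.finite_Iio n).isClosed_biUnion fun i _ => ?_
        exact (isClosed_discrete {true}).preimage (f := fun q : ((ℕ → Bool) × (List ℕ → Bool)) ×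
          (ℕ → List ℕ → Bool) => q.2 i a) (by fun_prop)
  convert h _ hcl using 1
  ext p
  simp

/-- The good parameters: every `y` has a witness `z`. -/
def Wit (x : ℕ → Bool) (y : ℕ → ℕ) : Prop :=
  ∃ z : ℕ → ℕ, ∀ j, x (code (pre x j) (pre y j) (pre z j)) = true

lemma wit_of_tall {x : ℕ → Bool} (h : IsTallB (II x)) (y : ℕ → ℕ) : Wit x y := by
  classical
  obtain ⟨C, hC, hCi, hCs⟩ := h (fun a => decide (a ∈ Set.range (pre y))) (by
    have : suppB (fun a => decide (a ∈ Set.range (pre y))) = Set.range (pre y) := by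
      ext; simp [suppB]
    rw [InfiniteB, this]
    exact Set.infinite_range_of_injective (pre_injective y))
  obtain ⟨n, b, hb, hcov⟩ := hC
  have : ∃ i ∈ Set.Iio n, (suppB C ∩ suppB (b i)).Infinite := by
    by_contra hcon
    push Not at hcon
    apply hCi
    refine ((Set.finite_Iio n).biUnion hcon).subset ?_
    intro a ha
    obtain ⟨i, hi, h1⟩ := hcov a ha
    simp only [mem_iUnion]
    exact ⟨i, hi, ha, h1⟩
  obtain ⟨i, -, hi⟩ := this
  have hN : {m : ℕ | b i (pre y m) = true}.Infinite := by
    intro hf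
    apply hi
    refine (hf.image (pre y)).subset ?_
    rintro a ⟨ha, hb'⟩
    have := hCs a ha
    simp only [decide_eq_true_eq] at this
    obtain ⟨m, rfl⟩ := this
    exact ⟨m, hb', rfl⟩
  set φ := Nat.nth (fun m => b i (pre y m) = true) with hφ
  have hm : StrictMono φ := Nat.nth_strictMono hN
  have hmem : ∀ k, b i (pre y (φ k)) = true := fun k => Nat.nth_mem_of_infinite hN k
  have hz : ∀ k, ∃ z : ℕ → ℕ, (∀ i, z i ≤ φ i) ∧ Tr x (pre y (φ k)) z k := by
    intro k
    have := hb i k (fun i => pre y (φ i)) (fun i _ => hmem i) (fun i _ =>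
      ⟨pre_mono_seg y (hm (Nat.lt_succ_self i)).le, fun he =>
        (hm (Nat.lt_succ_self i)).ne (pre_injective y he)⟩)
    simpa using this
  have hz' : ∀ k, ∃ z : ℕ → ℕ, (∀ i, z i ≤ φ i) ∧
      ∀ j < k, x (code (pre x j) (pre y j) (pre z j)) = true := by
    intro k
    obtain ⟨z, h1, h2⟩ := hz k
    refine ⟨z, h1, fun j hj => ?_⟩
    have := h2 j hj
    rwa [pre_take y (hj.le.trans (hm.le_apply))] at this
  have hcl : ∀ k, IsClosed {z : ℕ → ℕ | (∀ i, z i ≤ φ i) ∧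
      ∀ j < k, x (code (pre x j) (pre y j) (pre z j)) = true} := by
    intro k
    refine (bdd_compact φ).isClosed.and ?_
    simp only [ofPred_forall]
    refine isClosed_iInter fun j => isClosed_iInter fun _ => ?_
    have := ((pre_locConst (β := ℕ) j).comp
      (fun l => x (code (pre x j) (pre y j) l))).continuous
    exact isClosed_eq this continuous_const
  have hne := IsCompact.nonempty_iInter_of_sequence_nonempty_isCompact_isClosed
    (fun k => {z : ℕ → ℕ | (∀ i, z i ≤ φ i) ∧
      ∀ j < k, x (code (pre x j) (pre y j) (pre z j)) = true})
    (fun k z hz => ⟨hz.1, fun j hj => hz.2 j (by omega)⟩)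
    (fun k => hz' k)
    ((bdd_compact φ).of_isClosed_subset (hcl 0) (fun z hz => hz.1)) hcl
  obtain ⟨z, hz⟩ := hne
  refine ⟨z, fun j => ?_⟩
  have := mem_iInter.1 hz (j + 1)
  exact this.2 j (by omega)

lemma tall_of_wit {x : ℕ → Bool} (h : ∀ y, Wit x y) : IsTallB (II x) := by
  classical
  intro A hA
  set f : ℕ → List ℕ := fun n => (hA.natEmbedding _ n : List ℕ) with hf
  have hfi : Function.Injective f :=
    Subtype.val_injective.comp (hA.natEmbedding _).injective
  have hfA : ∀ n, A (f n) = true := fun n => (hA.natEmbedding _ n).2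
  -- it suffices to find a good subsequence
  suffices H : ∃ g : ℕ → ℕ, StrictMono g ∧ (fun s => decide (s ∈ Set.range (f ∘ g))) ∈ KK x by
    obtain ⟨g, hg, hk⟩ := H
    refine ⟨_, KK_sub_II hk, ?_, ?_⟩
    · have : suppB (fun s => decide (s ∈ Set.range (f ∘ g))) = Set.range (f ∘ g) := by
        ext; simp [suppB]
      rw [InfiniteB, this]
      exact Set.infinite_range_of_injective (hfi.comp hg.injective)
    · intro s hs
      simp only [decide_eq_true_eq] at hs
      obtain ⟨n, rfl⟩ := hs
      exact hfA _
  have : IsTrans (List ℕ) (fun s t => s <+: t) := ⟨fun _ _ _ => List.IsPrefix.trans⟩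
  have : IsTrans (List ℕ) (fun s t => t <+: s) := ⟨fun _ _ _ h1 h2 => h2.trans h1⟩
  obtain ⟨g, hg | hg⟩ := exists_increasing_or_nonincreasing_subseq (fun s t : List ℕ => s <+: t) f
  · -- chain
    have hlen : StrictMono (fun n => (f (g n)).length) := by
      refine strictMono_nat_of_lt_succ fun n => ?_
      have hp := hg n (n + 1) (by omega)
      refine lt_of_le_of_ne hp.length_le fun he => ?_
      have := g.injective (hfi (hp.eq_of_length he))
      omega
    set y : ℕ → ℕ := fun i => (f (g (i + 1))).getD i 0 with hy
    have hpre : ∀ n, f (g n) = pre y (f (g n)).length := by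
      intro n
      have key : ∀ m ≤ (f (g n)).length, (f (g n)).take m = pre y m := by
        intro m
        induction m with
        | zero => intro _; simp [pre]
        | succ m ih =>
          intro hm
          rw [List.take_add_one, ih (by omega), pre]
          congr 1
          have hm' : m < (f (g n)).length := by omega
          have hm2 : m < (f (g (m + 1))).length :=
            lt_of_lt_of_le (Nat.lt_succ_self m) (hlen.le_apply (x := m + 1))
          rw [List.getElem?_eq_getElem hm']
          simp only [hy, Option.toList_some, List.cons.injEq, and_true]
          rw [List.getD_eq_getElem _ _ hm2]
          rcases lt_trichotomy n (m + 1) with h1 | h1 | h1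
          · exact (hg _ _ h1).getElem hm'
          · subst h1; rfl
          · exact ((hg _ _ h1).getElem hm2).symm
      have := key _ le_rfl
      rwa [List.take_length] at this
    obtain ⟨z, hz⟩ := h y
    -- thin out
    let M : ℕ → ℕ := fun j => ∑ i ∈ Finset.range (j + 1), z i
    have hM : ∀ i j, i ≤ j → z i ≤ M j := fun i j hij =>
      Finset.single_le_sum (f := z) (fun _ _ => Nat.zero_le _) (Finset.mem_range.2 (by omega))
    let ψ : ℕ → ℕ := fun j => j + M j
    have hMm : Monotone M := by
      intro a b hab
      exact Finset.sum_le_sum_of_subset (Finset.range_mono (by omega))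
    have hψ : StrictMono ψ := fun a b hab => by
      have := hMm hab.le
      show a + M a < b + M b
      omega
    refine ⟨fun j => g (ψ j), g.strictMono.comp hψ, ?_⟩
    intro k t ht hc
    have hidx : ∀ i ≤ k, ∃ j, i ≤ j ∧ t i = f (g (ψ j)) := by
      intro i
      induction i with
      | zero =>
        intro hi
        have := ht 0 hi
        simp only [decide_eq_true_eq] at this
        obtain ⟨j, hj⟩ := this
        exact ⟨j, Nat.zero_le _, hj.symm⟩
      | succ i ih =>
        intro hi
        obtain ⟨j, hj, hj'⟩ := ih (by omega)
        have := ht (i + 1) hi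
        simp only [decide_eq_true_eq] at this
        obtain ⟨j', hj2⟩ := this
        refine ⟨j', ?_, hj2.symm⟩
        have hh := hc i (by omega)
        have hlt : (t i).length < (t (i + 1)).length :=
          lt_of_le_of_ne hh.1.length_le fun he => hh.2 (hh.1.eq_of_length he)
        rw [hj', ← hj2] at hlt
        have : j < j' := (hlen.comp hψ).lt_iff_lt.1 hlt
        omega
    have hb : ∀ i ≤ k, z i ≤ (t i).length ∧ i ≤ (t i).length ∧ t i = pre y (t i).length := by
      intro i hi
      obtain ⟨j, hj, hj'⟩ := hidx i hi
      have h1 : ψ j ≤ (t i).length := by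
        rw [hj']; exact hlen.le_apply (x := ψ j)
      have h2 : j + M j ≤ (t i).length := h1
      have h3 := hM i j hj
      refine ⟨by omega, by omega, ?_⟩
      rw [hj']; exact hpre _
    refine ⟨fun i => min (z i) (t i).length, fun i => min_le_right _ _, ?_⟩
    intro j hj
    have e1 : pre (fun i => min (z i) (t i).length) j = pre z j :=
      pre_congr fun i hi => min_eq_left (hb i (by omega)).1
    obtain ⟨-, h2, h3⟩ := hb k le_rfl
    rw [e1, h3, pre_take y (by omega)]
    exact hz j
  · obtain ⟨g', hg' | hg'⟩ := exists_increasing_or_nonincreasing_subseq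
      (fun s t : List ℕ => t <+: s) (f ∘ g)
    · exfalso
      have hanti : StrictAnti (fun n => (f (g (g' n))).length) := by
        refine strictAnti_nat_of_succ_lt fun n => ?_
        have hp := hg' n (n + 1) (by omega)
        refine lt_of_le_of_ne hp.length_le fun he => ?_
        have := g'.injective (g.injective (hfi (hp.eq_of_length he)))
        omega
      exact WellFounded.not_rel_apply_succ (r := ((· < ·) : ℕ → ℕ → Prop))
        (fun n => (f (g (g' n))).length) |>.elim fun n hn => hn (hanti (Nat.lt_succ_self n))
    · refine ⟨fun n => g (g' n), g.strictMono.comp g'.strictMono, anti_mem _ _ ?_⟩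
      intro s t hs ht hst
      simp only [decide_eq_true_eq] at hs ht
      obtain ⟨m, rfl⟩ := hs
      obtain ⟨n, rfl⟩ := ht
      rcases lt_trichotomy m n with h1 | h1 | h1
      · exact absurd hst (hg _ _ (g'.strictMono h1))
      · rw [h1]
      · exact absurd hst (hg' _ _ h1)

lemma tall_of_kat {α β : Type} {J : Set (α → Bool)} {I : Set (β → Bool)} (hJf : ContainsFinB J)
    (hJ : IsTallB J) (hI : IsIdealB I) (h : KatLE J I) : IsTallB I := by
  classical
  obtain ⟨f, hf⟩ := h
  intro A hA
  by_cases hfin : (f '' suppB A).Finite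
  · have : ∃ a ∈ f '' suppB A, (suppB A ∩ f ⁻¹' {a}).Infinite := by
      by_contra hcon
      push Not at hcon
      apply hA
      refine (hfin.biUnion hcon).subset ?_
      intro b hb
      simp only [mem_iUnion]
      exact ⟨f b, ⟨b, hb, rfl⟩, hb, rfl⟩
    obtain ⟨a, -, ha⟩ := this
    have h1 := hf (fun s => decide (s = a)) (hJf _ (by
      refine (Set.finite_singleton a).subset ?_
      intro s hs
      simpa [suppB] using hs))
    refine ⟨fun b => A b && decide (f b = a), hI.1 _ h1 _ ?_, ?_, ?_⟩
    · intro b hb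
      simp only [Bool.and_eq_true] at hb
      exact hb.2
    · refine Set.Infinite.mono ?_ ha
      rintro b ⟨hb, hb'⟩
      have hb2 : f b = a := hb'
      have hb1 : A b = true := hb
      simp [suppB, hb1, hb2]
    · intro b hb
      simp only [Bool.and_eq_true] at hb
      exact hb.1
  · obtain ⟨C, hC, hCi, hCs⟩ := hJ (fun a => decide (a ∈ f '' suppB A)) (by
      have : suppB (fun a => decide (a ∈ f '' suppB A)) = f '' suppB A := by
        ext; simp [suppB]
      rw [InfiniteB, this]
      exact hfin)
    refine ⟨fun b => A b && C (f b), hI.1 _ (hf C hC) _ ?_, ?_, ?_⟩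
    · intro b hb
      simp only [Bool.and_eq_true] at hb
      exact hb.2
    · intro hfin2
      apply hCi
      refine (hfin2.image f).subset ?_
      intro a ha
      have := hCs a ha
      simp only [decide_eq_true_eq] at this
      obtain ⟨b, hb, rfl⟩ := this
      refine ⟨b, ?_, rfl⟩
      have hb1 : A b = true := hb
      have ha1 : C (f b) = true := ha
      simp [suppB, hb1, ha1]
    · intro b hb
      simp only [Bool.and_eq_true] at hb
      exact hb.1

/-- Recursion-theorem style diagonalization for analytic sets. -/
lemma exists_code (E : Set ((ℕ → Bool) × (ℕ → ℕ))) (hE : AnalyticSet E) :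
    ∃ c : ℕ → Bool, ∀ y, Wit c y ↔ (c, y) ∈ E := by
  classical
  obtain ⟨F, hF, hFE⟩ : ∃ F : Set ((ℕ → Bool) × (ℕ → ℕ) × (ℕ → ℕ)), IsClosed F ∧
      ∀ x y, (x, y) ∈ E ↔ ∃ z, (x, y, z) ∈ F := by
    rw [AnalyticSet] at hE
    rcases hE with rfl | ⟨g, hg, rfl⟩
    · exact ⟨∅, isClosed_empty, by simp⟩
    · refine ⟨{p | g p.2.2 = (p.1, p.2.1)}, isClosed_eq (by fun_prop) (by fun_prop), ?_⟩
      intro x y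
      simp
  refine ⟨fun n => decide (∃ x y z k, (x, y, z) ∈ F ∧ n = code (pre x k) (pre y k) (pre z k)), ?_⟩
  set c : ℕ → Bool :=
    fun n => decide (∃ x y z k, (x, y, z) ∈ F ∧ n = code (pre x k) (pre y k) (pre z k)) with hc
  intro y
  rw [hFE]
  refine exists_congr fun z => ?_
  constructor
  · intro h
    have h' : ∀ j, ∃ p : (ℕ → Bool) × (ℕ → ℕ) × (ℕ → ℕ), p ∈ F ∧ pre p.1 j = pre c j ∧
        pre p.2.1 j = pre y j ∧ pre p.2.2 j = pre z j := by
      intro j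
      have hj := h j
      rw [hc] at hj
      simp only [decide_eq_true_eq] at hj
      rw [← hc] at hj
      obtain ⟨x', y', z', k, hmem, hk⟩ := hj
      obtain ⟨e1, e2, e3⟩ := code_inj hk
      have : j = k := by simpa using congrArg List.length e2
      subst this
      exact ⟨(x', y', z'), hmem, e1.symm, e2.symm, e3.symm⟩
    choose p hpF hp1 hp2 hp3 using h'
    refine hF.mem_of_tendsto (f := p) (b := Filter.atTop) ?_ (Filter.Eventually.of_forall hpF)
    have conv : ∀ {β : Type} [TopologicalSpace β] (q : ℕ → ℕ → β) (l : ℕ → β),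
        (∀ j, pre (q j) j = pre l j) → Filter.Tendsto q Filter.atTop (𝓝 l) := by
      intro β _ q l hq
      rw [tendsto_pi_nhds]
      intro i
      refine tendsto_const_nhds.congr' ?_
      filter_upwards [Filter.eventually_gt_atTop i] with j hj
      exact (pre_eq_imp (hq j) i hj).symm
    exact (conv _ _ hp1).prodMk_nhds ((conv _ _ hp2).prodMk_nhds (conv _ _ hp3))
  · intro h j
    rw [hc]
    simp only [decide_eq_true_eq]
    exact ⟨c, y, z, j, h, rfl⟩

/-- The set used for diagonalization. -/
lemma analytic_E (J : Set (ℕ → Bool)) (hJ : MeasurableSet J) (e : List ℕ → ℕ) :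
    AnalyticSet {p : (ℕ → Bool) × (ℕ → ℕ) |
      ∃ A ∈ J, (fun s => A (p.2 (e s))) ∉ II p.1} := by
  have hcont : Continuous (fun q : ((ℕ → Bool) × (ℕ → ℕ)) × (ℕ → Bool) =>
      (q.1.1, fun s => q.2 (q.1.2 (e s)))) := by
    refine (continuous_fst.comp continuous_fst).prodMk (continuous_pi fun s => ?_)
    have : Continuous (fun q : ((ℕ → Bool) × (ℕ → ℕ)) × (ℕ → Bool) => (q.2, q.1.2 (e s))) := by
      fun_prop
    exact evalCont.comp this
  have hm : MeasurableSet {q : ((ℕ → Bool) × (ℕ → ℕ)) × (ℕ → Bool) |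
      q.2 ∈ J ∧ (fun s => q.2 (q.1.2 (e s))) ∉ II q.1.1} :=
    (measurable_snd hJ).inter (hcont.measurable II_meas).compl
  have := hm.analyticSet_image (f := Prod.fst) measurable_fst
  convert this using 1
  ext p
  simp

end NoMin

/-- There is no tall Borel ideal on `ℕ` that is Katětov below every tall Borel ideal on `ℕ`
(ideals here contain all finite sets, as usual). -/
theorem no_minimal_tall_borel_ideal :
    ¬ ∃ J : Set (ℕ → Bool), IsIdealB J ∧ ContainsFinB J ∧ IsTallB J ∧ MeasurableSet J ∧
        ∀ I : Set (ℕ → Bool), IsIdealB I → ContainsFinB I → IsTallB I → MeasurableSet I →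
          KatLE J I := by
  rintro ⟨J, hJi, hJf, hJt, hJm, hmin⟩
  let e : List ℕ ≃ ℕ := Denumerable.eqv (List ℕ)
  obtain ⟨c, hc⟩ := NoMin.exists_code _ (NoMin.analytic_E J hJm e)
  simp only [Set.mem_ofPred_eq] at hc
  let I : Set (ℕ → Bool) := {A | (fun s => A (e s)) ∈ NoMin.II c}
  have hI : IsIdealB I := ⟨fun x hx y hs => (NoMin.II_ideal c).1 _ hx _ (fun s hh => hs _ hh),
    fun x hx y hy => (NoMin.II_ideal c).2 _ hx _ hy⟩
  have hIf : ContainsFinB I := fun x hx => NoMin.II_fin c _ (hx.preimage e.injective.injOn)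
  have hIm : MeasurableSet I := by
    have hmeas : Measurable (fun A : ℕ → Bool => (c, fun s => A (e s))) := by fun_prop
    exact hmeas NoMin.II_meas
  have hk1 : KatLE (NoMin.II c) I := by
    refine ⟨e.symm, fun x hx => ?_⟩
    show (fun s => x (e.symm (e s))) ∈ NoMin.II c
    simpa using hx
  have hk2 : KatLE I (NoMin.II c) := ⟨e, fun x hx => hx⟩
  have hIt : IsTallB I := by
    by_contra hnt
    have hnt2 : ¬ ∀ y, NoMin.Wit c y := fun hw =>
      hnt (NoMin.tall_of_kat (NoMin.II_fin c) (NoMin.tall_of_wit hw) hI hk1)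
    push Not at hnt2
    obtain ⟨y, hy⟩ := hnt2
    rw [hc y] at hy
    push Not at hy
    exact hnt (NoMin.tall_of_kat hJf hJt hI ⟨y, fun A hA => hy A hA⟩)
  obtain ⟨f, hf⟩ := hmin I hI hIf hIt hIm
  have hw := NoMin.wit_of_tall (NoMin.tall_of_kat hIf hIt (NoMin.II_ideal c) hk2) f
  obtain ⟨A, hA, hA'⟩ := (hc f).1 hw
  exact hA' (hf A hA)
end

section
/- For every tall analytic ideal J on ℕ there is a tall F_σ ideal I on ℕ such that J ≰_K I. -/
open Set Filter Topology

namespace TallKat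

abbrev Cant := ℕ → Bool
abbrev Bair := ℕ → ℕ

/-- A closed set which is diagonally universal. -/
lemma exists_universal : ∃ R : Set (Cant × Bair × Bair), IsClosed R ∧
    ∀ E : Set (Cant × Bair × Bair), IsClosed E →
      ∃ c : Cant, ∀ z w, (c, z, w) ∈ R ↔ (c, z, w) ∈ E := by
  classical
  obtain ⟨B, hBc, -, hB⟩ := TopologicalSpace.exists_countable_basis (Cant × Bair × Bair)
  have hne : B.Nonempty := by
    obtain ⟨v, hv, -⟩ := hB.exists_subset_of_mem_open
      (mem_univ ((fun _ => true, fun _ => 0, fun _ => 0) : Cant × Bair × Bair)) isOpen_univ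
    exact ⟨v, hv⟩
  obtain ⟨b, rfl⟩ := hBc.exists_eq_range hne
  have hbo : ∀ n, IsOpen (b n) := fun n => hB.isOpen ⟨n, rfl⟩
  refine ⟨{p | ∀ n, p.1 n = true → p ∉ b n}, ?_, ?_⟩
  · have : {p : Cant × Bair × Bair | ∀ n, p.1 n = true → p ∉ b n} =
        ⋂ n, ({p | p.1 n = true} ∩ b n)ᶜ := by
      ext p; simp
    rw [this]
    refine isClosed_iInter fun n => ?_
    rw [isClosed_compl_iff]
    refine IsOpen.inter ?_ (hbo n)
    have hc : Continuous fun p : Cant × Bair × Bair => p.1 n := by fun_prop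
    exact (isOpen_discrete {true}).preimage hc
  · intro E hE
    refine ⟨fun n => decide (Disjoint (b n) E), fun z w => ⟨fun h => ?_, fun h => ?_⟩⟩
    · by_contra hn
      obtain ⟨v, ⟨n, rfl⟩, hv, hvE⟩ := hB.exists_subset_of_mem_open
        (show _ ∈ Eᶜ from hn) hE.isOpen_compl
      refine h n ?_ hv
      simpa using disjoint_left.2 fun x hx => hvE hx
    · intro n hn hb
      have hn' : Disjoint (b n) E := by simpa using hn
      exact disjoint_left.1 hn' hb h

noncomputable def lst : ℕ ≃ List ℕ := (Denumerable.eqv (List ℕ)).symm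

noncomputable def len (a : ℕ) : ℕ := (lst a).length

def OnBr (z : Bair) (a : ℕ) : Prop := ∀ i v, (lst a)[i]? = some v → z i = v

lemma OnBr.pre_of {z : Bair} {a b : ℕ} (ha : OnBr z a) (hb : OnBr z b) (h : len a ≤ len b) :
    lst a <+: lst b := by
  rw [List.prefix_iff_getElem?]
  intro i hi
  have hi' : i < (lst b).length := lt_of_lt_of_le hi h
  have h1 := ha i _ (List.getElem?_eq_getElem hi)
  have h2 := hb i _ (List.getElem?_eq_getElem hi')
  rw [List.getElem?_eq_getElem hi', ← h1, ← h2]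

lemma OnBr.inj {z : Bair} {a b : ℕ} (ha : OnBr z a) (hb : OnBr z b) (h : len a = len b) :
    a = b :=
  lst.injective ((ha.pre_of hb h.le).eq_of_length h)

lemma exists_len {z : Bair} {S : Set ℕ} (hS : S.Infinite) (h : ∀ a ∈ S, OnBr z a) (i : ℕ) :
    ∃ a ∈ S, i < len a := by
  by_contra! hc
  apply hS
  apply Set.Finite.of_finite_image (f := len)
  · exact (Set.finite_Iic i).subset (by rintro _ ⟨a, ha, rfl⟩; exact hc a ha)
  · intro a ha b hb hab
    exact (h a ha).inj (h b hb) hab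

/-- The chains produced by `R`. -/
def Q (R : Set (Cant × Bair × Bair)) : Set (Cant × Cant) :=
  {p | ∃ z w, (p.1, z, w) ∈ R ∧ (∀ a, p.2 a = true → OnBr z a) ∧
    ∀ i, ∀ F : Finset ℕ, (∀ a ∈ F, p.2 a = true ∧ len a < w i) → F.card ≤ i}

lemma closure_Q {R : Set (Cant × Bair × Bair)} (hR : IsClosed R) {c D : Cant}
    (h : (c, D) ∈ closure (Q R)) (hD : InfiniteB D) {z : Bair} (hz : ∀ a, D a = true → OnBr z a) :
    ∃ w, (c, z, w) ∈ R := by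
  rw [mem_closure_iff_ultrafilter] at h
  obtain ⟨U, hQU, hU⟩ := h
  have hch : ∀ p : Cant × Cant, ∃ z w, p ∈ Q R → ((p.1, z, w) ∈ R ∧
      (∀ a, p.2 a = true → OnBr z a) ∧
      ∀ i, ∀ F : Finset ℕ, (∀ a ∈ F, p.2 a = true ∧ len a < w i) → F.card ≤ i) := by
    intro p
    by_cases hp : p ∈ Q R
    · obtain ⟨z, w, hh⟩ := hp
      exact ⟨z, w, fun _ => hh⟩
    · exact ⟨z, z, fun h => absurd h hp⟩
  choose zz ww hzw using hch
  have hQe : ∀ᶠ p in (U : Filter (Cant × Cant)), p ∈ Q R := hQU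
  have hDe : ∀ a, D a = true → ∀ᶠ p in (U : Filter (Cant × Cant)), p.2 a = true := by
    intro a ha
    apply hU
    have hc : Continuous fun p : Cant × Cant => p.2 a := by fun_prop
    exact ((isOpen_discrete {true}).preimage hc).mem_nhds ha
  have hw : ∀ i, ∃ m, ∀ᶠ p in (U : Filter (Cant × Cant)), ww p i = m := by
    intro i
    obtain ⟨F, hFD, hFc⟩ := Set.Infinite.exists_subset_card_eq hD (i + 1)
    have hF : ∀ᶠ p in (U : Filter (Cant × Cant)), ∀ a ∈ F, p.2 a = true := by
      rw [Filter.eventually_all_finset]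
      intro a ha
      exact hDe a (hFD ha)
    have hb : ∀ᶠ p in (U : Filter (Cant × Cant)), ww p i ∈ Set.Iic (F.sup len) := by
      filter_upwards [hF, hQe] with p hp hq
      by_contra hcon
      have := (hzw p hq).2.2 i F (fun a ha => ⟨hp a ha, ?_⟩)
      · omega
      · have := Finset.le_sup (f := len) ha
        simp only [Set.mem_Iic] at hcon
        omega
    have hb' : Set.Iic (F.sup len) ∈ U.map (fun p => ww p i) := hb
    obtain ⟨m, -, hm⟩ := Ultrafilter.eq_pure_of_finite_mem (Set.finite_Iic _) hb'
    refine ⟨m, ?_⟩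
    have : ({m} : Set ℕ) ∈ U.map (fun p => ww p i) := by rw [hm]; simp
    exact this
  choose w hw using hw
  have hzz : ∀ i, ∀ᶠ p in (U : Filter (Cant × Cant)), zz p i = z i := by
    intro i
    obtain ⟨a, ha, hi⟩ := exists_len hD hz i
    filter_upwards [hDe a ha, hQe] with p hp hq
    have h1 := (hzw p hq).2.1 a hp i _ (List.getElem?_eq_getElem hi)
    have h2 := hz a ha i _ (List.getElem?_eq_getElem hi)
    rw [h1, h2]
  refine ⟨w, ?_⟩
  have ht : Tendsto (fun p : Cant × Cant => (p.1, zz p, ww p)) U (𝓝 (c, z, w)) := by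
    refine Tendsto.prodMk_nhds ?_ (Tendsto.prodMk_nhds ?_ ?_)
    · exact (continuous_fst.tendsto (c, D)).mono_left hU
    · rw [tendsto_pi_nhds]
      exact fun i => tendsto_nhds_of_eventually_eq (hzz i)
    · rw [tendsto_pi_nhds]
      exact fun i => tendsto_nhds_of_eventually_eq (hw i)
  exact hR.mem_of_tendsto ht (hQe.mono fun p hp => (hzw p hp).1)

def Anti : Set Cant := {D | ∀ a b, D a = true → D b = true → lst a <+: lst b → a = b}

def G (R : Set (Cant × Bair × Bair)) : Set (Cant × Cant) :=
  {p | p.2 ∈ Anti} ∪ closure (Q R)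

lemma isClosed_Anti : IsClosed Anti := by
  have : Anti = ⋂ a, ⋂ b, {D : Cant | D a = true → D b = true → lst a <+: lst b → a = b} := by
    ext D; simp [Anti]
  rw [this]
  refine isClosed_iInter fun a => isClosed_iInter fun b => ?_
  have hc : Continuous fun D : Cant => (D a, D b) := by fun_prop
  exact (isClosed_discrete
    {q : Bool × Bool | q.1 = true → q.2 = true → lst a <+: lst b → a = b}).preimage hc

lemma isClosed_G (R : Set (Cant × Bair × Bair)) : IsClosed (G R) :=
  (isClosed_Anti.preimage continuous_snd).union isClosed_closure

lemma G_hered {R : Set (Cant × Bair × Bair)} {c D D' : Cant} (h : (c, D) ∈ G R)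
    (hs : subB D' D) : (c, D') ∈ G R := by
  rcases h with h | h
  · left
    exact fun a b ha hb => h a b (hs a ha) (hs b hb)
  · right
    let φ : Cant × Cant → Cant × Cant := fun p => (p.1, fun a => p.2 a && D' a)
    have hφ : Continuous φ := by
      refine continuous_fst.prodMk (continuous_pi fun a => ?_)
      have hc : Continuous fun p : Cant × Cant => p.2 a := by fun_prop
      exact (continuous_of_discreteTopology (f := fun x : Bool => x && D' a)).comp hc
    have hm : MapsTo φ (Q R) (Q R) := by
      rintro p ⟨z, w, h1, h2, h3⟩
      refine ⟨z, w, h1, fun a ha => h2 a ?_, fun i F hF => h3 i F fun a ha => ⟨?_, (hF a ha).2⟩⟩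
      · simp [φ] at ha; exact ha.1
      · have := (hF a ha).1
        simp [φ] at this; exact this.1
    have := hm.closure hφ h
    have e : φ (c, D) = (c, D') := by
      simp only [φ, Prod.mk.injEq, true_and]
      funext a
      cases hh : D' a
      · simp
      · simp [hs a hh]
    rwa [e] at this

def T (R : Set (Cant × Bair × Bair)) : ℕ → Set (Cant × Cant)
  | 0 => {p | p.2 = fun _ => false}
  | n + 1 => (fun q : Cant × Cant × Cant => (q.1, unionB q.2.1 q.2.2)) ''
      {q | (q.1, q.2.1) ∈ G R ∧ (q.1, q.2.2) ∈ T R n}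

lemma isClosed_T (R : Set (Cant × Bair × Bair)) (n : ℕ) : IsClosed (T R n) := by
  induction n with
  | zero => exact isClosed_eq continuous_snd continuous_const
  | succ n ih =>
    have h1 : IsClosed {q : Cant × Cant × Cant | (q.1, q.2.1) ∈ G R ∧ (q.1, q.2.2) ∈ T R n} :=
      ((isClosed_G R).preimage (by fun_prop : Continuous fun q : Cant × Cant × Cant =>
        (q.1, q.2.1))).inter
      (ih.preimage (by fun_prop : Continuous fun q : Cant × Cant × Cant => (q.1, q.2.2)))
    refine (h1.isCompact.image ?_).isClosed
    refine continuous_fst.prodMk (continuous_pi fun a => ?_)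
    have hc : Continuous fun q : Cant × Cant × Cant => (q.2.1 a, q.2.2 a) := by fun_prop
    exact (continuous_of_discreteTopology (f := fun x : Bool × Bool => x.1 || x.2)).comp hc

lemma mem_T_succ {R : Set (Cant × Bair × Bair)} {n : ℕ} {c A : Cant} :
    (c, A) ∈ T R (n + 1) ↔ ∃ D D', (c, D) ∈ G R ∧ (c, D') ∈ T R n ∧ unionB D D' = A := by
  constructor
  · rintro ⟨⟨c', D, D'⟩, ⟨h1, h2⟩, h⟩
    simp only [Prod.mk.injEq] at h
    obtain ⟨rfl, h⟩ := h
    exact ⟨D, D', h1, h2, h⟩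
  · rintro ⟨D, D', h1, h2, h⟩
    exact ⟨(c, D, D'), ⟨h1, h2⟩, by simp [h]⟩

def Id (R : Set (Cant × Bair × Bair)) (c : Cant) : Set Cant := {A | ∃ n, (c, A) ∈ T R n}

lemma T_hered {R : Set (Cant × Bair × Bair)} {c : Cant} {n : ℕ} : ∀ {A B : Cant},
    (c, A) ∈ T R n → subB B A → (c, B) ∈ T R n := by
  induction n with
  | zero =>
    intro A B h hs
    change A = _ at h
    change B = _
    funext a
    have := hs a
    subst h
    simpa using this
  | succ n ih =>
    intro A B h hs
    rw [mem_T_succ] at h ⊢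
    obtain ⟨D, D', h1, h2, rfl⟩ := h
    refine ⟨fun a => D a && B a, fun a => D' a && B a, G_hered h1 ?_, ih h2 ?_, ?_⟩
    · intro a ha; simp at ha; exact ha.1
    · intro a ha; simp at ha; exact ha.1
    · funext a
      have := hs a
      simp only [unionB] at this ⊢
      cases hB : B a <;> simp_all

lemma T_union {R : Set (Cant × Bair × Bair)} {c : Cant} {n m : ℕ} : ∀ {A B : Cant},
    (c, A) ∈ T R n → (c, B) ∈ T R m → (c, unionB A B) ∈ T R (m + n) := by
  induction n with
  | zero =>
    intro A B h h'
    change A = _ at h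
    subst h
    have : unionB (fun _ => false) B = B := by funext a; simp [unionB]
    rw [this]; exact h'
  | succ n ih =>
    intro A B h h'
    rw [mem_T_succ] at h
    obtain ⟨D, D', h1, h2, rfl⟩ := h
    rw [← add_assoc, mem_T_succ]
    exact ⟨D, _, h1, ih h2 h', by funext a; simp [unionB, Bool.or_assoc]⟩

lemma Id_ideal (R : Set (Cant × Bair × Bair)) (c : Cant) : IsIdealB (Id R c) := by
  refine ⟨fun x ⟨n, hn⟩ y hy => ⟨n, T_hered hn hy⟩, fun x ⟨n, hn⟩ y ⟨m, hm⟩ => ⟨_, T_union hn hm⟩⟩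

lemma G_sub_Id {R : Set (Cant × Bair × Bair)} {c D : Cant} (h : (c, D) ∈ G R) : D ∈ Id R c :=
  ⟨1, mem_T_succ.2 ⟨D, fun _ => false, h, rfl, by funext a; simp [unionB]⟩⟩

lemma Id_fin (R : Set (Cant × Bair × Bair)) (c : Cant) : ContainsFinB (Id R c) := by
  classical
  have key : ∀ F : Finset ℕ, (fun a => decide (a ∈ F)) ∈ Id R c := by
    intro F
    induction F using Finset.induction_on with
    | empty => exact ⟨0, by simp [T]⟩
    | insert a F _ ih =>
      have h1 : (fun b => decide (b = a)) ∈ Id R c := by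
        refine G_sub_Id (Or.inl ?_)
        intro b b' hb hb' _
        simp at hb hb'
        rw [hb, hb']
      have := (Id_ideal R c).2 _ h1 _ ih
      convert this using 1
      funext b
      simp [unionB]
  intro x hx
  refine (Id_ideal R c).1 _ (key hx.toFinset) _ ?_
  intro a ha
  simpa [suppB] using ha

lemma Id_fsigma (R : Set (Cant × Bair × Bair)) (c : Cant) : IsFsigmaB (Id R c) := by
  refine ⟨fun n => {A | (c, A) ∈ T R n}, fun n => (isClosed_T R n).preimage (by fun_prop), ?_⟩
  ext A; simp [Id]

lemma T_infinite {R : Set (Cant × Bair × Bair)} {c : Cant} {n : ℕ} : ∀ {A : Cant},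
    (c, A) ∈ T R n → InfiniteB A → ∃ D, (c, D) ∈ G R ∧ InfiniteB D ∧ subB D A := by
  induction n with
  | zero =>
    intro A h hA
    change A = _ at h
    subst h
    simp [InfiniteB, suppB] at hA
  | succ n ih =>
    intro A h hA
    rw [mem_T_succ] at h
    obtain ⟨D, D', h1, h2, rfl⟩ := h
    have e : suppB (unionB D D') = suppB D ∪ suppB D' := by
      ext a; simp [suppB, unionB]
    rw [InfiniteB, e, Set.infinite_union] at hA
    rcases hA with hA | hA
    · exact ⟨D, h1, hA, fun a ha => by simp [unionB, ha]⟩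
    · obtain ⟨D₁, g1, g2, g3⟩ := ih h2 hA
      exact ⟨D₁, g1, g2, fun a ha => by simp [unionB, g3 a ha]⟩

lemma Id_branch {R : Set (Cant × Bair × Bair)} (hR : IsClosed R) {c A : Cant} (hA : A ∈ Id R c)
    (hAi : InfiniteB A) {z : Bair} (hz : ∀ a, A a = true → OnBr z a) : ∃ w, (c, z, w) ∈ R := by
  obtain ⟨n, hn⟩ := hA
  obtain ⟨D, hD, hDi, hDA⟩ := T_infinite hn hAi
  have hDz : ∀ a, D a = true → OnBr z a := fun a ha => hz a (hDA a ha)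
  rcases hD with hD | hD
  · exfalso
    obtain ⟨a, ha⟩ := Set.Infinite.nonempty hDi
    obtain ⟨b, hb, hab⟩ := exists_len hDi hDz (len a)
    have : a = b := hD a b ha hb ((hDz a ha).pre_of (hDz b hb) hab.le)
    subst this
    exact lt_irrefl _ hab
  · exact closure_Q hR hD hDi hDz

lemma infinite_range {h : ℕ → ℕ} (hh : Function.Injective h) (D : Cant)
    (hD : ∀ a, D a = true ↔ ∃ j, h j = a) : InfiniteB D := by
  have : suppB D = Set.range h := by ext a; simp [suppB, hD]
  rw [InfiniteB, this]
  exact Set.infinite_range_of_injective hh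

lemma Id_tall {R : Set (Cant × Bair × Bair)} {c : Cant} (h : ∀ z, ∃ w, (c, z, w) ∈ R) :
    IsTallB (Id R c) := by
  classical
  intro A hA
  have hA' : (suppB A).Infinite := hA
  let f : ℕ → ℕ := fun n => (hA'.natEmbedding _ n : ℕ)
  have hf : Function.Injective f := Subtype.val_injective.comp (hA'.natEmbedding _).injective
  have hfA : ∀ n, A (f n) = true := fun n => (hA'.natEmbedding _ n).2
  have i1 : IsTrans ℕ (fun a b => lst a <+: lst b) := ⟨fun _ _ _ => List.IsPrefix.trans⟩
  have i2 : IsTrans ℕ (fun a b => lst b <+: lst a) :=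
    ⟨fun _ _ _ h1 h2 => List.IsPrefix.trans h2 h1⟩
  obtain ⟨g, hg⟩ := exists_increasing_or_nonincreasing_subseq
    (fun a b => lst a <+: lst b) f
  rcases hg with hg | hg
  · -- a chain
    let k : ℕ → ℕ := fun n => f (g n)
    have hk : Function.Injective k := hf.comp g.injective
    have hlen : StrictMono fun n => len (k n) := by
      intro m n hmn
      refine lt_of_le_of_ne (hg m n hmn).length_le fun he => ?_
      exact hmn.ne (hk (lst.injective ((hg m n hmn).eq_of_length he)))
    have hlen' : ∀ n, n ≤ len (k n) := fun n => hlen.le_apply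
    let z : Bair := fun i => (lst (k (i + 1)))[i]?.getD 0
    have hpre : ∀ m n, m ≤ n → lst (k m) <+: lst (k n) := by
      intro m n hmn
      rcases hmn.eq_or_lt with rfl | hlt
      · exact List.prefix_rfl
      · exact hg m n hlt
    have hz : ∀ n, OnBr z (k n) := by
      intro n i v hv
      have hi : i < (lst (k (i + 1))).length := lt_of_lt_of_le (Nat.lt_succ_self i) (hlen' (i + 1))
      have hi' : i < (lst (k n)).length := by
        by_contra hcon
        rw [List.getElem?_eq_none (not_lt.1 hcon)] at hv
        cases hv
      have : (lst (k (i + 1)))[i]? = (lst (k n))[i]? := by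
        rcases le_total (i + 1) n with hle | hle
        · rw [(List.prefix_iff_getElem?.1 (hpre _ _ hle)) i hi, List.getElem?_eq_getElem hi]
        · rw [(List.prefix_iff_getElem?.1 (hpre _ _ hle)) i hi', List.getElem?_eq_getElem hi']
      simp [z, this, hv]
    obtain ⟨w, hw⟩ := h z
    let u : ℕ → ℕ := fun j => j + ∑ i ∈ Finset.range (j + 1), w i
    have hu : StrictMono u := by
      refine strictMono_nat_of_lt_succ fun j => ?_
      simp only [u, Finset.sum_range_succ _ (j + 1)]
      omega
    have huw : ∀ i j, i ≤ j → w i ≤ u j := by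
      intro i j hij
      have := Finset.single_le_sum (f := w) (fun _ _ => Nat.zero_le _)
        (Finset.mem_range.2 (Nat.lt_succ_of_le hij))
      simp only [u]
      simp only [Nat.succ_eq_add_one] at this
      omega
    let D : Cant := fun a => decide (∃ j, k (u j) = a)
    have hDm : ∀ a, D a = true ↔ ∃ j, k (u j) = a := fun a => by simp [D]
    refine ⟨D, G_sub_Id (Or.inr (subset_closure ⟨z, w, hw, ?_, ?_⟩)),
      infinite_range (h := fun j => k (u j)) (hk.comp hu.injective) D hDm, ?_⟩
    · intro a ha
      obtain ⟨j, rfl⟩ := (hDm a).1 ha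
      exact hz _
    · intro i F hF
      have hsub : F ⊆ (Finset.range i).image (fun j => k (u j)) := by
        intro a ha
        obtain ⟨h1, h2⟩ := hF a ha
        obtain ⟨j, rfl⟩ := (hDm a).1 h1
        refine Finset.mem_image.2 ⟨j, ?_, rfl⟩
        rw [Finset.mem_range]
        by_contra hcon
        have := huw i j (not_lt.1 hcon)
        have := hlen' (u j)
        omega
      exact (Finset.card_le_card hsub).trans (Finset.card_image_le.trans (by simp))
    · intro a ha
      obtain ⟨j, rfl⟩ := (hDm a).1 ha
      exact hfA _
  · -- no increasing pair
    obtain ⟨g', hg'⟩ := exists_increasing_or_nonincreasing_subseq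
      (fun a b => lst b <+: lst a)
      (fun n => f (g n))
    let k : ℕ → ℕ := fun n => f (g (g' n))
    have hk : Function.Injective k := hf.comp (g.injective.comp g'.injective)
    rcases hg' with hg' | hg'
    · exfalso
      have hanti : StrictAnti fun n => len (k n) := by
        intro m n hmn
        refine lt_of_le_of_ne (hg' m n hmn).length_le fun he => ?_
        exact hmn.ne' (hk (lst.injective ((hg' m n hmn).eq_of_length he)))
      exact not_strictAnti_of_wellFoundedLT _ hanti
    · let D : Cant := fun a => decide (∃ j, k j = a)
      have hDm : ∀ a, D a = true ↔ ∃ j, k j = a := fun a => by simp [D]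
      refine ⟨D, G_sub_Id (Or.inl ?_), infinite_range hk D hDm, ?_⟩
      · intro a b ha hb hab
        obtain ⟨i, rfl⟩ := (hDm a).1 ha
        obtain ⟨j, rfl⟩ := (hDm b).1 hb
        rcases lt_trichotomy i j with hij | rfl | hij
        · exact absurd hab (hg _ _ (g'.strictMono hij))
        · rfl
        · exact absurd hab (hg' _ _ hij)
      · intro a ha
        obtain ⟨j, rfl⟩ := (hDm a).1 ha
        exact hfA _

/-- Tallness transfers upwards in the Katetov order. -/
lemma tall_of_kat {J I : Set Cant} (hJfin : ContainsFinB J) (hJ : IsTallB J) (hI : IsIdealB I)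
    (f : ℕ → ℕ) (hf : ∀ x ∈ J, (fun b => x (f b)) ∈ I) : IsTallB I := by
  classical
  intro A hA
  have hA' : (suppB A).Infinite := hA
  by_cases hfin : (f '' suppB A).Finite
  · let x : Cant := fun b => decide (b ∈ f '' suppB A)
    have hx : x ∈ J := hJfin x (by
      have : suppB x = f '' suppB A := by ext b; simp [suppB, x]
      rw [this]; exact hfin)
    refine ⟨A, hI.1 _ (hf x hx) A ?_, hA, fun a ha => ha⟩
    intro a ha
    simp only [x, decide_eq_true_eq]
    exact ⟨a, ha, rfl⟩
  · let x : Cant := fun b => decide (b ∈ f '' suppB A)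
    have hxs : suppB x = f '' suppB A := by ext b; simp [suppB, x]
    obtain ⟨y, hy, hyi, hyx⟩ := hJ x (by rw [InfiniteB, hxs]; exact hfin)
    refine ⟨fun a => y (f a) && A a, hI.1 _ (hf y hy) _ ?_, ?_, ?_⟩
    · intro a ha; simp at ha; exact ha.1
    · intro hF
      apply hyi
      refine (hF.image f).subset ?_
      intro b hb
      have : b ∈ f '' suppB A := by rw [← hxs]; exact hyx b hb
      obtain ⟨a, ha, rfl⟩ := this
      refine ⟨a, ?_, rfl⟩
      have hb' : y (f a) = true := hb
      have ha' : A a = true := ha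
      simp [suppB, hb', ha']
    · intro a ha; simp at ha; exact ha.2

/-- The branch set along `z`. -/
lemma exists_branch (z : Bair) : ∃ A : Cant, InfiniteB A ∧ ∀ a, A a = true → OnBr z a := by
  classical
  let h : ℕ → ℕ := fun n => lst.symm ((List.range n).map z)
  have hh : Function.Injective h := by
    intro m n hmn
    have := congrArg List.length (lst.symm.injective hmn)
    simpa using this
  refine ⟨fun a => decide (∃ j, h j = a), infinite_range hh _ (by simp), ?_⟩
  intro a ha
  simp only [decide_eq_true_eq] at ha
  obtain ⟨n, rfl⟩ := ha
  intro i v hv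
  simp only [h, Equiv.apply_symm_apply] at hv
  rw [List.getElem?_map] at hv
  by_cases hi : i < n
  · simpa [hi] using hv
  · simp [List.getElem?_eq_none, not_lt.1 hi] at hv

lemma analytic_S (R : Set (Cant × Bair × Bair)) (j : Bair → Cant) (hj : Continuous j) :
    MeasureTheory.AnalyticSet
      {p : Cant × Bair | ∃ v, (fun b => j v (p.2 b)) ∉ Id R p.1} := by
  let φ : Cant × Bair × Bair → Cant × Cant := fun q => (q.1, fun b => j q.2.2 (q.2.1 b))
  have hφ : Continuous φ := by
    refine continuous_fst.prodMk (continuous_pi fun b => ?_)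
    have hev : Continuous fun r : Cant × ℕ => r.1 r.2 := by
      rw [continuous_prod_of_discrete_right]
      intro n
      exact continuous_apply n
    exact hev.comp (f := fun q : Cant × Bair × Bair => (j q.2.2, q.2.1 b)) (by fun_prop)
  borelize (Cant × Bair × Bair)
  have : TopologicalSpace.IsCompletelyMetrizableSpace Bool := inferInstance
  have : TopologicalSpace.IsCompletelyMetrizableSpace Cant :=
    TopologicalSpace.IsCompletelyMetrizableSpace.pi_countable
  have : PolishSpace (Cant × Bair × Bair) := inferInstance
  have hm : MeasurableSet (⋂ n, (φ ⁻¹' (T R n))ᶜ) :=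
    MeasurableSet.iInter fun n => ((isClosed_T R n).preimage hφ).measurableSet.compl
  have := hm.analyticSet.image_of_continuous
    (f := fun q : Cant × Bair × Bair => (q.1, q.2.1)) (by fun_prop)
  convert this using 1
  ext ⟨c, z⟩
  simp [Id, φ]

lemma exists_closed {S : Set (Cant × Bair)} (hS : MeasureTheory.AnalyticSet S) :
    ∃ E : Set (Cant × Bair × Bair), IsClosed E ∧ ∀ c z, (c, z) ∈ S ↔ ∃ w, (c, z, w) ∈ E := by
  rw [MeasureTheory.AnalyticSet] at hS
  rcases hS with rfl | ⟨g, hg, rfl⟩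
  · exact ⟨∅, isClosed_empty, by simp⟩
  · refine ⟨{q | g q.2.2 = (q.1, q.2.1)}, isClosed_eq (by fun_prop) (by fun_prop), ?_⟩
    intro c z
    simp

end TallKat

open TallKat

/-- For every tall analytic ideal `J` on `ℕ` (containing all finite sets, as usual) there is a
tall `F_σ` ideal `I` on `ℕ` such that `J ≰_K I`. -/
theorem tall_analytic_not_below_some_fSigma (J : Set (ℕ → Bool)) (hJ : IsIdealB J)
    (hJfin : ContainsFinB J) (hJtall : IsTallB J) (hJan : MeasureTheory.AnalyticSet J) :
    ∃ I : Set (ℕ → Bool), IsIdealB I ∧ ContainsFinB I ∧ IsTallB I ∧ IsFsigmaB I ∧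
      ¬ KatLE J I := by
  obtain ⟨R, hR, hRu⟩ := exists_universal
  have hne : J.Nonempty := ⟨fun _ => false, hJfin _ (by simp [suppB])⟩
  have hJan' := hJan
  rw [MeasureTheory.AnalyticSet] at hJan'
  obtain ⟨j, hj, hjJ⟩ := hJan'.resolve_left hne.ne_empty
  obtain ⟨E, hE, hES⟩ := exists_closed (analytic_S R j hj)
  obtain ⟨c, hc⟩ := hRu E hE
  have key : ∀ z, (∃ w, (c, z, w) ∈ R) ↔ ∃ x ∈ J, (fun b => x (z b)) ∉ Id R c := by
    intro z
    rw [← hjJ]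
    simp only [hc, ← hES, Set.mem_ofPred_eq, Set.mem_range, exists_exists_eq_and]
  have hnot : ¬ KatLE J (Id R c) := by
    rintro ⟨f, hf⟩
    have ht := tall_of_kat hJfin hJtall (Id_ideal R c) f hf
    obtain ⟨A, hAi, hA⟩ := exists_branch f
    obtain ⟨y, hy, hyi, hyA⟩ := ht A hAi
    obtain ⟨x, hx, hxn⟩ := (key f).1 (Id_branch hR hy hyi fun a ha => hA a (hyA a ha))
    exact hxn (hf x hx)
  refine ⟨Id R c, Id_ideal R c, Id_fin R c, Id_tall fun z => ?_, Id_fsigma R c, hnot⟩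
  rw [key]
  by_contra! hcon
  exact hnot ⟨z, hcon⟩
end

section
/- For every Borel function c : 2^ℕ → ℕ^ℕ, the ideal I_c is a tall Borel ideal on 2^{<ω}. -/
/-- A chain in `2^{<ω}`: any two elements are comparable under end-extension (prefix). -/
def IsChainPre (S : Set (List Bool)) : Prop :=
  ∀ a ∈ S, ∀ b ∈ S, a <+: b ∨ b <+: a

/-- An antichain in `2^{<ω}`: distinct elements are incomparable under end-extension. -/
def IsAntichainPre (S : Set (List Bool)) : Prop :=
  ∀ a ∈ S, ∀ b ∈ S, a ≠ b → ¬ a <+: b ∧ ¬ b <+: a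


/-- The initial segment `x↾m` of `x ∈ 2^ℕ`, as an element of `2^{<ω}`. -/
def seg (x : ℕ → Bool) (m : ℕ) : List Bool := List.ofFn (fun i : Fin m => x i)

/-- Generators of the ideal `I_c`: antichains; the blocks `{x↾m : m ∈ c(x)⁻¹(n)}` of a branch;
and sets of initial segments of a branch meeting each block `{x↾m : m ∈ c(x)⁻¹(n)}` in at most
one point. -/
def GenIc (c : (ℕ → Bool) → (ℕ → ℕ)) (S : Set (List Bool)) : Prop :=
  IsAntichainPre S ∨
  (∃ (x : ℕ → Bool) (n : ℕ), S = {s | ∃ m, c x m = n ∧ s = seg x m}) ∨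
  (∃ x : ℕ → Bool, (∀ s ∈ S, ∃ m, s = seg x m) ∧
    ∀ n : ℕ, {s ∈ S | ∃ m, c x m = n ∧ s = seg x m}.Subsingleton)

/-- The ideal `I_c` on `2^{<ω}`, generated by the sets satisfying `GenIc c`. -/
def IdealIc (c : (ℕ → Bool) → (ℕ → ℕ)) : Set (List Bool → Bool) :=
  {y | ∃ (k : ℕ) (F : Fin k → Set (List Bool)), (∀ i, GenIc c (F i)) ∧
        ∀ s : List Bool, y s = true → ∃ i, s ∈ F i}



namespace IcProof

open Set

lemma seg_length (x : ℕ → Bool) (m : ℕ) : (seg x m).length = m := by simp [seg]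

lemma seg_inj (x : ℕ → Bool) : Function.Injective (seg x) := by
  intro a b h
  have := congrArg List.length h
  simpa [seg_length] using this

lemma seg_eq_iff (x : ℕ → Bool) (m : ℕ) (s : List Bool) :
    seg x m = s ↔ s.length = m ∧ ∀ i, i < m → s.getD i false = x i := by
  constructor
  · rintro rfl
    refine ⟨seg_length x m, fun i hi => ?_⟩
    simp [seg, hi]
  · rintro ⟨h1, h2⟩
    apply List.ext_getElem
    · simp [seg_length, h1]
    · intro i hi hi'
      have := h2 i (by omega)
      simp [seg]
      rw [← this]
      simp [hi']

lemma seg_eq_seg_iff (x y : ℕ → Bool) (m : ℕ) :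
    seg x m = seg y m ↔ ∀ i, i < m → x i = y i := by
  rw [seg_eq_iff]
  simp only [seg_length, true_and]
  refine forall_congr' fun i => forall_congr' fun hi => ?_
  simp [seg, hi, eq_comm]

lemma seg_prefix (x : ℕ → Bool) {m n : ℕ} (h : m ≤ n) : seg x m <+: seg x n := by
  have : seg x m = (seg x n).take m := by
    rw [seg_eq_iff]
    refine ⟨by simp [seg_length, h], fun i hi => ?_⟩
    have : i < n := by omega
    simp [seg, List.getD_eq_getElem?_getD, List.getElem?_take, hi, this]
  rw [this]
  exact List.take_prefix _ _

/-- `s` lies on the branch `x`. -/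
def OnBr (x : ℕ → Bool) (s : List Bool) : Prop := seg x s.length = s

lemma onBr_seg (x : ℕ → Bool) (m : ℕ) : OnBr x (seg x m) := by
  simp [OnBr, seg_length]

lemma finite_common {x y : ℕ → Bool} (h : x ≠ y) : {m | OnBr y (seg x m)}.Finite := by
  obtain ⟨i, hi⟩ := Function.ne_iff.mp h
  refine (Set.finite_le_nat i).subset ?_
  intro m hm
  by_contra hmi
  simp only [mem_ofPred_eq, not_le] at hmi hm
  unfold OnBr at hm
  rw [seg_length, seg_eq_seg_iff] at hm
  exact hi (hm i hmi).symm

/-- Set version of the ideal. -/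
def Ic (c : (ℕ → Bool) → (ℕ → ℕ)) (S : Set (List Bool)) : Prop :=
  ∃ T : Set (Set (List Bool)), T.Finite ∧ (∀ G ∈ T, GenIc c G) ∧ S ⊆ ⋃₀ T

lemma mem_iff (c : (ℕ → Bool) → (ℕ → ℕ)) (y : List Bool → Bool) :
    y ∈ IdealIc c ↔ Ic c (suppB y) := by
  constructor
  · rintro ⟨k, F, hF, hy⟩
    refine ⟨range F, finite_range F, by rintro _ ⟨i, rfl⟩; exact hF i, ?_⟩
    intro s hs
    obtain ⟨i, hi⟩ := hy s hs
    exact ⟨F i, ⟨i, rfl⟩, hi⟩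
  · rintro ⟨T, hT, hG, hS⟩
    obtain ⟨k, F, -, hF⟩ := hT.fin_param
    refine ⟨k, F, fun i => hG _ (hF ▸ mem_range_self i), ?_⟩
    intro s hs
    obtain ⟨G, hGT, hsG⟩ := hS hs
    rw [← hF] at hGT
    obtain ⟨i, rfl⟩ := hGT
    exact ⟨i, hsG⟩

variable {c : (ℕ → Bool) → (ℕ → ℕ)}

lemma Ic.mono {S S' : Set (List Bool)} (h : Ic c S) (hs : S' ⊆ S) : Ic c S' := by
  obtain ⟨T, hT, hG, hS⟩ := h
  exact ⟨T, hT, hG, hs.trans hS⟩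

lemma Ic.union {S S' : Set (List Bool)} (h : Ic c S) (h' : Ic c S') : Ic c (S ∪ S') := by
  obtain ⟨T, hT, hG, hS⟩ := h
  obtain ⟨T', hT', hG', hS'⟩ := h'
  refine ⟨T ∪ T', hT.union hT', ?_, ?_⟩
  · rintro G (h | h)
    exacts [hG _ h, hG' _ h]
  · rw [sUnion_union]
    exact union_subset_union hS hS'

lemma Ic.empty : Ic c ∅ := ⟨∅, finite_empty, by simp, by simp⟩

lemma Ic.gen {S : Set (List Bool)} (h : GenIc c S) : Ic c S :=
  ⟨{S}, finite_singleton _, by simpa using h, by simp⟩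

lemma Ic.biUnion {ι : Type} {I : Set ι} (hI : I.Finite) (F : ι → Set (List Bool))
    (h : ∀ i ∈ I, Ic c (F i)) : Ic c (⋃ i ∈ I, F i) := by
  induction I, hI using Set.Finite.induction_on with
  | empty => simpa using Ic.empty
  | insert _ _ ih =>
    rw [biUnion_insert]
    exact (h _ (mem_insert _ _)).union (ih fun i hi => h i (mem_insert_of_mem _ hi))

lemma Ic.ind {P : Set (List Bool) → Prop} (h0 : P ∅)
    (hg : ∀ S, GenIc c S → P S) (hu : ∀ S S', P S → P S' → P (S ∪ S'))
    (hm : ∀ S S', P S → S' ⊆ S → P S') {S : Set (List Bool)} (h : Ic c S) : P S := by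
  obtain ⟨T, hT, hG, hS⟩ := h
  refine hm _ _ ?_ hS
  clear hS
  induction T, hT using Set.Finite.induction_on with
  | empty => simpa using h0
  | insert _ _ ih =>
    rw [sUnion_insert]
    exact hu _ _ (hg _ (hG _ (mem_insert _ _))) (ih fun i hi => hG i (mem_insert_of_mem _ hi))

/-- bounded chain length -/
def BC (S : Set (List Bool)) : Prop :=
  ∃ k : ℕ, ∀ t : Finset (List Bool), IsChainPre (t : Set (List Bool)) →
    (∀ s ∈ t, s ∈ S) → t.card ≤ k

lemma BC.mono {S S' : Set (List Bool)} (h : BC S) (hs : S' ⊆ S) : BC S' := by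
  obtain ⟨k, hk⟩ := h
  exact ⟨k, fun t ht hts => hk t ht fun s h => hs (hts s h)⟩

lemma BC.union {S S' : Set (List Bool)} (h : BC S) (h' : BC S') : BC (S ∪ S') := by
  classical
  obtain ⟨k, hk⟩ := h
  obtain ⟨k', hk'⟩ := h'
  refine ⟨k + k', fun t ht hts => ?_⟩
  have e : t ⊆ t.filter (· ∈ S) ∪ t.filter (· ∈ S') := by
    intro s hs
    rcases hts s hs with h | h
    · simp [hs, h]
    · simp [hs, h]
  refine (Finset.card_le_card e).trans ((Finset.card_union_le _ _).trans (add_le_add ?_ ?_))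
  · refine hk _ (fun a ha b hb => ht a ?_ b ?_) (fun s hs => ?_) <;> simp_all
  · refine hk' _ (fun a ha b hb => ht a ?_ b ?_) (fun s hs => ?_) <;> simp_all

lemma BC.finite {S : Set (List Bool)} (h : S.Finite) : BC S := by
  refine ⟨h.toFinset.card, fun t _ hts => Finset.card_le_card fun s hs => ?_⟩
  simpa using hts s hs

lemma BC.antichain {S : Set (List Bool)} (h : IsAntichainPre S) : BC S := by
  refine ⟨1, fun t ht hts => Finset.card_le_one.mpr fun a ha b hb => ?_⟩
  by_contra hab
  have := h a (hts a ha) b (hts b hb) hab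
  have := ht a ha b hb
  tauto

lemma BC.ic {S : Set (List Bool)} (h : BC S) : Ic c S := by
  classical
  obtain ⟨k, hk⟩ := h
  let R : List Bool → Finset (List Bool) := fun s => s.inits.toFinset.filter (· ∈ S)
  have hR : ∀ s a, a ∈ R s ↔ a <+: s ∧ a ∈ S := by
    intro s a
    simp [R]
  have hle : ∀ s, (R s).card ≤ k := by
    intro s
    refine hk _ ?_ ?_
    · intro a ha b hb
      rw [Finset.mem_coe, hR] at ha hb
      exact List.prefix_or_prefix_of_prefix ha.1 hb.1
    · intro a ha
      exact ((hR _ _).1 ha).2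
  have key : ∀ a ∈ S, ∀ b ∈ S, a ≠ b → (R a).card = (R b).card → ¬ a <+: b := by
    intro a _ b hb hab hc hp
    have hsub : R a ⊆ R b := by
      intro d hd
      rw [hR] at hd ⊢
      exact ⟨hd.1.trans hp, hd.2⟩
    have := Finset.eq_of_subset_of_card_le hsub hc.ge
    have hbb : b ∈ R a := by
      rw [this, hR]
      exact ⟨List.prefix_refl b, hb⟩
    rw [hR] at hbb
    exact hab (hp.eq_of_length_le hbb.1.length_le)
  have := Ic.biUnion (c := c) (Set.finite_le_nat k) (fun j => {s ∈ S | (R s).card = j}) (by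
    intro j _
    apply Ic.gen
    left
    intro a ha b hb hab
    exact ⟨key a ha.1 b hb.1 hab (ha.2.trans hb.2.symm),
      key b hb.1 a ha.1 hab.symm (hb.2.trans ha.2.symm)⟩)
  refine this.mono fun s hs => ?_
  simp only [mem_iUnion]
  exact ⟨(R s).card, hle s, hs, rfl⟩

/-- the trace on the branch `x` is small -/
def Q (c : (ℕ → Bool) → (ℕ → ℕ)) (x : ℕ → Bool) (S : Set (List Bool)) : Prop :=
  ∃ N M : ℕ, ∀ n, N ≤ n → ∀ t : Finset ℕ, (∀ m ∈ t, c x m = n ∧ seg x m ∈ S) → t.card ≤ M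

lemma Q.mono {x} {S S' : Set (List Bool)} (h : Q c x S) (hs : S' ⊆ S) : Q c x S' := by
  obtain ⟨N, M, h⟩ := h
  exact ⟨N, M, fun n hn t ht => h n hn t fun m hm => ⟨(ht m hm).1, hs (ht m hm).2⟩⟩

lemma Q.union {x} {S S' : Set (List Bool)} (h : Q c x S) (h' : Q c x S') :
    Q c x (S ∪ S') := by
  classical
  obtain ⟨N, M, h⟩ := h
  obtain ⟨N', M', h'⟩ := h'
  refine ⟨max N N', M + M', fun n hn t ht => ?_⟩
  have e : t ⊆ t.filter (seg x · ∈ S) ∪ t.filter (seg x · ∈ S') := by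
    intro s hs
    rcases (ht s hs).2 with h | h
    · simp [hs, h]
    · simp [hs, h]
  refine (Finset.card_le_card e).trans ((Finset.card_union_le _ _).trans (add_le_add ?_ ?_))
  · refine h n (le_of_max_le_left hn) _ fun m hm => ?_
    rw [Finset.mem_filter] at hm
    exact ⟨(ht m hm.1).1, hm.2⟩
  · refine h' n (le_of_max_le_right hn) _ fun m hm => ?_
    rw [Finset.mem_filter] at hm
    exact ⟨(ht m hm.1).1, hm.2⟩

lemma Q.finite {x} {S : Set (List Bool)} (h : {m | seg x m ∈ S}.Finite) : Q c x S := by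
  refine ⟨0, h.toFinset.card, fun n _ t ht => Finset.card_le_card fun s hs => ?_⟩
  simpa using (ht s hs).2

lemma Q.of_other {x y} (hxy : x ≠ y) {S : Set (List Bool)} (h : ∀ s ∈ S, ∃ m, s = seg y m) :
    Q c x S := by
  apply Q.finite
  refine (finite_common hxy).subset fun m hm => ?_
  obtain ⟨m', h'⟩ := h _ hm
  simp only [mem_ofPred_eq]
  rw [h']
  exact onBr_seg _ _

lemma Q.of_ic (x) {S : Set (List Bool)} (h : Ic c S) : Q c x S := by
  refine Ic.ind (P := Q c x) ?_ ?_ (fun _ _ h h' => h.union h') (fun _ _ h h' => h.mono h') h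
  · exact Q.finite (by simp)
  · rintro S (h | ⟨y, n, rfl⟩ | ⟨y, h1, h2⟩)
    · refine ⟨0, 1, fun n _ t ht => Finset.card_le_one.mpr fun a ha b hb => ?_⟩
      by_contra hab
      have := h _ (ht a ha).2 _ (ht b hb).2 fun h => hab (seg_inj x h)
      rcases le_total a b with h | h
      · exact this.1 (seg_prefix x h)
      · exact this.2 (seg_prefix x h)
    · by_cases hxy : x = y
      · subst hxy
        refine ⟨n + 1, 0, fun n' hn t ht => ?_⟩
        rw [Nat.le_zero, Finset.card_eq_zero, Finset.eq_empty_iff_forall_notMem]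
        intro m hm
        obtain ⟨h1, m', h2, h3⟩ := ht m hm
        have := seg_inj x h3
        subst this
        omega
      · refine Q.of_other hxy ?_
        rintro s ⟨m, -, h⟩
        exact ⟨m, h⟩
    · by_cases hxy : x = y
      · subst hxy
        refine ⟨0, 1, fun n _ t ht => Finset.card_le_one.mpr fun a ha b hb => ?_⟩
        exact seg_inj x (h2 n ⟨(ht a ha).2, a, (ht a ha).1, rfl⟩ ⟨(ht b hb).2, b, (ht b hb).1, rfl⟩)
      · exact Q.of_other hxy h1

lemma Q.ic {x} {S : Set (List Bool)} (h : Q c x S) : Ic c {s ∈ S | OnBr x s} := by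
  classical
  obtain ⟨N, M, h⟩ := h
  let R : ℕ → Finset ℕ := fun m =>
    (Finset.range (m + 1)).filter fun m' => c x m' = c x m ∧ seg x m' ∈ S
  have h1 := Ic.biUnion (c := c) (Set.finite_lt_nat N)
    (fun n => {s | ∃ m, c x m = n ∧ s = seg x m}) (fun n _ => Ic.gen (Or.inr (Or.inl ⟨x, n, rfl⟩)))
  have h2 := Ic.biUnion (c := c) (Set.finite_le_nat M)
    (fun j => {s | ∃ m, s = seg x m ∧ seg x m ∈ S ∧ (R m).card = j}) (by
      intro j _
      refine Ic.gen (Or.inr (Or.inr ⟨x, ?_, ?_⟩))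
      · rintro s ⟨m, h, -⟩
        exact ⟨m, h⟩
      · rintro n s ⟨⟨m, rfl, hm, hmj⟩, m', hm', he⟩ s' ⟨⟨l, rfl, hl, hlj⟩, l', hl', he'⟩
        have := seg_inj x he
        subst this
        have := seg_inj x he'
        subst this
        have key : ∀ a b, c x a = n → c x b = n → seg x b ∈ S →
            (R a).card = (R b).card → ¬ a < b := by
          intro a b ha hb hbS hab hlt
          have hsub : R a ⊆ R b := by
            intro d hd
            simp only [R, Finset.mem_filter, Finset.mem_range] at hd ⊢
            exact ⟨by omega, by omega, hd.2.2⟩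
          have := Finset.eq_of_subset_of_card_le hsub hab.ge
          have hbb : b ∈ R a := by
            rw [this]
            simp [R, hbS]
          simp only [R, Finset.mem_filter, Finset.mem_range] at hbb
          omega
        have k1 := key m l hm' hl' hl (hmj.trans hlj.symm)
        have k2 := key l m hl' hm' hm (hlj.trans hmj.symm)
        rw [le_antisymm (not_lt.mp k2) (not_lt.mp k1)])
  refine (h1.union h2).mono ?_
  rintro s ⟨hs, hb⟩
  unfold OnBr at hb
  by_cases hN : c x s.length < N
  · left
    simp only [mem_iUnion]
    exact ⟨c x s.length, hN, s.length, rfl, hb.symm⟩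
  · right
    simp only [mem_iUnion]
    refine ⟨(R s.length).card, ?_, s.length, hb.symm, hb.symm ▸ hs, rfl⟩
    refine h (c x s.length) (not_lt.mp hN) _ fun m hm => ?_
    exact (Finset.mem_filter.1 hm).2

/-- off a finite set of branches, members of the ideal have bounded chains -/
lemma exists_branches {S : Set (List Bool)} (h : Ic c S) :
    ∃ X : Set (ℕ → Bool), X.Finite ∧ BC {s ∈ S | ∀ x ∈ X, ¬ OnBr x s} := by
  refine Ic.ind (P := fun S => ∃ X : Set (ℕ → Bool), X.Finite ∧
    BC {s ∈ S | ∀ x ∈ X, ¬ OnBr x s}) ?_ ?_ ?_ ?_ h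
  · exact ⟨∅, finite_empty, BC.finite (by simp)⟩
  · rintro S (h | ⟨y, n, rfl⟩ | ⟨y, h1, h2⟩)
    · exact ⟨∅, finite_empty, (BC.antichain h).mono (fun s hs => hs.1)⟩
    · refine ⟨{y}, finite_singleton _, BC.finite ?_⟩
      convert finite_empty
      rw [eq_empty_iff_forall_notMem]
      rintro s ⟨⟨m, -, rfl⟩, h⟩
      exact h y rfl (onBr_seg y m)
    · refine ⟨{y}, finite_singleton _, BC.finite ?_⟩
      convert finite_empty
      rw [eq_empty_iff_forall_notMem]
      rintro s ⟨hs, h⟩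
      obtain ⟨m, rfl⟩ := h1 s hs
      exact h y rfl (onBr_seg y m)
  · rintro S S' ⟨X, hX, hS⟩ ⟨X', hX', hS'⟩
    refine ⟨X ∪ X', hX.union hX', (hS.union hS').mono ?_⟩
    rintro s ⟨h | h, h'⟩
    · exact Or.inl ⟨h, fun x hx => h' x (Or.inl hx)⟩
    · exact Or.inr ⟨h, fun x hx => h' x (Or.inr hx)⟩
  · rintro S S' ⟨X, hX, hS⟩ hsub
    exact ⟨X, hX, hS.mono fun s hs => ⟨hsub hs.1, hs.2⟩⟩

/-- infinite branches through `S` -/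
def Br (S : Set (List Bool)) : Set (ℕ → Bool) := {x | ∀ N, ∃ m, N ≤ m ∧ seg x m ∈ S}

lemma mem_Br {S : Set (List Bool)} {x} : x ∈ Br S ↔ {m | seg x m ∈ S}.Infinite := by
  rw [← Nat.frequently_atTop_iff_infinite, Filter.frequently_atTop]
  rfl

lemma exists_branches' {S : Set (List Bool)} (h : Ic c S) :
    ∃ X : Set (ℕ → Bool), X.Finite ∧ X ⊆ Br S ∧ BC {s ∈ S | ∀ x ∈ X, ¬ OnBr x s} := by
  obtain ⟨X, hX, hS⟩ := exists_branches h
  refine ⟨X ∩ Br S, hX.inter_of_left _, inter_subset_right, ?_⟩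
  have hfin : (⋃ x ∈ X \ Br S, seg x '' {m | seg x m ∈ S}).Finite := by
    refine Set.Finite.biUnion (hX.subset sdiff_subset) fun x hx => Set.Finite.image _ ?_
    have := hx.2
    rwa [mem_Br, not_infinite] at this
  refine (hS.union (BC.finite hfin)).mono ?_
  rintro s ⟨hs, h⟩
  by_cases h' : ∀ x ∈ X, ¬ OnBr x s
  · exact Or.inl ⟨hs, h'⟩
  · right
    push Not at h'
    obtain ⟨x, hx, hb⟩ := h'
    simp only [mem_iUnion]
    refine ⟨x, ⟨hx, fun hB => h x ⟨hx, hB⟩ hb⟩, s.length, ?_, hb⟩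
    unfold OnBr at hb
    simp only [mem_ofPred_eq]
    rwa [hb]

lemma Br_subset {S : Set (List Bool)} {X : Set (ℕ → Bool)} (hX : X.Finite)
    (h : BC {s ∈ S | ∀ x ∈ X, ¬ OnBr x s}) : Br S ⊆ X := by
  intro y hy
  by_contra hyX
  rw [mem_Br] at hy
  have hfin : (⋃ x ∈ X, {m | OnBr x (seg y m)}).Finite :=
    Set.Finite.biUnion hX fun x hx => finite_common fun h => hyX (h ▸ hx)
  have hinf := hy.sdiff hfin
  obtain ⟨k, hk⟩ := h
  obtain ⟨t, ht, htc⟩ := hinf.exists_subset_card_eq (k + 1)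
  have := hk (t.map ⟨seg y, seg_inj y⟩) ?_ ?_
  · rw [Finset.card_map] at this
    omega
  · intro a ha b hb
    simp only [Finset.coe_map, Function.Embedding.coeFn_mk, mem_image] at ha hb
    obtain ⟨m, -, rfl⟩ := ha
    obtain ⟨n, -, rfl⟩ := hb
    rcases le_total m n with h | h
    · exact Or.inl (seg_prefix y h)
    · exact Or.inr (seg_prefix y h)
  · intro s hs
    simp only [Finset.mem_map, Function.Embedding.coeFn_mk] at hs
    obtain ⟨m, hm, rfl⟩ := hs
    have := ht hm
    refine ⟨this.1, fun x hx hb => this.2 ?_⟩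
    simp only [mem_iUnion]
    exact ⟨x, hx, hb⟩

/-- The Borel set whose injective projection gives the ideal. -/
def P (c : (ℕ → Bool) → (ℕ → ℕ)) (f : (ℕ → Bool) → ℝ) (k : ℕ) :
    Set ((List Bool → Bool) × (Fin k → ℕ → Bool)) :=
  {p | (∀ i j, i < j → f (p.2 i) < f (p.2 j)) ∧ (∀ i, p.2 i ∈ Br (suppB p.1)) ∧
    (∀ i, Q c (p.2 i) (suppB p.1)) ∧ BC {s ∈ suppB p.1 | ∀ x ∈ range p.2, ¬ OnBr x s}}

lemma P_range {f : (ℕ → Bool) → ℝ} {k : ℕ} {p} (hp : p ∈ P c f k) :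
    range p.2 = Br (suppB p.1) := by
  obtain ⟨h1, h2, h3, h4⟩ := hp
  apply subset_antisymm
  · rintro _ ⟨i, rfl⟩
    exact h2 i
  · exact Br_subset (finite_range _) h4

lemma P_injOn {f : (ℕ → Bool) → ℝ} (hf : Function.Injective f) {k : ℕ} :
    InjOn Prod.fst (P c f k) := by
  rintro ⟨A, x⟩ hp ⟨A', y⟩ hq h
  dsimp only at h
  subst h
  have e : range x = range y := (P_range hp).trans (P_range hq).symm
  have m1 : StrictMono (f ∘ x) := fun i j hij => hp.1 i j hij
  have m2 : StrictMono (f ∘ y) := fun i j hij => hq.1 i j hij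
  have : f ∘ x = f ∘ y := by
    rw [← StrictMono.range_inj m1 m2, range_comp, range_comp, e]
  have : x = y := funext fun i => hf (congrFun this i)
  rw [this]

lemma ideal_eq {f : (ℕ → Bool) → ℝ} (hf : Function.Injective f) :
    IdealIc c = ⋃ k, Prod.fst '' (P c f k) := by
  classical
  ext A
  rw [mem_iff]
  simp only [mem_iUnion, mem_image]
  constructor
  · intro h
    obtain ⟨X, hX, hXB, hBC⟩ := exists_branches' h
    let Y : Finset ℝ := (hX.image f).toFinset
    have hY : ∀ i, ∃ x ∈ X, f x = Y.orderEmbOfFin rfl i := by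
      intro i
      have := Y.orderEmbOfFin_mem rfl i
      exact (mem_image f X _).1 ((hX.image f).mem_toFinset.1 this)
    choose x hxX hfx using hY
    have hr : range x = X := by
      apply subset_antisymm
      · rintro _ ⟨i, rfl⟩
        exact hxX i
      · intro z hz
        have : f z ∈ range (Y.orderEmbOfFin rfl) := by
          rw [Finset.range_orderEmbOfFin]
          simpa [Y] using ⟨z, hz, rfl⟩
        obtain ⟨i, hi⟩ := this
        exact ⟨i, hf ((hfx i).trans hi)⟩
    refine ⟨Y.card, (A, x), ⟨?_, ?_, ?_, ?_⟩, rfl⟩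
    · intro i j hij
      simp only [hfx]
      exact (Y.orderEmbOfFin rfl).strictMono hij
    · intro i
      exact hXB (hxX i)
    · intro i
      exact Q.of_ic _ h
    · simpa only [hr] using hBC
  · rintro ⟨k, ⟨A, x⟩, ⟨h1, h2, h3, h4⟩, rfl⟩
    have := Ic.biUnion (c := c) (finite_univ (α := Fin k))
      (fun i => {s ∈ suppB A | OnBr (x i) s}) (fun i _ => (h3 i).ic)
    refine (this.union (h4.ic)).mono fun s hs => ?_
    by_cases h : ∀ z ∈ range x, ¬ OnBr z s
    · exact Or.inr ⟨hs, h⟩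
    · left
      push Not at h
      obtain ⟨_, ⟨i, rfl⟩, hi⟩ := h
      simp only [mem_iUnion]
      exact ⟨i, mem_univ _, hs, hi⟩

lemma meas_seg (m : ℕ) (s : List Bool) : MeasurableSet {x : ℕ → Bool | seg x m = s} := by
  simp only [seg_eq_iff]
  refine MeasurableSet.inter (MeasurableSet.const _) ?_
  change MeasurableSet {x : ℕ → Bool | ∀ i, i < m → s.getD i false = x i}
  simp only [ofPred_forall]
  refine MeasurableSet.iInter fun i => MeasurableSet.iInter fun _ => ?_
  exact measurableSet_eq_fun measurable_const (measurable_pi_apply i)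

lemma meas_seg_mem {k : ℕ} (i : Fin k) (m : ℕ) :
    MeasurableSet {p : (List Bool → Bool) × (Fin k → ℕ → Bool) | seg (p.2 i) m ∈ suppB p.1} := by
  have : {p : (List Bool → Bool) × (Fin k → ℕ → Bool) | seg (p.2 i) m ∈ suppB p.1} =
      ⋃ s : List Bool, {p | seg (p.2 i) m = s} ∩ {p | p.1 s = true} := by
    ext p
    simp [suppB]
  rw [this]
  refine MeasurableSet.iUnion fun s => MeasurableSet.inter ?_ ?_
  · have h : Measurable (fun p : (List Bool → Bool) × (Fin k → ℕ → Bool) => p.2 i) :=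
      (measurable_pi_apply i).comp measurable_snd
    exact h (meas_seg m s)
  · have h : Measurable (fun p : (List Bool → Bool) × (Fin k → ℕ → Bool) => p.1 s) :=
      (measurable_pi_apply s).comp measurable_fst
    exact h (MeasurableSet.singleton true)

lemma P_meas (hc : Measurable c) {f : (ℕ → Bool) → ℝ} (hf : Measurable f) (k : ℕ) :
    MeasurableSet (P c f k) := by
  have mi : ∀ i : Fin k, Measurable
      (fun p : (List Bool → Bool) × (Fin k → ℕ → Bool) => p.2 i) := fun i =>
    (measurable_pi_apply i).comp measurable_snd
  refine MeasurableSet.inter ?_ (MeasurableSet.inter ?_ (MeasurableSet.inter ?_ ?_))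
  · change MeasurableSet {p : (List Bool → Bool) × (Fin k → ℕ → Bool) |
      ∀ i j, i < j → f (p.2 i) < f (p.2 j)}
    simp only [ofPred_forall]
    refine MeasurableSet.iInter fun i => MeasurableSet.iInter fun j => MeasurableSet.iInter fun _ => ?_
    exact measurableSet_lt (hf.comp (mi i)) (hf.comp (mi j))
  · change MeasurableSet {p : (List Bool → Bool) × (Fin k → ℕ → Bool) |
      ∀ i, ∀ N, ∃ m, N ≤ m ∧ seg (p.2 i) m ∈ suppB p.1}
    simp only [ofPred_forall, ofPred_exists]
    refine MeasurableSet.iInter fun i => MeasurableSet.iInter fun N => MeasurableSet.iUnion fun m => ?_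
    exact MeasurableSet.inter (MeasurableSet.const _) (meas_seg_mem i m)
  · change MeasurableSet {p : (List Bool → Bool) × (Fin k → ℕ → Bool) |
      ∀ i, ∃ N M : ℕ, ∀ n, N ≤ n → ∀ t : Finset ℕ,
        (∀ m ∈ t, c (p.2 i) m = n ∧ seg (p.2 i) m ∈ suppB p.1) → t.card ≤ M}
    rw [ofPred_forall]
    refine MeasurableSet.iInter fun i => ?_
    simp only [ofPred_exists]
    refine MeasurableSet.iUnion fun N => MeasurableSet.iUnion fun M => ?_
    rw [ofPred_forall]
    refine MeasurableSet.iInter fun n => ?_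
    rw [ofPred_forall]
    refine MeasurableSet.iInter fun _ => ?_
    rw [ofPred_forall]
    refine MeasurableSet.iInter fun t => ?_
    refine MeasurableSet.imp ?_ (MeasurableSet.const _)
    simp only [ofPred_forall]
    refine MeasurableSet.iInter fun m => MeasurableSet.iInter fun _ => ?_
    refine MeasurableSet.inter ?_ (meas_seg_mem i m)
    exact ((measurable_pi_apply m).comp (hc.comp (mi i))) (MeasurableSet.singleton n)
  · change MeasurableSet {p : (List Bool → Bool) × (Fin k → ℕ → Bool) |
      ∃ K : ℕ, ∀ t : Finset (List Bool), IsChainPre (t : Set (List Bool)) →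
        (∀ s ∈ t, p.1 s = true ∧ ∀ x ∈ range p.2, ¬ seg x s.length = s) → t.card ≤ K}
    rw [ofPred_exists]
    refine MeasurableSet.iUnion fun K => ?_
    rw [ofPred_forall]
    refine MeasurableSet.iInter fun t => ?_
    rw [ofPred_forall]
    refine MeasurableSet.iInter fun _ => ?_
    refine MeasurableSet.imp ?_ (MeasurableSet.const _)
    simp only [forall_mem_range]
    rw [ofPred_forall]
    refine MeasurableSet.iInter fun s => ?_
    rw [ofPred_forall]
    refine MeasurableSet.iInter fun _ => ?_
    refine MeasurableSet.inter ?_ ?_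
    · have h : Measurable (fun p : (List Bool → Bool) × (Fin k → ℕ → Bool) => p.1 s) :=
        (measurable_pi_apply s).comp measurable_fst
      exact h (MeasurableSet.singleton true)
    · change MeasurableSet {p : (List Bool → Bool) × (Fin k → ℕ → Bool) |
        ∀ i, ¬ seg (p.2 i) s.length = s}
      rw [ofPred_forall]
      refine MeasurableSet.iInter fun i => MeasurableSet.compl ?_
      exact (mi i) (meas_seg s.length s)

lemma borel (hc : Measurable c) : MeasurableSet (IdealIc c) := by
  obtain ⟨f, hf⟩ := MeasureTheory.exists_measurableEmbedding_real (ℕ → Bool)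
  rw [ideal_eq hf.injective]
  exact MeasurableSet.iUnion fun k =>
    (P_meas hc hf.measurable k).image_of_measurable_injOn measurable_fst (P_injOn hf.injective)

lemma tall_branch {S : Set (List Bool)} {x : ℕ → Bool} (h : {m | seg x m ∈ S}.Infinite) :
    ∃ T, Ic c T ∧ T.Infinite ∧ T ⊆ S := by
  by_cases hn : ∃ n, {m | seg x m ∈ S ∧ c x m = n}.Infinite
  · obtain ⟨n, hn⟩ := hn
    refine ⟨seg x '' {m | seg x m ∈ S ∧ c x m = n}, ?_, hn.image (seg_inj x).injOn, ?_⟩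
    · refine (Ic.gen (c := c) (Or.inr (Or.inl ⟨x, n, rfl⟩))).mono ?_
      rintro _ ⟨m, hm, rfl⟩
      exact ⟨m, hm.2, rfl⟩
    · rintro _ ⟨m, hm, rfl⟩
      exact hm.1
  · push Not at hn
    obtain ⟨s', hs', hb⟩ := (surjOn_image (c x) {m | seg x m ∈ S}).exists_bijOn_subset
    have hinf : (c x '' {m | seg x m ∈ S}).Infinite := by
      intro hfin
      apply h
      refine (hfin.biUnion fun n _ => hn n).subset ?_
      intro m hm
      simp only [mem_iUnion]
      exact ⟨c x m, ⟨m, hm, rfl⟩, hm, rfl⟩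
    have hs'inf : s'.Infinite := by
      intro hfin
      rw [← hb.image_eq] at hinf
      exact hinf (hfin.image _)
    refine ⟨seg x '' s', Ic.gen (Or.inr (Or.inr ⟨x, ?_, ?_⟩)), hs'inf.image (seg_inj x).injOn, ?_⟩
    · rintro _ ⟨m, -, rfl⟩
      exact ⟨m, rfl⟩
    · rintro n _ ⟨⟨m, hm, rfl⟩, m', hm', he⟩ _ ⟨⟨l, hl, rfl⟩, l', hl', he'⟩
      have := seg_inj x he
      subst this
      have := seg_inj x he'
      subst this
      rw [hb.injOn hm hl (hm'.trans hl'.symm)]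
    · rintro _ ⟨m, hm, rfl⟩
      exact hs' hm

lemma exists_branch_of_chain (h : ℕ → List Bool) (hp : ∀ m n, m < n → h m <+: h n)
    (hi : Function.Injective h) : ∃ x, ∀ n, seg x (h n).length = h n := by
  have hl : StrictMono fun n => (h n).length := by
    intro m n hmn
    refine lt_of_le_of_ne (hp m n hmn).length_le fun he => ?_
    exact hmn.ne (hi ((hp m n hmn).eq_of_length he))
  have hid : ∀ n, n ≤ (h n).length := hl.id_le
  refine ⟨fun i => (h (i + 1)).getD i false, fun n => ?_⟩
  rw [seg_eq_iff]
  refine ⟨rfl, fun i hin => ?_⟩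
  have h2 : i < (h (i + 1)).length := hid (i + 1)
  have key : ∀ a b : List Bool, a <+: b → i < a.length → a.getD i false = b.getD i false := by
    rintro a _ ⟨d, rfl⟩ ha
    simp [List.getElem?_append_left, ha]
  rcases lt_trichotomy n (i + 1) with hlt | heq | hgt
  · exact key _ _ (hp _ _ hlt) hin
  · rw [heq]
  · exact (key _ _ (hp _ _ hgt) h2).symm

lemma tall {S : Set (List Bool)} (hS : S.Infinite) : ∃ T, Ic c T ∧ T.Infinite ∧ T ⊆ S := by
  let f : ℕ ↪ S := hS.natEmbedding
  let F : ℕ → List Bool := fun n => f n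
  have hF : Function.Injective F := Subtype.val_injective.comp f.injective
  obtain ⟨g, hg | hg⟩ := exists_increasing_or_nonincreasing_subseq
    (fun a b : List Bool => a <+: b) F
  · have hi : Function.Injective (F ∘ g) := hF.comp g.injective
    obtain ⟨x, hx⟩ := exists_branch_of_chain (F ∘ g) hg hi
    refine tall_branch (x := x) ?_
    refine (infinite_range_of_injective (f := fun n => ((F ∘ g) n).length) ?_).mono ?_
    · intro m n hmn
      apply hi
      have h1 := hx m
      have h2 := hx n
      dsimp only at hmn
      rw [← h1, ← h2, hmn]
    · rintro _ ⟨n, rfl⟩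
      simp only [mem_ofPred_eq]
      rw [hx]
      exact (f (g n)).2
  · let G : ℕ → List Bool := fun n => F (g n)
    have hG : Function.Injective G := hF.comp g.injective
    haveI : IsTrans (List Bool) (fun a b => b <+: a) := ⟨fun a b d h h' => h'.trans h⟩
    obtain ⟨g', hg' | hg'⟩ := exists_increasing_or_nonincreasing_subseq
      (fun a b : List Bool => b <+: a) G
    · exfalso
      have hanti : StrictAnti fun n => (G (g' n)).length := by
        intro m n hmn
        refine lt_of_le_of_ne (hg' m n hmn).length_le fun he => ?_
        have := hG ((hg' m n hmn).eq_of_length he)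
        exact hmn.ne' (g'.injective this)
      exact not_strictAnti_of_wellFoundedLT _ hanti
    · refine ⟨range (G ∘ g'), Ic.gen (Or.inl ?_),
        infinite_range_of_injective (hG.comp g'.injective), ?_⟩
      · have key : ∀ m n, m < n → ¬ G (g' m) <+: G (g' n) ∧ ¬ G (g' n) <+: G (g' m) :=
          fun m n hmn => ⟨hg _ _ (g'.strictMono hmn), hg' m n hmn⟩
        rintro _ ⟨m, rfl⟩ _ ⟨n, rfl⟩ hne
        rcases lt_trichotomy m n with h | h | h
        · exact key m n h
        · exact absurd (by rw [h]) hne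
        · exact (key n m h).symm
      · rintro _ ⟨n, rfl⟩
        exact (f (g (g' n))).2

end IcProof

/-- For every Borel function `c : 2^ℕ → ℕ^ℕ`, the ideal `I_c` is a tall Borel ideal
on `2^{<ω}`. -/
theorem idealIc_tall_borel (c : (ℕ → Bool) → (ℕ → ℕ)) (hc : Measurable c) :
    IsIdealB (IdealIc c) ∧ IsTallB (IdealIc c) ∧ MeasurableSet (IdealIc c) := by
  classical
  refine ⟨⟨?_, ?_⟩, ?_, IcProof.borel hc⟩
  · intro x hx y hy
    rw [IcProof.mem_iff] at hx ⊢
    exact hx.mono hy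
  · intro x hx y hy
    rw [IcProof.mem_iff] at hx hy ⊢
    refine (hx.union hy).mono fun a ha => ?_
    simpa [suppB, unionB] using ha
  · intro x hx
    obtain ⟨T, hT, hinf, hsub⟩ := IcProof.tall (c := c) hx
    have e : suppB (fun s => decide (s ∈ T)) = T := by
      ext s
      simp [suppB]
    refine ⟨fun s => decide (s ∈ T), ?_, ?_, ?_⟩
    · rw [IcProof.mem_iff, e]
      exact hT
    · unfold InfiniteB
      rw [e]
      exact hinf
    · intro a ha
      exact hsub (by simpa using ha)
end

section
/- Let I be a tall Borel ideal on ℕ that has a Borel selector. Then there is a Borel function c : 2^ℕ → ℕ^ℕ such that I ≰_K I_c. -/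
theorem measurableSet_eval {β : Type} [MeasurableSpace β] [MeasurableSingletonClass β]
    (m : ℕ) (n : β) : MeasurableSet {g : ℕ → β | g m = n} := by
  have h : Measurable (fun g : ℕ → β => g m) := measurable_pi_apply m
  exact h (measurableSet_singleton n)

open Classical in
/-- Range of `g`, coded as a characteristic function. -/
noncomputable def rangeB (g : ℕ → ℕ) : ℕ → Bool := fun n => decide (∃ m, g m = n)

open Classical in
/-- The element of the ideal picked for `g`. -/
noncomputable def pickB (S : (ℕ → Bool) → (ℕ → Bool)) (g : ℕ → ℕ) : ℕ → Bool :=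
  if InfiniteB (rangeB g) then S (rangeB g) else rangeB g

/-- Colouring such that every colour occurs infinitely often on an infinite set `b`. -/
def colB (b : ℕ → Bool) (m : ℕ) : ℕ := (Nat.unpair (Nat.count (fun k => b k = true) m)).1

theorem measurable_colB : Measurable colB := by
  have h : ∀ m, Measurable (fun b : ℕ → Bool => Nat.count (fun k => b k = true) m) := by
    intro m
    induction m with
    | zero => simp
    | succ m ih =>
      simp only [Nat.count_succ]
      refine ih.add (Measurable.ite ?_ measurable_const measurable_const)
      exact measurableSet_eval m true
  refine measurable_pi_lambda _ fun m => ?_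
  exact (measurable_of_countable (fun n : ℕ => (Nat.unpair n).1)).comp (h m)

theorem measurableSet_infiniteB : MeasurableSet {x : ℕ → Bool | InfiniteB x} := by
  have : {x : ℕ → Bool | InfiniteB x} = ⋂ n : ℕ, ⋃ m : ℕ, ⋃ _ : n < m, {x | x m = true} := by
    ext x
    simp only [InfiniteB, suppB, Set.mem_ofPred_eq, Set.mem_iInter, Set.mem_iUnion,
      Set.infinite_iff_exists_gt]
    constructor
    · intro h n
      obtain ⟨m, h1, h2⟩ := h n
      exact ⟨m, h2, h1⟩
    · intro h n
      obtain ⟨m, h1, h2⟩ := h n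
      exact ⟨m, h2, h1⟩
  rw [this]
  refine MeasurableSet.iInter fun n => MeasurableSet.iUnion fun m => MeasurableSet.iUnion fun _ => ?_
  exact measurableSet_eval m true

theorem measurable_bool_of {α : Type} [MeasurableSpace α] (f : α → Bool)
    (h : MeasurableSet {a | f a = true}) : Measurable f :=
  measurable_to_bool h

theorem measurable_rangeB : Measurable rangeB := by
  refine measurable_pi_lambda _ fun n => measurable_to_bool ?_
  have : (fun g => rangeB g n) ⁻¹' {true} = ⋃ m : ℕ, {g : ℕ → ℕ | g m = n} := by
    ext g; simp [rangeB]
  rw [this]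
  exact MeasurableSet.iUnion fun m => measurableSet_eval m n

theorem measurable_pickB {S : (ℕ → Bool) → (ℕ → Bool)} (hS : Measurable S) :
    Measurable (pickB S) := by
  unfold pickB
  exact Measurable.ite (measurable_rangeB measurableSet_infiniteB)
    (hS.comp measurable_rangeB) measurable_rangeB

/-- The preimage under `g` of the picked set. -/
noncomputable def preB (S : (ℕ → Bool) → (ℕ → Bool)) (g : ℕ → ℕ) : ℕ → Bool :=
  fun m => pickB S g (g m)

theorem measurable_preB {S : (ℕ → Bool) → (ℕ → Bool)} (hS : Measurable S) :
    Measurable (preB S) := by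
  refine measurable_pi_lambda _ fun m => measurable_to_bool ?_
  have : (fun g => preB S g m) ⁻¹' {true} =
      ⋃ n : ℕ, ({g : ℕ → ℕ | g m = n} ∩ {g | pickB S g n = true}) := by
    ext g; simp [preB]
  rw [this]
  refine MeasurableSet.iUnion fun n => MeasurableSet.inter ?_ ?_
  · exact measurableSet_eval m n
  · exact ((measurable_pi_apply n).comp (measurable_pickB hS)) (measurableSet_singleton true)

theorem infiniteB_preB {S : (ℕ → Bool) → (ℕ → Bool)}
    (hsel : ∀ x : ℕ → Bool, InfiniteB x → InfiniteB (S x) ∧ subB (S x) x) (g : ℕ → ℕ) :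
    InfiniteB (preB S g) := by
  by_cases h : InfiniteB (rangeB g)
  · obtain ⟨h1, h2⟩ := hsel _ h
    intro hf
    refine h1 ((hf.image g).subset ?_)
    intro n hn
    have := h2 n hn
    simp only [rangeB, decide_eq_true_eq] at this
    obtain ⟨m, rfl⟩ := this
    refine ⟨m, ?_, rfl⟩
    simpa [suppB, preB, pickB, h] using hn
  · have : suppB (preB S g) = Set.univ := by
      ext m
      simp [suppB, preB, pickB, h, rangeB]
    unfold InfiniteB
    rw [this]
    exact Set.infinite_univ

theorem measurable_branch (e : (ℕ → Bool) → (List Bool → ℕ)) (he : Measurable e) :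
    Measurable (fun (x : ℕ → Bool) (m : ℕ) => e x (seg x m)) := by
  refine measurable_pi_lambda _ fun m => measurable_to_countable' fun n => ?_
  have : (fun x => e x (seg x m)) ⁻¹' {n} =
      ⋃ s : List Bool, ({x | seg x m = s} ∩ {x | e x s = n}) := by
    ext x; simp
  rw [this]
  refine MeasurableSet.iUnion fun s => MeasurableSet.inter ?_ ?_
  · have h1 : Measurable (fun (x : ℕ → Bool) (i : Fin m) => x i) :=
      measurable_pi_lambda _ fun i => measurable_pi_apply _
    exact h1 (Set.to_countable {v : Fin m → Bool | List.ofFn v = s}).measurableSet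
  · exact ((measurable_pi_apply s).comp he) (measurableSet_singleton n)

theorem colB_infinite {b : ℕ → Bool} (hb : InfiniteB b) (n : ℕ) :
    {m | b m = true ∧ colB b m = n}.Infinite := by
  have hb' : (Set.ofPred fun k => b k = true).Infinite := hb
  refine Set.infinite_of_injective_forall_mem
    (f := fun j => Nat.nth (fun k => b k = true) (Nat.pair n j)) ?_ ?_
  · intro i j hij
    have := Nat.nth_injective hb' hij
    simpa using this
  · intro j
    refine ⟨Nat.nth_mem_of_infinite hb' _, ?_⟩
    simp [colB, Nat.count_nth_of_infinite hb']

theorem seg_length (x : ℕ → Bool) (m : ℕ) : (seg x m).length = m := by simp [seg]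

theorem seg_prefix (x : ℕ → Bool) {m k : ℕ} (h : m ≤ k) : seg x m <+: seg x k := by
  rw [List.prefix_iff_eq_take]
  apply List.ext_getElem
  · simp [seg, h]
  · intro i h1 h2
    simp [seg]

theorem seg_common_finite {x y : ℕ → Bool} (h : x ≠ y) :
    {m | ∃ k, seg x m = seg y k}.Finite := by
  obtain ⟨i, hi⟩ := Function.ne_iff.mp h
  refine (Set.finite_Iic i).subset ?_
  rintro m ⟨k, hk⟩
  by_contra hm
  simp only [Set.mem_Iic, not_le] at hm
  have hl := congrArg List.length hk
  simp only [seg_length] at hl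
  subst hl
  have := List.ofFn_injective hk
  exact hi (congrFun this ⟨i, hm⟩)

theorem genIc_branch {c : (ℕ → Bool) → (ℕ → ℕ)} {G : Set (List Bool)} (hG : GenIc c G)
    (x : ℕ → Bool) :
    ∃ N : Set ℕ, N.Finite ∧ ∀ n ∉ N, {m | c x m = n ∧ seg x m ∈ G}.Finite := by
  rcases hG with hG | ⟨y, n, rfl⟩ | ⟨y, h1, h2⟩
  · refine ⟨∅, Set.finite_empty, fun n _ => Set.Subsingleton.finite ?_⟩
    rintro a ⟨-, ha⟩ b ⟨-, hb⟩
    by_contra hab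
    have hne : seg x a ≠ seg x b := fun h => hab (by simpa [seg_length] using congrArg List.length h)
    have := hG _ ha _ hb hne
    rcases le_total a b with h | h
    · exact this.1 (seg_prefix x h)
    · exact this.2 (seg_prefix x h)
  · by_cases hxy : x = y
    · subst hxy
      refine ⟨{n}, Set.finite_singleton n, fun k hk => ?_⟩
      convert Set.finite_empty
      ext m
      simp only [Set.mem_ofPred_eq, Set.mem_empty_iff_false, iff_false]
      rintro ⟨h, m', h', hs⟩
      have : m = m' := by simpa [seg_length] using congrArg List.length hs
      subst this
      exact hk (by simp [← h, h'])
    · refine ⟨∅, Set.finite_empty, fun k _ => (seg_common_finite hxy).subset ?_⟩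
      rintro m ⟨-, m', -, hs⟩
      exact ⟨m', hs⟩
  · by_cases hxy : x = y
    · subst hxy
      refine ⟨∅, Set.finite_empty, fun n _ => Set.Subsingleton.finite ?_⟩
      rintro a ⟨ha, ha'⟩ b ⟨hb, hb'⟩
      have := h2 n ⟨ha', a, ha, rfl⟩ ⟨hb', b, hb, rfl⟩
      simpa [seg_length] using congrArg List.length this
    · refine ⟨∅, Set.finite_empty, fun k _ => (seg_common_finite hxy).subset ?_⟩
      rintro m ⟨-, hm⟩
      exact h1 _ hm

/-- If `I` is a tall Borel ideal on `ℕ` (containing all finite sets) admitting a Borel selector,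
then there is a Borel function `c : 2^ℕ → ℕ^ℕ` such that `I ≰_K I_c`. -/
theorem selector_gives_not_katetov_below (I : Set (ℕ → Bool)) (hI : IsIdealB I)
    (hfin : ContainsFinB I) (htall : IsTallB I) (hB : MeasurableSet I)
    (S : (ℕ → Bool) → (ℕ → Bool)) (hS : Measurable S)
    (hsel : ∀ x : ℕ → Bool, InfiniteB x → S x ∈ I ∧ InfiniteB (S x) ∧ subB (S x) x) :
    ∃ c : (ℕ → Bool) → (ℕ → ℕ), Measurable c ∧ ¬ KatLE I (IdealIc c) := by
  have hu1 : Uncountable (ℕ → Bool) := by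
    rw [← not_countable_iff]
    intro hc
    obtain ⟨u, hu⟩ := exists_surjective_nat (ℕ → Bool)
    obtain ⟨n, hn⟩ := hu (fun k => !u k k)
    have := congrFun hn n
    simp at this
  have hu2 : Uncountable (List Bool → ℕ) := by
    have hinj : Function.Injective
        (fun (x : ℕ → Bool) (s : List Bool) => (x s.length).toNat) := by
      intro x y h
      funext n
      have := congrFun h (List.replicate n true)
      simp only [List.length_replicate] at this
      revert this
      cases x n <;> cases y n <;> simp
    exact hinj.uncountable
  let e : (ℕ → Bool) ≃ᵐ (List Bool → ℕ) :=
    PolishSpace.measurableEquivOfNotCountable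
      (not_countable_iff.mpr hu1) (not_countable_iff.mpr hu2)
  let g : (ℕ → Bool) → ℕ → ℕ := fun x m => e x (seg x m)
  have hg : Measurable g := measurable_branch e e.measurable
  refine ⟨fun x => colB (preB S (g x)),
    measurable_colB.comp ((measurable_preB hS).comp hg), ?_⟩
  rintro ⟨f, hf⟩
  obtain ⟨x, hx⟩ := e.surjective f
  have hA : pickB S (g x) ∈ I := by
    unfold pickB
    split_ifs with h
    · exact (hsel _ h).1
    · exact hfin _ (Set.not_infinite.mp h)
  have hinf := infiniteB_preB (fun x h => (hsel x h).2) (g x)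
  obtain ⟨k, F, hF, hcov⟩ := hf _ hA
  choose N hN hN' using fun i => genIc_branch (hF i) x
  obtain ⟨n, hn⟩ := (Set.finite_iUnion hN).exists_notMem
  simp only [Set.mem_iUnion, not_exists] at hn
  refine colB_infinite hinf n ((Set.finite_iUnion fun i => hN' i n (hn i)).subset ?_)
  rintro m ⟨h1, h2⟩
  have h3 : pickB S (g x) (f (seg x m)) = true := by
    rw [← hx]; exact h1
  obtain ⟨i, hi⟩ := hcov _ h3
  exact Set.mem_iUnion.mpr ⟨i, h2, hi⟩
end

section
/- For every compact K ⊆ 2^ℕ there is a Borel function φ : I_K → K^{<ω} (finite tuples of elements of K) such that for every x ∈ I_K, x ⊆ y₀ ∪ … ∪ y_k where φ(x) = (y₀,…,y_k). -/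
open Classical in
/-- Leftmost-branch approximations. -/
noncomputable def leftB (C : Set ((ℕ → Bool) × (ℕ → Bool))) : ℕ → (ℕ → Bool) → (ℕ → Bool)
  | 0, _ => fun _ => false
  | k + 1, x => Function.update (leftB C k x) k
      (if ∃ z, (x, z) ∈ C ∧ (∀ j < k, z j = leftB C k x j) ∧ z k = false then false else true)

theorem closed_aux_s15 (C : Set ((ℕ → Bool) × (ℕ → Bool))) (hC : IsClosed C) (k : ℕ) :
    IsClosed {p : (ℕ → Bool) × (ℕ → Bool) |
      ∃ z, (p.1, z) ∈ C ∧ (∀ j < k, z j = p.2 j) ∧ z k = false} := by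
  have h : IsClosed {q : ((ℕ → Bool) × (ℕ → Bool)) × (ℕ → Bool) |
      (q.1.1, q.2) ∈ C ∧ (∀ j < k, q.2 j = q.1.2 j) ∧ q.2 k = false} := by
    refine IsClosed.and (hC.preimage (by fun_prop)) (IsClosed.and ?_ ?_)
    · simp only [Set.setOf_forall]
      refine isClosed_iInter fun j => isClosed_iInter fun _ => ?_
      exact isClosed_eq (by fun_prop) (by fun_prop)
    · exact isClosed_eq (by fun_prop) (by fun_prop)
  have := isClosedMap_fst_of_compactSpace _ h
  convert this using 1
  ext p
  simp

theorem leftB_meas (C : Set ((ℕ → Bool) × (ℕ → Bool))) (hC : IsClosed C) (k : ℕ) :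
    Measurable (leftB C k) := by
  induction k with
  | zero => exact measurable_const
  | succ k ih =>
    rw [measurable_pi_iff]
    intro a
    by_cases h : a = k
    · subst h
      simp only [leftB, Function.update_self]
      refine Measurable.ite ?_ measurable_const measurable_const
      exact (measurable_id.prodMk ih) (closed_aux_s15 C hC a).measurableSet
    · simp only [leftB, Function.update_of_ne h]
      exact (measurable_pi_apply a).comp ih

theorem leftB_stable (C : Set ((ℕ → Bool) × (ℕ → Bool))) (x : ℕ → Bool) (j k : ℕ) (h : j < k) :
    leftB C k x j = leftB C (j + 1) x j := by
  induction k with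
  | zero => omega
  | succ k ih =>
    rcases Nat.lt_succ_iff_lt_or_eq.1 h with h' | rfl
    · rw [← ih h']
      simp only [leftB]
      rw [Function.update_of_ne (by omega)]
    · rfl

theorem leftB_ex (C : Set ((ℕ → Bool) × (ℕ → Bool))) (x : ℕ → Bool) (hx : ∃ z, (x, z) ∈ C)
    (k : ℕ) : ∃ z, (x, z) ∈ C ∧ ∀ j < k, z j = leftB C k x j := by
  induction k with
  | zero => simpa using hx
  | succ k ih =>
    by_cases h : ∃ z, (x, z) ∈ C ∧ (∀ j < k, z j = leftB C k x j) ∧ z k = false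
    · have h0 := h
      obtain ⟨z, h1, h2, h3⟩ := h
      refine ⟨z, h1, fun j hj => ?_⟩
      simp only [leftB]
      rw [if_pos h0]
      rcases Nat.lt_succ_iff_lt_or_eq.1 hj with h' | rfl
      · rw [Function.update_of_ne (by omega), h2 j h']
      · simp [h3]
    · obtain ⟨z, h1, h2⟩ := ih
      refine ⟨z, h1, fun j hj => ?_⟩
      simp only [leftB]
      rw [if_neg h]
      rcases Nat.lt_succ_iff_lt_or_eq.1 hj with h' | rfl
      · rw [Function.update_of_ne (by omega), h2 j h']
      · rw [Function.update_self]
        by_contra h3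
        exact h ⟨z, h1, h2, by simpa using h3⟩

theorem selectB (C : Set ((ℕ → Bool) × (ℕ → Bool))) (hC : IsClosed C) :
    ∃ f : (ℕ → Bool) → (ℕ → Bool), Measurable f ∧ ∀ x, (∃ z, (x, z) ∈ C) → (x, f x) ∈ C := by
  refine ⟨fun x k => leftB C (k + 1) x k, ?_, fun x hx => ?_⟩
  · exact measurable_pi_iff.2 fun k => (measurable_pi_apply k).comp (leftB_meas C hC (k + 1))
  · choose z hz1 hz2 using leftB_ex C x hx
    refine hC.mem_of_tendsto (f := fun k => (x, z k)) (b := Filter.atTop) ?_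
      (Filter.Eventually.of_forall hz1)
    refine tendsto_const_nhds.prodMk_nhds (tendsto_pi_nhds.2 fun j => ?_)
    refine tendsto_const_nhds.congr' ?_
    filter_upwards [Filter.eventually_gt_atTop j] with k hk
    rw [hz2 k j hk, leftB_stable C x j k hk]

/-- Codes of covers of `x` by `n+1` members of `K`. -/
def coverB (K : Set (ℕ → Bool)) (n : ℕ) : Set ((ℕ → Bool) × (ℕ → Bool)) :=
  {p | (∀ i < n + 1, (fun m => p.2 (Nat.pair i m)) ∈ K) ∧
    ∀ m, p.1 m = true → ∃ i < n + 1, p.2 (Nat.pair i m) = true}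

theorem coverB_closed (K : Set (ℕ → Bool)) (hK : IsClosed K) (n : ℕ) : IsClosed (coverB K n) := by
  refine IsClosed.and ?_ ?_
  · simp only [Set.setOf_forall]
    refine isClosed_iInter fun i => isClosed_iInter fun _ => hK.preimage (by fun_prop)
  · simp only [Set.setOf_forall]
    refine isClosed_iInter fun m => ?_
    have h1 : IsClosed {p : (ℕ → Bool) × (ℕ → Bool) | p.1 m = false} :=
      isClosed_eq (by fun_prop) (by fun_prop)
    have h2 : IsClosed (⋃ i ∈ Set.Iio (n + 1),
        {p : (ℕ → Bool) × (ℕ → Bool) | p.2 (Nat.pair i m) = true}) :=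
      (Set.finite_Iio _).isClosed_biUnion fun i _ => isClosed_eq (by fun_prop) (by fun_prop)
    convert h1.union h2 using 1
    ext p
    simp only [Set.mem_setOf_eq, Set.mem_union, Set.mem_iUnion, Set.mem_Iio, exists_prop]
    cases p.1 m <;> simp

theorem coverB_ex (K : Set (ℕ → Bool)) (x : ℕ → Bool) (hx : x ∈ IdealOfCode K) :
    ∃ n, ∃ z, (x, z) ∈ coverB K n := by
  obtain ⟨n, y, ⟨f, hf, hy⟩, hxy⟩ := Set.mem_iUnion.1 hx
  refine ⟨n, fun a => if h : a.unpair.1 < n + 1 then f ⟨_, h⟩ a.unpair.2 else false, ?_, ?_⟩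
  · intro i hi
    simpa [hi] using hf ⟨i, hi⟩
  · intro m hm
    obtain ⟨i, hi⟩ := (hy m).1 (hxy m hm)
    exact ⟨i, i.2, by simpa using ⟨Nat.lt_succ_iff.1 i.2, hi⟩⟩

/-- For every compact `K ⊆ 2^ℕ` there is a Borel map `φ` on `I_K` assigning to each `x ∈ I_K` a
finite tuple of elements of `K` whose union covers `x` (the tuple is coded by its length `l` and
entries `φ · 0, …, φ · (l-1)`). -/
theorem borel_cover_by_tuples (K : Set (ℕ → Bool)) (hK : IsCompact K) :
    ∃ (l : ↥(IdealOfCode K) → ℕ) (φ : ↥(IdealOfCode K) → ℕ → (ℕ → Bool)),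
      Measurable l ∧ Measurable φ ∧
      ∀ x : ↥(IdealOfCode K),
        (∀ i < l x, φ x i ∈ K) ∧
        ∀ m : ℕ, (x : ℕ → Bool) m = true → ∃ i < l x, φ x i m = true := by
  classical
  choose f hf1 hf2 using fun n => selectB (coverB K n) (coverB_closed K hK.isClosed n)
  have hex : ∀ x : ↥(IdealOfCode K), ∃ n, (x.1, f n x.1) ∈ coverB K n := fun x =>
    (coverB_ex K x.1 x.2).imp fun n h => hf2 n x.1 h
  have hms : ∀ n, MeasurableSet {x : ↥(IdealOfCode K) | (x.1, f n x.1) ∈ coverB K n} := fun n =>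
    (measurable_subtype_coe.prodMk ((hf1 n).comp measurable_subtype_coe))
      (coverB_closed K hK.isClosed n).measurableSet
  have hN : Measurable fun x : ↥(IdealOfCode K) => Nat.find (hex x) := measurable_find hex hms
  have hF : Measurable fun x : ↥(IdealOfCode K) => f (Nat.find (hex x)) x.1 := by
    have h : Measurable fun q : ↥(IdealOfCode K) × ℕ => f q.2 q.1.1 :=
      measurable_from_prod_countable_left fun n => (hf1 n).comp measurable_subtype_coe
    exact h.comp (measurable_id.prodMk hN)
  refine ⟨fun x => Nat.find (hex x) + 1,
    fun x i m => f (Nat.find (hex x)) x.1 (Nat.pair i m), ?_, ?_, fun x => ?_⟩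
  · exact (measurable_of_countable (fun n : ℕ => n + 1)).comp hN
  · exact measurable_pi_iff.2 fun i => measurable_pi_iff.2 fun m =>
      (measurable_pi_apply (Nat.pair i m)).comp hF
  · exact Nat.find_spec (hex x)
end
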